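/- arXiv:2108.01024 — 2 statements merged into one kernel-verified Lean document; each statement's English description precedes it below -/
import Mathlib

section
/- For every prime power q, C_{7,4}(q) = q^21 − 28q^20 + 322q^19 − 1925q^18 + 5571q^17 + 839q^16 − 18320q^15 − 2695q^14 + 7455q^13 + 19111q^12 + 17074q^11 − 9540q^10 − 13027q^9 − 19922q^8 + 924q^7 + 14160q^6 + (595q^3 − 8260q^2 + 20160q − 8820)·A_6(4,q) + 210·A_{h_1}(4,q) + 180·A_{h_2}(4,q) − 2520·A_{h_3}(4,q) + 3780·A_{h_5}(4,q). -/
open scoped LinearAlgebra.Projectivization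

/-- Three points of `ℙ³(F_q)` are collinear if vector representatives of them span a
subspace of `F_q^4` of dimension at most 2. -/
def Collinear3 (F : Type) [Field F] (x y z : ℙ F (Fin 4 → F)) : Prop :=
  Module.finrank F ↥(x.submodule ⊔ y.submodule ⊔ z.submodule) ≤ 2

/-- Four points of `ℙ³(F_q)` are coplanar if vector representatives of them span a
subspace of `F_q^4` of dimension at most 3. -/
def Coplanar4 (F : Type) [Field F] (x y z w : ℙ F (Fin 4 → F)) : Prop :=
  Module.finrank F ↥(x.submodule ⊔ y.submodule ⊔ z.submodule ⊔ w.submodule) ≤ 3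

/-- A strong realization in `ℙ³(F_q)` of a configuration on points `{0,…,6}` given by a
list of planes and a list of lines: an injective map `σ` such that a triple of image points
is collinear iff its index set is contained in a listed line, and four image points are
coplanar iff their index set is contained in a listed plane. -/
def IsConfigReal (F : Type) [Field F] (planes lines : Finset (Finset (Fin 7)))
    (σ : Fin 7 → ℙ F (Fin 4 → F)) : Prop :=
  Function.Injective σ ∧
    (∀ a b c : Fin 7, a ≠ b → a ≠ c → b ≠ c →
      (Collinear3 F (σ a) (σ b) (σ c) ↔ ∃ l ∈ lines, ({a, b, c} : Finset (Fin 7)) ⊆ l)) ∧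
    (∀ a b c d : Fin 7, a ≠ b → a ≠ c → a ≠ d → b ≠ c → b ≠ d → c ≠ d →
      (Coplanar4 F (σ a) (σ b) (σ c) (σ d) ↔
        ∃ h ∈ planes, ({a, b, c, d} : Finset (Fin 7)) ⊆ h))

/-- A strong realization in `ℙ³(F_q)` of the hyperfiguration on 6 points: an injective
`σ : {0,…,5} → ℙ³(F_q)` such that a triple of image points is collinear iff its index set
is contained in `{0,1,2}` or `{3,4,5}`, and four image points are coplanar iff their index
set is one of the six listed planes. `A_6(4,q)` is the number of such maps. -/
def IsHyp6Real (F : Type) [Field F] (σ : Fin 6 → ℙ F (Fin 4 → F)) : Prop :=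
  Function.Injective σ ∧
    (∀ a b c : Fin 6, a ≠ b → a ≠ c → b ≠ c →
      (Collinear3 F (σ a) (σ b) (σ c) ↔
        ({a, b, c} : Finset (Fin 6)) ⊆ {0, 1, 2} ∨
          ({a, b, c} : Finset (Fin 6)) ⊆ {3, 4, 5})) ∧
    (∀ a b c d : Fin 6, a ≠ b → a ≠ c → a ≠ d → b ≠ c → b ≠ d → c ≠ d →
      (Coplanar4 F (σ a) (σ b) (σ c) (σ d) ↔
        ({a, b, c, d} : Finset (Fin 6)) ∈
          ({{0, 1, 2, 3}, {0, 1, 2, 4}, {0, 1, 2, 5}, {0, 3, 4, 5}, {1, 3, 4, 5},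
            {2, 3, 4, 5}} : Finset (Finset (Fin 6)))))

/-- An ordered `n`-arc in `ℙ³(F_q)`. -/
def IsArc4 (F : Type) [Field F] {n : ℕ} (σ : Fin n → ℙ F (Fin 4 → F)) : Prop :=
  Function.Injective σ ∧
    ∀ a b c d : Fin n, a ≠ b → a ≠ c → a ≠ d → b ≠ c → b ≠ d → c ≠ d →
      ¬ Coplanar4 F (σ a) (σ b) (σ c) (σ d)

/-- Planes of the hyperfiguration `h₁`. -/
def h1planes : Finset (Finset (Fin 7)) :=
  {{0, 1, 2, 3}, {0, 1, 4, 5}, {0, 2, 4, 6}, {1, 2, 5, 6}, {1, 3, 4, 6}, {2, 3, 4, 5}}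

/-- Planes of the hyperfiguration `h₂` (the complement of the Fano plane). -/
def h2planes : Finset (Finset (Fin 7)) :=
  {{0, 1, 2, 3}, {0, 1, 4, 5}, {0, 2, 4, 6}, {0, 3, 5, 6}, {1, 2, 5, 6}, {1, 3, 4, 6},
    {2, 3, 4, 5}}

/-- Planes of the hyperfiguration `h₃`. -/
def h3planes : Finset (Finset (Fin 7)) :=
  {{0, 1, 2, 3}, {0, 1, 2, 4}, {0, 1, 2, 5}, {0, 1, 2, 6}, {0, 3, 4, 5}, {1, 3, 4, 6},
    {2, 3, 5, 6}}

/-- Lines of the hyperfiguration `h₃`. -/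
def h3lines : Finset (Finset (Fin 7)) := {{0, 1, 2}}

/-- Planes of the hyperfiguration `h₅`. -/
def h5planes : Finset (Finset (Fin 7)) :=
  {{0, 1, 2, 3, 4}, {0, 1, 2, 3, 5}, {0, 1, 2, 3, 6}, {0, 4, 5, 6}, {1, 4, 5, 6},
    {2, 4, 5, 6}, {3, 4, 5, 6}}

/-- Lines of the hyperfiguration `h₅`. -/
def h5lines : Finset (Finset (Fin 7)) := {{0, 1, 2, 3}, {4, 5, 6}}



/-- Strong realizations by vectors: `n` of the vectors are dependent iff `pl` holds for them. -/
def VStrong {n N : ℕ} (F : Type) [Field F] (pl : Finset (Fin N) → Prop)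
    (v : Fin N → Fin n → F) : Prop :=
  ∀ s : Fin n → Fin N, Function.Injective s →
    ((Matrix.of fun i => v (s i)).det = 0 ↔ pl (Finset.univ.image s))

lemma vstrong_mulGL {n N : ℕ} {F : Type} [Field F] (pl : Finset (Fin N) → Prop)
    (v : Fin N → Fin n → F) (G : Matrix (Fin n) (Fin n) F) (hG : G.det ≠ 0) :
    VStrong F pl (fun j => Matrix.vecMul (v j) G) ↔ VStrong F pl v := by
  unfold VStrong
  refine forall₂_congr fun s _ => ?_
  have : (Matrix.of fun i => Matrix.vecMul (v (s i)) G) = (Matrix.of fun i => v (s i)) * G := by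
    ext i j
    simp [Matrix.mul_apply, Matrix.vecMul, dotProduct]
  rw [this, Matrix.det_mul, mul_eq_zero, or_iff_left hG]

lemma vstrong_card_frame {n N : ℕ} {F : Type} [Field F]
    (pl : Finset (Fin N) → Prop) (s : Fin n → Fin N) (hs : Function.Injective s)
    (hpl : ¬ pl (Finset.univ.image s)) :
    Nat.card {v : Fin N → Fin n → F // VStrong F pl v} =
      Nat.card (Matrix.GeneralLinearGroup (Fin n) F) *
      Nat.card {v : Fin N → Fin n → F // VStrong F pl v ∧ ∀ i, v (s i) = Pi.single i 1} := by
  rw [← Nat.card_prod]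
  have hdet : ∀ v : Fin N → Fin n → F, VStrong F pl v →
      (Matrix.of fun i => v (s i)).det ≠ 0 := fun v hv h => hpl ((hv s hs).1 h)
  have hGdet : ∀ G : Matrix.GeneralLinearGroup (Fin n) F, (G : Matrix (Fin n) (Fin n) F).det ≠ 0 :=
    fun G => (Matrix.isUnits_det_units G).ne_zero
  refine Nat.card_congr ⟨fun v => ⟨.mkOfDetNeZero _ (hdet v.1 v.2),
    ⟨fun j => Matrix.vecMul (v.1 j) (Matrix.of fun i => v.1 (s i))⁻¹, ?_, ?_⟩⟩,
    fun p => ⟨fun j => Matrix.vecMul (p.2.1 j) (p.1 : Matrix (Fin n) (Fin n) F), ?_⟩, ?_, ?_⟩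
  · refine (vstrong_mulGL _ _ _ ?_).2 v.2
    rw [Matrix.det_nonsing_inv]
    simpa using hdet v.1 v.2
  · intro i
    have h1 : (Matrix.of fun i => v.1 (s i)) * (Matrix.of fun i => v.1 (s i))⁻¹ = 1 :=
      Matrix.mul_nonsing_inv _ (isUnit_iff_ne_zero.2 (hdet v.1 v.2))
    ext j
    have := congrFun (congrFun h1 i) j
    rw [Matrix.mul_apply] at this
    simp only [Matrix.vecMul, dotProduct]
    rw [Pi.single_apply]
    rw [Matrix.one_apply] at this
    simpa [eq_comm] using this
  · exact (vstrong_mulGL _ _ _ (hGdet _)).2 p.2.2.1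
  · rintro ⟨v, hv⟩
    apply Subtype.ext
    funext j
    have h1 : (Matrix.of fun i => v (s i))⁻¹ * (Matrix.of fun i => v (s i)) = 1 :=
      Matrix.nonsing_inv_mul _ (isUnit_iff_ne_zero.2 (hdet v hv))
    change Matrix.vecMul (Matrix.vecMul (v j) _) (Matrix.of fun i => v (s i)) = v j
    rw [Matrix.vecMul_vecMul, h1, Matrix.vecMul_one]
  · rintro ⟨G, v, hv, hv2⟩
    have h0 : (Matrix.of fun i => Matrix.vecMul (v (s i)) (G : Matrix (Fin n) (Fin n) F)) = G := by
      ext i j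
      simp [hv2]
    refine Prod.ext (Units.ext h0) (Subtype.ext ?_)
    funext j
    change Matrix.vecMul (Matrix.vecMul (v j) (G : Matrix (Fin n) (Fin n) F))
      (Matrix.of fun i => Matrix.vecMul (v (s i)) (G : Matrix (Fin n) (Fin n) F))⁻¹ = v j
    rw [h0, Matrix.vecMul_vecMul, Matrix.mul_nonsing_inv _ (isUnit_iff_ne_zero.2 (hGdet G)),
      Matrix.vecMul_one]

lemma vstrong_smul {n N : ℕ} {F : Type} [Field F] (pl : Finset (Fin N) → Prop)
    (v : Fin N → Fin n → F) (c : Fin N → Fˣ) :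
    VStrong F pl (fun j => c j • v j) ↔ VStrong F pl v := by
  unfold VStrong
  refine forall₂_congr fun s _ => ?_
  have : (Matrix.of fun i => c (s i) • v (s i)) =
      (Matrix.of fun i j => (c (s i) : F) * (Matrix.of fun i => v (s i)) i j) := by
    ext i j
    simp [Units.smul_def]
  rw [this, Matrix.det_mul_column, mul_eq_zero, or_iff_right]
  exact Finset.prod_ne_zero_iff.2 fun i _ => (c (s i)).ne_zero

lemma vstrong_ne_zero {n N : ℕ} {F : Type} [Field F] {pl : Finset (Fin N) → Prop}
    {v : Fin N → Fin n → F} (h : VStrong F pl v) (s : Fin n → Fin N) (hs : Function.Injective s)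
    (hpl : ¬ pl (Finset.univ.image s)) (i : Fin n) : v (s i) ≠ 0 := by
  intro h0
  refine hpl ((h s hs).1 (Matrix.det_eq_zero_of_row_eq_zero i ?_))
  intro j
  simp [h0]

lemma proj_card {n N : ℕ} {F : Type} [Field F] [Fintype F] (pl : Finset (Fin N) → Prop)
    (hcov : ∀ j, ∃ s : Fin n → Fin N, Function.Injective s ∧ ¬ pl (Finset.univ.image s) ∧
      ∃ i, s i = j) :
    Nat.card {v : Fin N → Fin n → F // VStrong F pl v} =
      Nat.card {σ : Fin N → ℙ F (Fin n → F) // VStrong F pl (fun j => (σ j).rep)} *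
        (Fintype.card F - 1) ^ N := by
  classical
  have hne : ∀ v : Fin N → Fin n → F, VStrong F pl v → ∀ j, v j ≠ 0 := by
    intro v hv j
    obtain ⟨s, hs, hp, i, rfl⟩ := hcov j
    exact vstrong_ne_zero hv s hs hp i
  have hc : (Fintype.card F - 1) ^ N = Nat.card (Fin N → Fˣ) := by
    rw [Nat.card_fun, Nat.card_eq_fintype_card, Nat.card_eq_fintype_card, Fintype.card_units,
      Fintype.card_fin]
  rw [hc, ← Nat.card_prod]
  symm
  refine Nat.card_congr (Equiv.ofBijective (fun p => ⟨fun j => p.2 j • (p.1.1 j).rep,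
    (vstrong_smul pl _ p.2).2 p.1.2⟩) ⟨?_, ?_⟩)
  · rintro ⟨⟨σ, hσ⟩, c⟩ ⟨⟨τ, hτ⟩, d⟩ h
    have h' : ∀ j, c j • (σ j).rep = d j • (τ j).rep := fun j => congrFun (congrArg Subtype.val h) j
    have h1 : σ = τ := by
      funext j
      rw [← (σ j).mk_rep, ← (τ j).mk_rep, Projectivization.mk_eq_mk_iff]
      refine ⟨(c j)⁻¹ * d j, ?_⟩
      rw [mul_smul, ← h' j, inv_smul_smul]
    subst h1
    have h2 : c = d := by
      funext j
      have := h' j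
      have hz := (σ j).rep_nonzero
      rw [Units.smul_def, Units.smul_def] at this
      exact Units.ext (smul_left_injective F hz this)
    subst h2
    rfl
  · rintro ⟨v, hv⟩
    have := fun j => Projectivization.exists_smul_eq_mk_rep F (v j) (hne v hv j)
    choose c hcc using this
    refine ⟨⟨⟨fun j => .mk F (v j) (hne v hv j), ?_⟩, fun j => (c j)⁻¹⟩, ?_⟩
    · simp_rw [← hcc]
      exact (vstrong_smul pl v c).2 hv
    · apply Subtype.ext
      funext j
      simp [← hcc]

lemma vstrong_reindex {n N : ℕ} {F : Type} [Field F] (pl pl' : Finset (Fin N) → Prop)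
    (e : Equiv.Perm (Fin N)) (h : ∀ s, pl' s ↔ pl (s.image e)) :
    Nat.card {v : Fin N → Fin n → F // VStrong F pl v} =
      Nat.card {v : Fin N → Fin n → F // VStrong F pl' v} := by
  refine Nat.card_congr (Equiv.subtypeEquiv (Equiv.arrowCongr e.symm (Equiv.refl _)) fun v => ?_)
  constructor
  · intro hv s hs
    rw [h, Finset.image_image]
    exact hv (e ∘ s) (e.injective.comp hs)
  · intro hv s hs
    have := hv (e.symm ∘ s) (e.symm.injective.comp hs)
    rw [h, Finset.image_image, ← Function.comp_assoc] at this
    simpa using this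

/-- It is enough to test sorted tuples. -/
lemma vstrong_iff_strictMono {n N : ℕ} {F : Type} [Field F] (pl : Finset (Fin N) → Prop)
    (v : Fin N → Fin n → F) :
    VStrong F pl v ↔ ∀ s : Fin n → Fin N, StrictMono s →
      ((Matrix.of fun i => v (s i)).det = 0 ↔ pl (Finset.univ.image s)) := by
  constructor
  · intro h s hs
    exact h s hs.injective
  · intro h s hs
    have hm : StrictMono (s ∘ Tuple.sort s) :=
      (Tuple.monotone_sort s).strictMono_of_injective (hs.comp (Tuple.sort s).injective)
    have := h _ hm
    have e1 : (Matrix.of fun i => v ((s ∘ Tuple.sort s) i)) =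
      (Matrix.of fun i => v (s i)).submatrix (Tuple.sort s) id := by
      ext i j; rfl
    have e2 : Finset.univ.image (s ∘ Tuple.sort s) = Finset.univ.image s := by
      ext x
      simp only [Finset.mem_image, Finset.mem_univ, true_and, Function.comp]
      exact ⟨fun ⟨a, ha⟩ => ⟨_, ha⟩, fun ⟨a, ha⟩ => ⟨(Tuple.sort s).symm a, by simpa using ha⟩⟩
    rw [e1, e2, Matrix.det_permute, mul_eq_zero, or_iff_right] at this
    · exact this
    · rcases Int.units_eq_one_or (Equiv.Perm.sign (Tuple.sort s)) with h | h <;> simp [h]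


lemma coplanar4_iff_det {F : Type} [Field F] (x y z w : ℙ F (Fin 4 → F)) :
    Coplanar4 F x y z w ↔ (Matrix.of ![x.rep, y.rep, z.rep, w.rep]).det = 0 := by
  have hsp : x.submodule ⊔ y.submodule ⊔ z.submodule ⊔ w.submodule =
      Submodule.span F (Set.range ![x.rep, y.rep, z.rep, w.rep]) := by
    simp only [Projectivization.submodule_eq, Matrix.range_cons, Matrix.range_empty,
      Set.union_empty, Submodule.span_union, sup_assoc]
  have h1 : (Matrix.of ![x.rep, y.rep, z.rep, w.rep]).det ≠ 0 ↔
      LinearIndependent F ![x.rep, y.rep, z.rep, w.rep] := by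
    rw [← isUnit_iff_ne_zero, ← Matrix.isUnit_iff_isUnit_det,
      ← Matrix.linearIndependent_rows_iff_isUnit]
    rfl
  have h2 := linearIndependent_iff_card_le_finrank_span (R := F)
    (b := ![x.rep, y.rep, z.rep, w.rep])
  unfold Coplanar4
  rw [hsp, ← not_iff_not, ← ne_eq (Matrix.det _), h1, h2, Fintype.card_fin, Set.finrank]
  omega

lemma collinear3_coplanar4 {F : Type} [Field F] (x y z w : ℙ F (Fin 4 → F))
    (h : Collinear3 F x y z) : Coplanar4 F x y z w := by
  unfold Collinear3 at h
  unfold Coplanar4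
  have := Submodule.finrank_add_le_finrank_add_finrank
    (x.submodule ⊔ y.submodule ⊔ z.submodule) w.submodule
  rw [w.finrank_submodule] at this
  omega

lemma exists_not_coplanar4 {F : Type} [Field F] {x y z a b c d : ℙ F (Fin 4 → F)}
    (h : ¬ Collinear3 F x y z) (hf : ¬ Coplanar4 F a b c d) :
    ¬ Coplanar4 F x y z a ∨ ¬ Coplanar4 F x y z b ∨ ¬ Coplanar4 F x y z c ∨
      ¬ Coplanar4 F x y z d := by
  by_contra hcon
  push Not at hcon
  unfold Collinear3 at h
  have key : ∀ u : ℙ F (Fin 4 → F), Coplanar4 F x y z u →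
      u.submodule ≤ x.submodule ⊔ y.submodule ⊔ z.submodule := by
    intro u hu
    unfold Coplanar4 at hu
    have : x.submodule ⊔ y.submodule ⊔ z.submodule =
        x.submodule ⊔ y.submodule ⊔ z.submodule ⊔ u.submodule :=
      Submodule.eq_of_le_of_finrank_le le_sup_left (by omega)
    rw [this]
    exact le_sup_right
  obtain ⟨h1, h2, h3, h4⟩ := hcon
  have hle : a.submodule ⊔ b.submodule ⊔ c.submodule ⊔ d.submodule ≤
      x.submodule ⊔ y.submodule ⊔ z.submodule :=
    sup_le (sup_le (sup_le (key a h1) (key b h2)) (key c h3)) (key d h4)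
  have h5 := Submodule.finrank_mono hle
  unfold Coplanar4 at hf
  have h6 := Submodule.finrank_add_le_finrank_add_finrank
    (x.submodule ⊔ y.submodule) z.submodule
  have h7 := Submodule.finrank_add_le_finrank_add_finrank
    x.submodule y.submodule
  rw [x.finrank_submodule, y.finrank_submodule] at h7
  rw [z.finrank_submodule] at h6
  omega

lemma coplanar4_of_eq {F : Type} [Field F] (x z w : ℙ F (Fin 4 → F)) :
    Coplanar4 F x x z w := by
  rw [coplanar4_iff_det]
  exact Matrix.det_zero_of_row_eq (i := 0) (j := 1) (by decide) rfl

lemma coplanar4_swap {F : Type} [Field F] (x y z w : ℙ F (Fin 4 → F)) :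
    Coplanar4 F x y z w ↔ Coplanar4 F z y x w := by
  unfold Coplanar4
  rw [sup_comm x.submodule, sup_assoc y.submodule, sup_comm x.submodule, ← sup_assoc,
    sup_comm y.submodule]

lemma inj4 {N : ℕ} {a b c d : Fin N} (h1 : a ≠ b) (h2 : a ≠ c) (h3 : a ≠ d) (h4 : b ≠ c)
    (h5 : b ≠ d) (h6 : c ≠ d) : Function.Injective ![a, b, c, d] := by
  intro i j h
  fin_cases i <;> fin_cases j <;> simp_all

lemma image4 {N : ℕ} (a b c d : Fin N) :
    Finset.univ.image ![a, b, c, d] = {a, b, c, d} := by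
  ext x
  simp [Fin.exists_fin_succ, eq_comm]

lemma vstrong4_iff {N : ℕ} {F : Type} [Field F] (pl : Finset (Fin N) → Prop)
    (σ : Fin N → ℙ F (Fin 4 → F)) :
    VStrong F pl (fun j => (σ j).rep) ↔
      ∀ a b c d : Fin N, a ≠ b → a ≠ c → a ≠ d → b ≠ c → b ≠ d → c ≠ d →
        (Coplanar4 F (σ a) (σ b) (σ c) (σ d) ↔ pl {a, b, c, d}) := by
  have hm : ∀ a b c d : Fin N, (Matrix.of fun i => (σ (![a, b, c, d] i)).rep) =
      Matrix.of ![(σ a).rep, (σ b).rep, (σ c).rep, (σ d).rep] := by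
    intro a b c d
    ext i j
    fin_cases i <;> rfl
  constructor
  · intro h a b c d h1 h2 h3 h4 h5 h6
    have := h ![a, b, c, d] (inj4 h1 h2 h3 h4 h5 h6)
    rw [coplanar4_iff_det, ← image4 a b c d, ← hm]
    exact this
  · intro h s hs
    have e : s = ![s 0, s 1, s 2, s 3] := by
      funext i
      fin_cases i <;> rfl
    have := h (s 0) (s 1) (s 2) (s 3) (hs.ne (by decide)) (hs.ne (by decide))
      (hs.ne (by decide)) (hs.ne (by decide)) (hs.ne (by decide)) (hs.ne (by decide))
    rw [coplanar4_iff_det, ← image4, ← hm, ← e] at this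
    exact this

lemma real_iff_vstrong {N : ℕ} {F : Type} [Field F] (pl ln : Finset (Fin N) → Prop)
    (H0 : ∃ a b c d : Fin N, a ≠ b ∧ a ≠ c ∧ a ≠ d ∧ b ≠ c ∧ b ≠ d ∧ c ≠ d ∧ ¬ pl {a, b, c, d})
    (H1 : ∀ a b c : Fin N, a ≠ b → a ≠ c → b ≠ c →
      (ln {a, b, c} ↔ ∀ d, a ≠ d → b ≠ d → c ≠ d → pl {a, b, c, d}))
    (H2 : ∀ a b : Fin N, a ≠ b → ∃ c d, a ≠ c ∧ a ≠ d ∧ b ≠ c ∧ b ≠ d ∧ c ≠ d ∧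
      ¬ pl {a, b, c, d})
    (σ : Fin N → ℙ F (Fin 4 → F)) :
    (Function.Injective σ ∧
      (∀ a b c : Fin N, a ≠ b → a ≠ c → b ≠ c →
        (Collinear3 F (σ a) (σ b) (σ c) ↔ ln {a, b, c})) ∧
      (∀ a b c d : Fin N, a ≠ b → a ≠ c → a ≠ d → b ≠ c → b ≠ d → c ≠ d →
        (Coplanar4 F (σ a) (σ b) (σ c) (σ d) ↔ pl {a, b, c, d}))) ↔
    VStrong F pl (fun j => (σ j).rep) := by
  rw [vstrong4_iff]
  refine ⟨fun h => h.2.2, fun h => ⟨?_, ?_, h⟩⟩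
  · intro a b hab
    by_contra hne
    obtain ⟨c, d, h1, h2, h3, h4, h5, h6⟩ := H2 a b hne
    refine h6 ((h a b c d hne h1 h2 h3 h4 h5).1 ?_)
    rw [hab]
    exact coplanar4_of_eq _ _ _
  · intro a b c hab hac hbc
    rw [H1 a b c hab hac hbc]
    constructor
    · intro hcol d h1 h2 h3
      exact (h a b c d hab hac h1 hbc h2 h3).1 (collinear3_coplanar4 _ _ _ _ hcol)
    · intro hd
      by_contra hcol
      have hall : ∀ d, Coplanar4 F (σ a) (σ b) (σ c) (σ d) := by
        intro d
        by_cases h1 : a = d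
        · subst h1
          rw [coplanar4_iff_det]
          exact Matrix.det_zero_of_row_eq (i := 0) (j := 3) (by decide) rfl
        by_cases h2 : b = d
        · subst h2
          rw [coplanar4_iff_det]
          exact Matrix.det_zero_of_row_eq (i := 1) (j := 3) (by decide) rfl
        by_cases h3 : c = d
        · subst h3
          rw [coplanar4_iff_det]
          exact Matrix.det_zero_of_row_eq (i := 2) (j := 3) (by decide) rfl
        exact (h a b c d hab hac h1 hbc h2 h3).2 (hd d h1 h2 h3)
      obtain ⟨x, y, z, w, h1, h2, h3, h4, h5, h6, h7⟩ := H0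
      have hf : ¬ Coplanar4 F (σ x) (σ y) (σ z) (σ w) := fun hh =>
        h7 ((h x y z w h1 h2 h3 h4 h5 h6).1 hh)
      rcases exists_not_coplanar4 hcol hf with h | h | h | h <;> exact h (hall _)

/-- The number of projective realizations times `(q-1)^N` is the number of vector ones. -/
lemma real_card {N : ℕ} {F : Type} [Field F] [Fintype F] (pl : Finset (Fin N) → Prop)
    (H2 : ∀ a : Fin N, ∃ b c d, a ≠ b ∧ a ≠ c ∧ a ≠ d ∧ b ≠ c ∧ b ≠ d ∧ c ≠ d ∧
      ¬ pl {a, b, c, d}) (P : (Fin N → ℙ F (Fin 4 → F)) → Prop)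
    (hP : ∀ σ, P σ ↔ VStrong F pl (fun j => (σ j).rep)) :
    Nat.card {v : Fin N → Fin 4 → F // VStrong F pl v} =
      Nat.card {σ : Fin N → ℙ F (Fin 4 → F) // P σ} * (Fintype.card F - 1) ^ N := by
  rw [proj_card pl]
  · simp_rw [hP]
  · intro a
    obtain ⟨b, c, d, h0, h1, h2, h3, h4, h5, h6⟩ := H2 a
    exact ⟨![a, b, c, d], inj4 h0 h1 h2 h3 h4 h5, by rwa [image4], 0, rfl⟩

/-- The predicate contained in a listed plane. -/
def inPl {N : ℕ} (L : Finset (Finset (Fin N))) (s : Finset (Fin N)) : Prop := ∃ h ∈ L, s ⊆ h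

instance {N : ℕ} (L : Finset (Finset (Fin N))) : DecidablePred (inPl L) :=
  fun s => inferInstanceAs (Decidable (∃ h ∈ L, s ⊆ h))

lemma config_card {F : Type} [Field F] [Fintype F] (planes lines : Finset (Finset (Fin 7)))
    (H0 : ∃ a b c d : Fin 7, a ≠ b ∧ a ≠ c ∧ a ≠ d ∧ b ≠ c ∧ b ≠ d ∧ c ≠ d ∧
      ¬ inPl planes {a, b, c, d})
    (H1 : ∀ a b c : Fin 7, a ≠ b → a ≠ c → b ≠ c →
      (inPl lines {a, b, c} ↔ ∀ d, a ≠ d → b ≠ d → c ≠ d → inPl planes {a, b, c, d}))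
    (H2 : ∀ a b : Fin 7, a ≠ b → ∃ c d, a ≠ c ∧ a ≠ d ∧ b ≠ c ∧ b ≠ d ∧ c ≠ d ∧
      ¬ inPl planes {a, b, c, d}) :
    Nat.card {v : Fin 7 → Fin 4 → F // VStrong F (inPl planes) v} =
      Nat.card {σ : Fin 7 → ℙ F (Fin 4 → F) // IsConfigReal F planes lines σ} *
        (Fintype.card F - 1) ^ 7 := by
  refine real_card _ ?_ _ ?_
  · intro a
    obtain ⟨b, hb⟩ : ∃ b : Fin 7, a ≠ b := ⟨a + 1, by revert a; decide⟩
    obtain ⟨c, d, h⟩ := H2 a b hb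
    exact ⟨b, c, d, hb, h⟩
  · intro σ
    rw [← real_iff_vstrong (inPl planes) (inPl lines) H0 H1 H2]
    rfl

lemma h1_card {F : Type} [Field F] [Fintype F] :
    Nat.card {v : Fin 7 → Fin 4 → F // VStrong F (inPl h1planes) v} =
      Nat.card {σ : Fin 7 → ℙ F (Fin 4 → F) // IsConfigReal F h1planes ∅ σ} *
        (Fintype.card F - 1) ^ 7 :=
  config_card _ _ (by decide +kernel) (by decide +kernel) (by decide +kernel)

lemma h2_card {F : Type} [Field F] [Fintype F] :
    Nat.card {v : Fin 7 → Fin 4 → F // VStrong F (inPl h2planes) v} =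
      Nat.card {σ : Fin 7 → ℙ F (Fin 4 → F) // IsConfigReal F h2planes ∅ σ} *
        (Fintype.card F - 1) ^ 7 :=
  config_card _ _ (by decide +kernel) (by decide +kernel) (by decide +kernel)

lemma h3_card {F : Type} [Field F] [Fintype F] :
    Nat.card {v : Fin 7 → Fin 4 → F // VStrong F (inPl h3planes) v} =
      Nat.card {σ : Fin 7 → ℙ F (Fin 4 → F) // IsConfigReal F h3planes h3lines σ} *
        (Fintype.card F - 1) ^ 7 :=
  config_card _ _ (by decide +kernel) (by decide +kernel) (by decide +kernel)

lemma h5_card {F : Type} [Field F] [Fintype F] :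
    Nat.card {v : Fin 7 → Fin 4 → F // VStrong F (inPl h5planes) v} =
      Nat.card {σ : Fin 7 → ℙ F (Fin 4 → F) // IsConfigReal F h5planes h5lines σ} *
        (Fintype.card F - 1) ^ 7 :=
  config_card _ _ (by decide +kernel) (by decide +kernel) (by decide +kernel)

/-- Planes of the six-point hyperfiguration. -/
def hyp6planes : Finset (Finset (Fin 6)) :=
  {{0, 1, 2, 3}, {0, 1, 2, 4}, {0, 1, 2, 5}, {0, 3, 4, 5}, {1, 3, 4, 5}, {2, 3, 4, 5}}

lemma hyp6_card {F : Type} [Field F] [Fintype F] :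
    Nat.card {v : Fin 6 → Fin 4 → F // VStrong F (· ∈ hyp6planes) v} =
      Nat.card {σ : Fin 6 → ℙ F (Fin 4 → F) // IsHyp6Real F σ} *
        (Fintype.card F - 1) ^ 6 := by
  refine real_card _ (by decide +kernel) _ ?_
  intro σ
  rw [← real_iff_vstrong (· ∈ hyp6planes) (fun s => s ⊆ {0, 1, 2} ∨ s ⊆ {3, 4, 5})
    (by decide +kernel) (by decide +kernel) (by decide +kernel)]
  rfl

lemma arc_card {F : Type} [Field F] [Fintype F] :
    Nat.card {v : Fin 7 → Fin 4 → F // VStrong F (fun _ => False) v} =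
      Nat.card {σ : Fin 7 → ℙ F (Fin 4 → F) // IsArc4 F σ} *
        (Fintype.card F - 1) ^ 7 := by
  refine real_card _ (by decide +kernel) _ ?_
  intro σ
  rw [vstrong4_iff]
  unfold IsArc4
  simp only [iff_false]
  refine ⟨fun h => h.2, fun h => ⟨?_, h⟩⟩
  intro a b hab
  by_contra hne
  obtain ⟨c, d, h1, h2, h3, h4, h5⟩ : ∃ c d : Fin 7, a ≠ c ∧ a ≠ d ∧ b ≠ c ∧ b ≠ d ∧ c ≠ d := by
    clear hab hne h σ
    revert a b
    decide +kernel
  refine h a b c d hne h1 h2 h3 h4 h5 ?_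
  rw [hab]
  exact coplanar4_of_eq _ _ _


lemma det4_rows {F : Type} [Field F] (x y z w : Fin 4 → F) :
    (Matrix.of ![x, y, z, w]).det =
      x 0 * (y 1 * (z 2 * w 3 - z 3 * w 2) - y 2 * (z 1 * w 3 - z 3 * w 1)
        + y 3 * (z 1 * w 2 - z 2 * w 1))
      - x 1 * (y 0 * (z 2 * w 3 - z 3 * w 2) - y 2 * (z 0 * w 3 - z 3 * w 0)
        + y 3 * (z 0 * w 2 - z 2 * w 0))
      + x 2 * (y 0 * (z 1 * w 3 - z 3 * w 1) - y 1 * (z 0 * w 3 - z 3 * w 0)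
        + y 3 * (z 0 * w 1 - z 1 * w 0))
      - x 3 * (y 0 * (z 1 * w 2 - z 2 * w 1) - y 1 * (z 0 * w 2 - z 2 * w 0)
        + y 2 * (z 0 * w 1 - z 1 * w 0)) := by
  simp [Matrix.det_succ_row_zero, Fin.sum_univ_succ, Fin.succAbove]
  ring

lemma det3_rows {F : Type} [Field F] (x y z : Fin 3 → F) :
    (Matrix.of ![x, y, z]).det =
      x 0 * (y 1 * z 2 - y 2 * z 1) - x 1 * (y 0 * z 2 - y 2 * z 0)
        + x 2 * (y 0 * z 1 - y 1 * z 0) := by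
  rw [Matrix.det_fin_three]
  simp
  ring

lemma image3 {N : ℕ} (a b c : Fin N) :
    Finset.univ.image ![a, b, c] = {a, b, c} := by
  ext x
  simp [Fin.exists_fin_succ, eq_comm]

lemma strictMono4_iff {N : ℕ} (Q : (Fin 4 → Fin N) → Prop) :
    (∀ s : Fin 4 → Fin N, StrictMono s → Q s) ↔
      ∀ a b c d : Fin N, a < b → b < c → c < d → Q ![a, b, c, d] := by
  constructor
  · intro h a b c d h1 h2 h3
    refine h _ (Fin.strictMono_iff_lt_succ.2 ?_)
    intro i
    fin_cases i <;> assumption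
  · intro h s hs
    have e : s = ![s 0, s 1, s 2, s 3] := by
      funext i
      fin_cases i <;> rfl
    rw [e]
    exact h _ _ _ _ (hs (by decide)) (hs (by decide)) (hs (by decide))

lemma strictMono3_iff {N : ℕ} (Q : (Fin 3 → Fin N) → Prop) :
    (∀ s : Fin 3 → Fin N, StrictMono s → Q s) ↔
      ∀ a b c : Fin N, a < b → b < c → Q ![a, b, c] := by
  constructor
  · intro h a b c h1 h2
    refine h _ (Fin.strictMono_iff_lt_succ.2 ?_)
    intro i
    fin_cases i <;> assumption
  · intro h s hs
    have e : s = ![s 0, s 1, s 2] := by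
      funext i
      fin_cases i <;> rfl
    rw [e]
    exact h _ _ _ (hs (by decide)) (hs (by decide))

/-- The sorted index tuples. -/
def list47 : List (Fin 7 × Fin 7 × Fin 7 × Fin 7) :=
  [(0, 1, 2, 3), (0, 1, 2, 4), (0, 1, 2, 5), (0, 1, 2, 6), (0, 1, 3, 4),
   (0, 1, 3, 5), (0, 1, 3, 6), (0, 1, 4, 5), (0, 1, 4, 6), (0, 1, 5, 6),
   (0, 2, 3, 4), (0, 2, 3, 5), (0, 2, 3, 6), (0, 2, 4, 5), (0, 2, 4, 6),
   (0, 2, 5, 6), (0, 3, 4, 5), (0, 3, 4, 6), (0, 3, 5, 6), (0, 4, 5, 6),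
   (1, 2, 3, 4), (1, 2, 3, 5), (1, 2, 3, 6), (1, 2, 4, 5), (1, 2, 4, 6),
   (1, 2, 5, 6), (1, 3, 4, 5), (1, 3, 4, 6), (1, 3, 5, 6), (1, 4, 5, 6),
   (2, 3, 4, 5), (2, 3, 4, 6), (2, 3, 5, 6), (2, 4, 5, 6), (3, 4, 5, 6)]

lemma mem_list47 : ∀ x y z w : Fin 7, x < y → y < z → z < w → (x, y, z, w) ∈ list47 := by
  decide +kernel

lemma lt_list47 : ∀ p ∈ list47, p.1 < p.2.1 ∧ p.2.1 < p.2.2.1 ∧ p.2.2.1 < p.2.2.2 := by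
  decide +kernel

lemma forall_list47 (Q : Fin 7 → Fin 7 → Fin 7 → Fin 7 → Prop) :
    (∀ x y z w : Fin 7, x < y → y < z → z < w → Q x y z w) ↔ ∀ p ∈ list47, Q p.1 p.2.1 p.2.2.1 p.2.2.2 := by
  constructor
  · intro h p hp
    have := lt_list47 p hp
    exact h _ _ _ _ this.1 this.2.1 this.2.2
  · intro h x y z w h1 h2 h3
    exact h (x, y, z, w) (mem_list47 x y z w h1 h2 h3)

/-- Completing a matrix by the standard frame. -/
def fr47 {F : Type} [Field F] (a : Fin 3 → Fin 4 → F) : Fin 7 → Fin 4 → F :=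
  ![![1, 0, 0, 0], ![0, 1, 0, 0], ![0, 0, 1, 0], ![0, 0, 0, 1], a 0, a 1, a 2]

/-- Vanishing conditions for minors. -/
def Min47 {F : Type} [Field F] (pl : Finset (Fin 7) → Prop) (a : Fin 3 → Fin 4 → F) : Prop :=
  (a 0 3 = 0 ↔ pl {0, 1, 2, 4}) ∧
  (a 1 3 = 0 ↔ pl {0, 1, 2, 5}) ∧
  (a 2 3 = 0 ↔ pl {0, 1, 2, 6}) ∧
  (a 0 2 = 0 ↔ pl {0, 1, 3, 4}) ∧
  (a 1 2 = 0 ↔ pl {0, 1, 3, 5}) ∧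
  (a 2 2 = 0 ↔ pl {0, 1, 3, 6}) ∧
  (a 0 2 * a 1 3 - a 0 3 * a 1 2 = 0 ↔ pl {0, 1, 4, 5}) ∧
  (a 0 2 * a 2 3 - a 0 3 * a 2 2 = 0 ↔ pl {0, 1, 4, 6}) ∧
  (a 1 2 * a 2 3 - a 1 3 * a 2 2 = 0 ↔ pl {0, 1, 5, 6}) ∧
  (a 0 1 = 0 ↔ pl {0, 2, 3, 4}) ∧
  (a 1 1 = 0 ↔ pl {0, 2, 3, 5}) ∧
  (a 2 1 = 0 ↔ pl {0, 2, 3, 6}) ∧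
  (a 0 1 * a 1 3 - a 0 3 * a 1 1 = 0 ↔ pl {0, 2, 4, 5}) ∧
  (a 0 1 * a 2 3 - a 0 3 * a 2 1 = 0 ↔ pl {0, 2, 4, 6}) ∧
  (a 1 1 * a 2 3 - a 1 3 * a 2 1 = 0 ↔ pl {0, 2, 5, 6}) ∧
  (a 0 1 * a 1 2 - a 0 2 * a 1 1 = 0 ↔ pl {0, 3, 4, 5}) ∧
  (a 0 1 * a 2 2 - a 0 2 * a 2 1 = 0 ↔ pl {0, 3, 4, 6}) ∧
  (a 1 1 * a 2 2 - a 1 2 * a 2 1 = 0 ↔ pl {0, 3, 5, 6}) ∧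
  (a 0 1 * (a 1 2 * a 2 3 - a 1 3 * a 2 2) - a 0 2 * (a 1 1 * a 2 3 - a 1 3 * a 2 1)
      + a 0 3 * (a 1 1 * a 2 2 - a 1 2 * a 2 1) = 0 ↔ pl {0, 4, 5, 6}) ∧
  (a 0 0 = 0 ↔ pl {1, 2, 3, 4}) ∧
  (a 1 0 = 0 ↔ pl {1, 2, 3, 5}) ∧
  (a 2 0 = 0 ↔ pl {1, 2, 3, 6}) ∧
  (a 0 0 * a 1 3 - a 0 3 * a 1 0 = 0 ↔ pl {1, 2, 4, 5}) ∧
  (a 0 0 * a 2 3 - a 0 3 * a 2 0 = 0 ↔ pl {1, 2, 4, 6}) ∧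
  (a 1 0 * a 2 3 - a 1 3 * a 2 0 = 0 ↔ pl {1, 2, 5, 6}) ∧
  (a 0 0 * a 1 2 - a 0 2 * a 1 0 = 0 ↔ pl {1, 3, 4, 5}) ∧
  (a 0 0 * a 2 2 - a 0 2 * a 2 0 = 0 ↔ pl {1, 3, 4, 6}) ∧
  (a 1 0 * a 2 2 - a 1 2 * a 2 0 = 0 ↔ pl {1, 3, 5, 6}) ∧
  (a 0 0 * (a 1 2 * a 2 3 - a 1 3 * a 2 2) - a 0 2 * (a 1 0 * a 2 3 - a 1 3 * a 2 0)
      + a 0 3 * (a 1 0 * a 2 2 - a 1 2 * a 2 0) = 0 ↔ pl {1, 4, 5, 6}) ∧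
  (a 0 0 * a 1 1 - a 0 1 * a 1 0 = 0 ↔ pl {2, 3, 4, 5}) ∧
  (a 0 0 * a 2 1 - a 0 1 * a 2 0 = 0 ↔ pl {2, 3, 4, 6}) ∧
  (a 1 0 * a 2 1 - a 1 1 * a 2 0 = 0 ↔ pl {2, 3, 5, 6}) ∧
  (a 0 0 * (a 1 1 * a 2 3 - a 1 3 * a 2 1) - a 0 1 * (a 1 0 * a 2 3 - a 1 3 * a 2 0)
      + a 0 3 * (a 1 0 * a 2 1 - a 1 1 * a 2 0) = 0 ↔ pl {2, 4, 5, 6}) ∧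
  (a 0 0 * (a 1 1 * a 2 2 - a 1 2 * a 2 1) - a 0 1 * (a 1 0 * a 2 2 - a 1 2 * a 2 0)
      + a 0 2 * (a 1 0 * a 2 1 - a 1 1 * a 2 0) = 0 ↔ pl {3, 4, 5, 6})

lemma vstrong_fr47 {F : Type} [Field F] (pl : Finset (Fin 7) → Prop)
    (h0 : ¬ pl {0, 1, 2, 3}) (a : Fin 3 → Fin 4 → F) :
    VStrong F pl (fr47 a) ↔ Min47 pl a := by
  have hm : ∀ x y z w : Fin 7, (Matrix.of fun i => fr47 a (![x, y, z, w] i)) =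
      Matrix.of ![fr47 a x, fr47 a y, fr47 a z, fr47 a w] := by
    intro x y z w
    ext i j
    fin_cases i <;> rfl
  rw [vstrong_iff_strictMono, strictMono4_iff, forall_list47]
  simp only [list47, List.forall_mem_cons, hm, image4, det4_rows]
  simp only [List.not_mem_nil, false_imp_iff, implies_true, and_true]
  rw [and_iff_right]
  swap
  · simp [fr47, h0]
  unfold Min47
  refine (and_congr ?_ (and_congr ?_ (and_congr ?_ (and_congr ?_ (and_congr ?_ (and_congr ?_ (and_congr ?_ (and_congr ?_ (and_congr ?_ (and_congr ?_ (and_congr ?_ (and_congr ?_ (and_congr ?_ (and_congr ?_ (and_congr ?_ (and_congr ?_ (and_congr ?_ (and_congr ?_ (and_congr ?_ (and_congr ?_ (and_congr ?_ (and_congr ?_ (and_congr ?_ (and_congr ?_ (and_congr ?_ (and_congr ?_ (and_congr ?_ (and_congr ?_ (and_congr ?_ (and_congr ?_ (and_congr ?_ (and_congr ?_ (and_congr ?_ ?_)))))))))))))))))))))))))))))))))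
  all_goals
    refine iff_congr ?_ Iff.rfl
    first
    | (refine Eq.congr ?_ rfl; simp [fr47]; done)
    | (refine Eq.congr ?_ rfl; simp [fr47]; ring; done)
    | (rw [← neg_eq_zero]; refine Eq.congr ?_ rfl; simp [fr47]; done)

lemma card_frame47 {F : Type} [Field F] (pl : Finset (Fin 7) → Prop)
    (h0 : ¬ pl {0, 1, 2, 3}) :
    Nat.card {v : Fin 7 → Fin 4 → F // VStrong F pl v} =
      Nat.card (Matrix.GeneralLinearGroup (Fin 4) F) *
        Nat.card {a : Fin 3 → Fin 4 → F // Min47 pl a} := by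
  have hs : Function.Injective (![0, 1, 2, 3] : Fin 4 → Fin 7) := by decide
  rw [vstrong_card_frame pl _ hs (by rwa [image4])]
  congr 1
  symm
  have hfr : ∀ (a : Fin 3 → Fin 4 → F) (i : Fin 4),
      fr47 a ((![0, 1, 2, 3] : Fin 4 → Fin 7) i) = Pi.single i 1 := by
    intro a i
    ext j
    fin_cases i <;> fin_cases j <;> simp [fr47]
  refine Nat.card_congr (Equiv.ofBijective
    (fun a => ⟨fr47 a.1, (vstrong_fr47 pl h0 a.1).2 a.2, hfr a.1⟩) ⟨?_, ?_⟩)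
  · rintro ⟨a, ha⟩ ⟨b, hb⟩ h
    have h' : fr47 a = fr47 b := congrArg Subtype.val h
    apply Subtype.ext
    funext i
    fin_cases i
    · exact congrFun h' 4
    · exact congrFun h' 5
    · exact congrFun h' 6
  · rintro ⟨v, hv, hv2⟩
    have e : fr47 ![v 4, v 5, v 6] = v := by
      funext i
      fin_cases i
      · exact (hfr _ 0).trans (hv2 0).symm
      · exact (hfr _ 1).trans (hv2 1).symm
      · exact (hfr _ 2).trans (hv2 2).symm
      · exact (hfr _ 3).trans (hv2 3).symm
      · rfl
      · rfl
      · rfl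
    exact ⟨⟨_, (vstrong_fr47 pl h0 _).1 (e ▸ hv)⟩, Subtype.ext e⟩

/-- The sorted index tuples. -/
def list46 : List (Fin 6 × Fin 6 × Fin 6 × Fin 6) :=
  [(0, 1, 2, 3), (0, 1, 2, 4), (0, 1, 2, 5), (0, 1, 3, 4), (0, 1, 3, 5),
   (0, 1, 4, 5), (0, 2, 3, 4), (0, 2, 3, 5), (0, 2, 4, 5), (0, 3, 4, 5),
   (1, 2, 3, 4), (1, 2, 3, 5), (1, 2, 4, 5), (1, 3, 4, 5), (2, 3, 4, 5)]

lemma mem_list46 : ∀ x y z w : Fin 6, x < y → y < z → z < w → (x, y, z, w) ∈ list46 := by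
  decide +kernel

lemma lt_list46 : ∀ p ∈ list46, p.1 < p.2.1 ∧ p.2.1 < p.2.2.1 ∧ p.2.2.1 < p.2.2.2 := by
  decide +kernel

lemma forall_list46 (Q : Fin 6 → Fin 6 → Fin 6 → Fin 6 → Prop) :
    (∀ x y z w : Fin 6, x < y → y < z → z < w → Q x y z w) ↔ ∀ p ∈ list46, Q p.1 p.2.1 p.2.2.1 p.2.2.2 := by
  constructor
  · intro h p hp
    have := lt_list46 p hp
    exact h _ _ _ _ this.1 this.2.1 this.2.2
  · intro h x y z w h1 h2 h3
    exact h (x, y, z, w) (mem_list46 x y z w h1 h2 h3)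

/-- Completing a matrix by the standard frame. -/
def fr46 {F : Type} [Field F] (a : Fin 2 → Fin 4 → F) : Fin 6 → Fin 4 → F :=
  ![![1, 0, 0, 0], ![0, 1, 0, 0], ![0, 0, 1, 0], ![0, 0, 0, 1], a 0, a 1]

/-- Vanishing conditions for minors. -/
def Min46 {F : Type} [Field F] (pl : Finset (Fin 6) → Prop) (a : Fin 2 → Fin 4 → F) : Prop :=
  (a 0 3 = 0 ↔ pl {0, 1, 2, 4}) ∧
  (a 1 3 = 0 ↔ pl {0, 1, 2, 5}) ∧
  (a 0 2 = 0 ↔ pl {0, 1, 3, 4}) ∧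
  (a 1 2 = 0 ↔ pl {0, 1, 3, 5}) ∧
  (a 0 2 * a 1 3 - a 0 3 * a 1 2 = 0 ↔ pl {0, 1, 4, 5}) ∧
  (a 0 1 = 0 ↔ pl {0, 2, 3, 4}) ∧
  (a 1 1 = 0 ↔ pl {0, 2, 3, 5}) ∧
  (a 0 1 * a 1 3 - a 0 3 * a 1 1 = 0 ↔ pl {0, 2, 4, 5}) ∧
  (a 0 1 * a 1 2 - a 0 2 * a 1 1 = 0 ↔ pl {0, 3, 4, 5}) ∧
  (a 0 0 = 0 ↔ pl {1, 2, 3, 4}) ∧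
  (a 1 0 = 0 ↔ pl {1, 2, 3, 5}) ∧
  (a 0 0 * a 1 3 - a 0 3 * a 1 0 = 0 ↔ pl {1, 2, 4, 5}) ∧
  (a 0 0 * a 1 2 - a 0 2 * a 1 0 = 0 ↔ pl {1, 3, 4, 5}) ∧
  (a 0 0 * a 1 1 - a 0 1 * a 1 0 = 0 ↔ pl {2, 3, 4, 5})

lemma vstrong_fr46 {F : Type} [Field F] (pl : Finset (Fin 6) → Prop)
    (h0 : ¬ pl {0, 1, 2, 3}) (a : Fin 2 → Fin 4 → F) :
    VStrong F pl (fr46 a) ↔ Min46 pl a := by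
  have hm : ∀ x y z w : Fin 6, (Matrix.of fun i => fr46 a (![x, y, z, w] i)) =
      Matrix.of ![fr46 a x, fr46 a y, fr46 a z, fr46 a w] := by
    intro x y z w
    ext i j
    fin_cases i <;> rfl
  rw [vstrong_iff_strictMono, strictMono4_iff, forall_list46]
  simp only [list46, List.forall_mem_cons, hm, image4, det4_rows]
  simp only [List.not_mem_nil, false_imp_iff, implies_true, and_true]
  rw [and_iff_right]
  swap
  · simp [fr46, h0]
  unfold Min46
  refine (and_congr ?_ (and_congr ?_ (and_congr ?_ (and_congr ?_ (and_congr ?_ (and_congr ?_ (and_congr ?_ (and_congr ?_ (and_congr ?_ (and_congr ?_ (and_congr ?_ (and_congr ?_ (and_congr ?_ ?_)))))))))))))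
  all_goals
    refine iff_congr ?_ Iff.rfl
    first
    | (refine Eq.congr ?_ rfl; simp [fr46]; done)
    | (refine Eq.congr ?_ rfl; simp [fr46]; ring; done)
    | (rw [← neg_eq_zero]; refine Eq.congr ?_ rfl; simp [fr46]; done)

lemma card_frame46 {F : Type} [Field F] (pl : Finset (Fin 6) → Prop)
    (h0 : ¬ pl {0, 1, 2, 3}) :
    Nat.card {v : Fin 6 → Fin 4 → F // VStrong F pl v} =
      Nat.card (Matrix.GeneralLinearGroup (Fin 4) F) *
        Nat.card {a : Fin 2 → Fin 4 → F // Min46 pl a} := by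
  have hs : Function.Injective (![0, 1, 2, 3] : Fin 4 → Fin 6) := by decide
  rw [vstrong_card_frame pl _ hs (by rwa [image4])]
  congr 1
  symm
  have hfr : ∀ (a : Fin 2 → Fin 4 → F) (i : Fin 4),
      fr46 a ((![0, 1, 2, 3] : Fin 4 → Fin 6) i) = Pi.single i 1 := by
    intro a i
    ext j
    fin_cases i <;> fin_cases j <;> simp [fr46]
  refine Nat.card_congr (Equiv.ofBijective
    (fun a => ⟨fr46 a.1, (vstrong_fr46 pl h0 a.1).2 a.2, hfr a.1⟩) ⟨?_, ?_⟩)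
  · rintro ⟨a, ha⟩ ⟨b, hb⟩ h
    have h' : fr46 a = fr46 b := congrArg Subtype.val h
    apply Subtype.ext
    funext i
    fin_cases i
    · exact congrFun h' 4
    · exact congrFun h' 5
  · rintro ⟨v, hv, hv2⟩
    have e : fr46 ![v 4, v 5] = v := by
      funext i
      fin_cases i
      · exact (hfr _ 0).trans (hv2 0).symm
      · exact (hfr _ 1).trans (hv2 1).symm
      · exact (hfr _ 2).trans (hv2 2).symm
      · exact (hfr _ 3).trans (hv2 3).symm
      · rfl
      · rfl
    exact ⟨⟨_, (vstrong_fr46 pl h0 _).1 (e ▸ hv)⟩, Subtype.ext e⟩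

/-- The sorted index tuples. -/
def list37 : List (Fin 7 × Fin 7 × Fin 7) :=
  [(0, 1, 2), (0, 1, 3), (0, 1, 4), (0, 1, 5), (0, 1, 6),
   (0, 2, 3), (0, 2, 4), (0, 2, 5), (0, 2, 6), (0, 3, 4),
   (0, 3, 5), (0, 3, 6), (0, 4, 5), (0, 4, 6), (0, 5, 6),
   (1, 2, 3), (1, 2, 4), (1, 2, 5), (1, 2, 6), (1, 3, 4),
   (1, 3, 5), (1, 3, 6), (1, 4, 5), (1, 4, 6), (1, 5, 6),
   (2, 3, 4), (2, 3, 5), (2, 3, 6), (2, 4, 5), (2, 4, 6),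
   (2, 5, 6), (3, 4, 5), (3, 4, 6), (3, 5, 6), (4, 5, 6)]

lemma mem_list37 : ∀ x y z : Fin 7, x < y → y < z → (x, y, z) ∈ list37 := by
  decide +kernel

lemma lt_list37 : ∀ p ∈ list37, p.1 < p.2.1 ∧ p.2.1 < p.2.2 := by
  decide +kernel

lemma forall_list37 (Q : Fin 7 → Fin 7 → Fin 7 → Prop) :
    (∀ x y z : Fin 7, x < y → y < z → Q x y z) ↔ ∀ p ∈ list37, Q p.1 p.2.1 p.2.2 := by
  constructor
  · intro h p hp
    have := lt_list37 p hp
    exact h _ _ _ this.1 this.2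
  · intro h x y z h1 h2
    exact h (x, y, z) (mem_list37 x y z h1 h2)

/-- Completing a matrix by the standard frame. -/
def fr37 {F : Type} [Field F] (a : Fin 4 → Fin 3 → F) : Fin 7 → Fin 3 → F :=
  ![![1, 0, 0], ![0, 1, 0], ![0, 0, 1], a 0, a 1, a 2, a 3]

/-- Vanishing conditions for minors. -/
def Min37 {F : Type} [Field F] (pl : Finset (Fin 7) → Prop) (a : Fin 4 → Fin 3 → F) : Prop :=
  (a 0 2 = 0 ↔ pl {0, 1, 3}) ∧
  (a 1 2 = 0 ↔ pl {0, 1, 4}) ∧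
  (a 2 2 = 0 ↔ pl {0, 1, 5}) ∧
  (a 3 2 = 0 ↔ pl {0, 1, 6}) ∧
  (a 0 1 = 0 ↔ pl {0, 2, 3}) ∧
  (a 1 1 = 0 ↔ pl {0, 2, 4}) ∧
  (a 2 1 = 0 ↔ pl {0, 2, 5}) ∧
  (a 3 1 = 0 ↔ pl {0, 2, 6}) ∧
  (a 0 1 * a 1 2 - a 0 2 * a 1 1 = 0 ↔ pl {0, 3, 4}) ∧
  (a 0 1 * a 2 2 - a 0 2 * a 2 1 = 0 ↔ pl {0, 3, 5}) ∧
  (a 0 1 * a 3 2 - a 0 2 * a 3 1 = 0 ↔ pl {0, 3, 6}) ∧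
  (a 1 1 * a 2 2 - a 1 2 * a 2 1 = 0 ↔ pl {0, 4, 5}) ∧
  (a 1 1 * a 3 2 - a 1 2 * a 3 1 = 0 ↔ pl {0, 4, 6}) ∧
  (a 2 1 * a 3 2 - a 2 2 * a 3 1 = 0 ↔ pl {0, 5, 6}) ∧
  (a 0 0 = 0 ↔ pl {1, 2, 3}) ∧
  (a 1 0 = 0 ↔ pl {1, 2, 4}) ∧
  (a 2 0 = 0 ↔ pl {1, 2, 5}) ∧
  (a 3 0 = 0 ↔ pl {1, 2, 6}) ∧
  (a 0 0 * a 1 2 - a 0 2 * a 1 0 = 0 ↔ pl {1, 3, 4}) ∧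
  (a 0 0 * a 2 2 - a 0 2 * a 2 0 = 0 ↔ pl {1, 3, 5}) ∧
  (a 0 0 * a 3 2 - a 0 2 * a 3 0 = 0 ↔ pl {1, 3, 6}) ∧
  (a 1 0 * a 2 2 - a 1 2 * a 2 0 = 0 ↔ pl {1, 4, 5}) ∧
  (a 1 0 * a 3 2 - a 1 2 * a 3 0 = 0 ↔ pl {1, 4, 6}) ∧
  (a 2 0 * a 3 2 - a 2 2 * a 3 0 = 0 ↔ pl {1, 5, 6}) ∧
  (a 0 0 * a 1 1 - a 0 1 * a 1 0 = 0 ↔ pl {2, 3, 4}) ∧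
  (a 0 0 * a 2 1 - a 0 1 * a 2 0 = 0 ↔ pl {2, 3, 5}) ∧
  (a 0 0 * a 3 1 - a 0 1 * a 3 0 = 0 ↔ pl {2, 3, 6}) ∧
  (a 1 0 * a 2 1 - a 1 1 * a 2 0 = 0 ↔ pl {2, 4, 5}) ∧
  (a 1 0 * a 3 1 - a 1 1 * a 3 0 = 0 ↔ pl {2, 4, 6}) ∧
  (a 2 0 * a 3 1 - a 2 1 * a 3 0 = 0 ↔ pl {2, 5, 6}) ∧
  (a 0 0 * (a 1 1 * a 2 2 - a 1 2 * a 2 1) - a 0 1 * (a 1 0 * a 2 2 - a 1 2 * a 2 0)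
      + a 0 2 * (a 1 0 * a 2 1 - a 1 1 * a 2 0) = 0 ↔ pl {3, 4, 5}) ∧
  (a 0 0 * (a 1 1 * a 3 2 - a 1 2 * a 3 1) - a 0 1 * (a 1 0 * a 3 2 - a 1 2 * a 3 0)
      + a 0 2 * (a 1 0 * a 3 1 - a 1 1 * a 3 0) = 0 ↔ pl {3, 4, 6}) ∧
  (a 0 0 * (a 2 1 * a 3 2 - a 2 2 * a 3 1) - a 0 1 * (a 2 0 * a 3 2 - a 2 2 * a 3 0)
      + a 0 2 * (a 2 0 * a 3 1 - a 2 1 * a 3 0) = 0 ↔ pl {3, 5, 6}) ∧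
  (a 1 0 * (a 2 1 * a 3 2 - a 2 2 * a 3 1) - a 1 1 * (a 2 0 * a 3 2 - a 2 2 * a 3 0)
      + a 1 2 * (a 2 0 * a 3 1 - a 2 1 * a 3 0) = 0 ↔ pl {4, 5, 6})

lemma vstrong_fr37 {F : Type} [Field F] (pl : Finset (Fin 7) → Prop)
    (h0 : ¬ pl {0, 1, 2}) (a : Fin 4 → Fin 3 → F) :
    VStrong F pl (fr37 a) ↔ Min37 pl a := by
  have hm : ∀ x y z : Fin 7, (Matrix.of fun i => fr37 a (![x, y, z] i)) =
      Matrix.of ![fr37 a x, fr37 a y, fr37 a z] := by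
    intro x y z
    ext i j
    fin_cases i <;> rfl
  rw [vstrong_iff_strictMono, strictMono3_iff, forall_list37]
  simp only [list37, List.forall_mem_cons, hm, image3, det3_rows]
  simp only [List.not_mem_nil, false_imp_iff, implies_true, and_true]
  rw [and_iff_right]
  swap
  · simp [fr37, h0]
  unfold Min37
  refine (and_congr ?_ (and_congr ?_ (and_congr ?_ (and_congr ?_ (and_congr ?_ (and_congr ?_ (and_congr ?_ (and_congr ?_ (and_congr ?_ (and_congr ?_ (and_congr ?_ (and_congr ?_ (and_congr ?_ (and_congr ?_ (and_congr ?_ (and_congr ?_ (and_congr ?_ (and_congr ?_ (and_congr ?_ (and_congr ?_ (and_congr ?_ (and_congr ?_ (and_congr ?_ (and_congr ?_ (and_congr ?_ (and_congr ?_ (and_congr ?_ (and_congr ?_ (and_congr ?_ (and_congr ?_ (and_congr ?_ (and_congr ?_ (and_congr ?_ ?_)))))))))))))))))))))))))))))))))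
  all_goals
    refine iff_congr ?_ Iff.rfl
    first
    | (refine Eq.congr ?_ rfl; simp [fr37]; done)
    | (refine Eq.congr ?_ rfl; simp [fr37]; ring; done)
    | (rw [← neg_eq_zero]; refine Eq.congr ?_ rfl; simp [fr37]; done)

lemma card_frame37 {F : Type} [Field F] (pl : Finset (Fin 7) → Prop)
    (h0 : ¬ pl {0, 1, 2}) :
    Nat.card {v : Fin 7 → Fin 3 → F // VStrong F pl v} =
      Nat.card (Matrix.GeneralLinearGroup (Fin 3) F) *
        Nat.card {a : Fin 4 → Fin 3 → F // Min37 pl a} := by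
  have hs : Function.Injective (![0, 1, 2] : Fin 3 → Fin 7) := by decide
  rw [vstrong_card_frame pl _ hs (by rwa [image3])]
  congr 1
  symm
  have hfr : ∀ (a : Fin 4 → Fin 3 → F) (i : Fin 3),
      fr37 a ((![0, 1, 2] : Fin 3 → Fin 7) i) = Pi.single i 1 := by
    intro a i
    ext j
    fin_cases i <;> fin_cases j <;> simp [fr37]
  refine Nat.card_congr (Equiv.ofBijective
    (fun a => ⟨fr37 a.1, (vstrong_fr37 pl h0 a.1).2 a.2, hfr a.1⟩) ⟨?_, ?_⟩)
  · rintro ⟨a, ha⟩ ⟨b, hb⟩ h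
    have h' : fr37 a = fr37 b := congrArg Subtype.val h
    apply Subtype.ext
    funext i
    fin_cases i
    · exact congrFun h' 3
    · exact congrFun h' 4
    · exact congrFun h' 5
    · exact congrFun h' 6
  · rintro ⟨v, hv, hv2⟩
    have e : fr37 ![v 3, v 4, v 5, v 6] = v := by
      funext i
      fin_cases i
      · exact (hfr _ 0).trans (hv2 0).symm
      · exact (hfr _ 1).trans (hv2 1).symm
      · exact (hfr _ 2).trans (hv2 2).symm
      · rfl
      · rfl
      · rfl
      · rfl
    exact ⟨⟨_, (vstrong_fr37 pl h0 _).1 (e ▸ hv)⟩, Subtype.ext e⟩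



/-- Relabelled planes of `h₁`. -/
def h1pl : Finset (Finset (Fin 7)) :=
  {{0, 1, 2, 4}, {0, 1, 3, 5}, {0, 2, 3, 6}, {1, 2, 5, 6}, {1, 3, 4, 6}, {2, 3, 4, 5}}

/-- Relabelled planes of `h₂`. -/
def h2pl : Finset (Finset (Fin 7)) :=
  {{0, 1, 2, 4}, {0, 1, 3, 5}, {0, 2, 3, 6}, {0, 4, 5, 6}, {1, 2, 5, 6}, {1, 3, 4, 6},
    {2, 3, 4, 5}}

/-- Relabelled planes of `h₃`. -/
def h3pl : Finset (Finset (Fin 7)) :=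
  {{0, 4, 5, 6}, {1, 4, 5, 6}, {2, 4, 5, 6}, {3, 4, 5, 6}, {0, 1, 2, 4}, {0, 1, 3, 5},
    {0, 2, 3, 6}}

/-- Relabelled planes of `h₅`. -/
def h5pl : Finset (Finset (Fin 7)) :=
  {{0, 1, 4, 5, 2}, {0, 1, 4, 5, 3}, {0, 1, 4, 5, 6}, {0, 2, 3, 6}, {1, 2, 3, 6},
    {4, 2, 3, 6}, {5, 2, 3, 6}}

/-- Relabelled planes of the six point configuration. -/
def hyp6pl : Finset (Finset (Fin 6)) :=
  {{0, 1, 4, 2}, {0, 1, 4, 3}, {0, 1, 4, 5}, {0, 2, 3, 5}, {1, 2, 3, 5}, {4, 2, 3, 5}}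

/-- Parametrization of `h₁` and `h₂`. -/
def par1 {F : Type} [Field F] (p : Fˣ × Fˣ × Fˣ × Fˣ × Fˣ × Fˣ) : Fin 3 → Fin 4 → F :=
  ![![p.1, p.1 * p.2.2.2.1, p.1 * p.2.2.2.2.1, 0],
    ![p.2.1, p.2.1 * p.2.2.2.1, 0, p.2.1 * p.2.2.2.2.2],
    ![p.2.2.1, 0, p.2.2.1 * p.2.2.2.2.1, p.2.2.1 * p.2.2.2.2.2]]

lemma par1_inj {F : Type} [Field F] : Function.Injective (par1 (F := F)) := by
  rintro ⟨r, s, t, x, y, z⟩ ⟨r', s', t', x', y', z'⟩ h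
  have h1 : (r : F) = r' := congrFun (congrFun h 0) 0
  have h2 : (s : F) = s' := congrFun (congrFun h 1) 0
  have h3 : (t : F) = t' := congrFun (congrFun h 2) 0
  have h4 : (r : F) * x = r' * x' := congrFun (congrFun h 0) 1
  have h5 : (r : F) * y = r' * y' := congrFun (congrFun h 0) 2
  have h6 : (s : F) * z = s' * z' := congrFun (congrFun h 1) 3
  obtain rfl := Units.ext h1
  obtain rfl := Units.ext h2
  obtain rfl := Units.ext h3
  obtain rfl := Units.ext (mul_left_cancel₀ r.ne_zero h4)
  obtain rfl := Units.ext (mul_left_cancel₀ r.ne_zero h5)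
  obtain rfl := Units.ext (mul_left_cancel₀ s.ne_zero h6)
  rfl

lemma par1_exists {F : Type} [Field F] (a : Fin 3 → Fin 4 → F) (h1 : a 0 3 = 0) (h5 : a 1 2 = 0)
    (h12 : a 2 1 = 0) (h20 : a 0 0 ≠ 0) (h21 : a 1 0 ≠ 0) (h22 : a 2 0 ≠ 0) (h10 : a 0 1 ≠ 0)
    (h4 : a 0 2 ≠ 0) (h2 : a 1 3 ≠ 0) (h25 : a 1 0 * a 2 3 - a 1 3 * a 2 0 = 0)
    (h27 : a 0 0 * a 2 2 - a 0 2 * a 2 0 = 0) (h30 : a 0 0 * a 1 1 - a 0 1 * a 1 0 = 0) :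
    ∃ p, par1 p = a := by
  refine ⟨(Units.mk0 _ h20, Units.mk0 _ h21, Units.mk0 _ h22, Units.mk0 _ (div_ne_zero h10 h20),
    Units.mk0 _ (div_ne_zero h4 h20), Units.mk0 _ (div_ne_zero h2 h21)), ?_⟩
  funext i j
  fin_cases i <;> fin_cases j <;> simp [par1] <;>
    first | (symm; assumption) | (field_simp; done) | (field_simp; linear_combination -h25) |
      (field_simp; linear_combination -h27) | (field_simp; linear_combination -h30)

lemma par1_det {F : Type} [Field F] (p : Fˣ × Fˣ × Fˣ × Fˣ × Fˣ × Fˣ) :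
    (par1 p 0 1 * (par1 p 1 2 * par1 p 2 3 - par1 p 1 3 * par1 p 2 2)
      - par1 p 0 2 * (par1 p 1 1 * par1 p 2 3 - par1 p 1 3 * par1 p 2 1)
      + par1 p 0 3 * (par1 p 1 1 * par1 p 2 2 - par1 p 1 2 * par1 p 2 1) = 0) ↔ (2 : F) = 0 := by
  obtain ⟨r, s, t, x, y, z⟩ := p
  have e : par1 (r, s, t, x, y, z) 0 1 * (par1 (r, s, t, x, y, z) 1 2 * par1 (r, s, t, x, y, z) 2 3
      - par1 (r, s, t, x, y, z) 1 3 * par1 (r, s, t, x, y, z) 2 2)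
      - par1 (r, s, t, x, y, z) 0 2 * (par1 (r, s, t, x, y, z) 1 1 * par1 (r, s, t, x, y, z) 2 3
        - par1 (r, s, t, x, y, z) 1 3 * par1 (r, s, t, x, y, z) 2 1)
      + par1 (r, s, t, x, y, z) 0 3 * (par1 (r, s, t, x, y, z) 1 1 * par1 (r, s, t, x, y, z) 2 2
        - par1 (r, s, t, x, y, z) 1 2 * par1 (r, s, t, x, y, z) 2 1) =
      -((2 : F) * (r * s * t * x * y * z : Fˣ)) := by
    simp [par1]; ring
  rw [e, neg_eq_zero, mul_eq_zero]
  simp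

lemma par1_min {F : Type} [Field F] (p : Fˣ × Fˣ × Fˣ × Fˣ × Fˣ × Fˣ) :
    Min47 (inPl h1pl) (par1 p) ↔ (2 : F) ≠ 0 := by
  simp (decide := true) only [Min47, iff_true, iff_false, par1_det]
  obtain ⟨r, s, t, x, y, z⟩ := p
  constructor
  · tauto
  intro h2
  refine ⟨?_, ?_, ?_, ?_, ?_, ?_, ?_, ?_, ?_, ?_, ?_, ?_, ?_, ?_, ?_, ?_, ?_, ?_, ?_, ?_, ?_, ?_, ?_, ?_, ?_, ?_, ?_, ?_, ?_, ?_, ?_, ?_, ?_, ?_⟩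
  all_goals try simp [par1]
  all_goals try ring_nf
  all_goals try simp
  all_goals try exact h2

lemma par1_min2 {F : Type} [Field F] (p : Fˣ × Fˣ × Fˣ × Fˣ × Fˣ × Fˣ) :
    Min47 (inPl h2pl) (par1 p) ↔ (2 : F) = 0 := by
  simp (decide := true) only [Min47, iff_true, iff_false, par1_det]
  obtain ⟨r, s, t, x, y, z⟩ := p
  constructor
  · tauto
  intro h2
  refine ⟨?_, ?_, ?_, ?_, ?_, ?_, ?_, ?_, ?_, ?_, ?_, ?_, ?_, ?_, ?_, ?_, ?_, ?_, ?_, ?_, ?_, ?_, ?_, ?_, ?_, ?_, ?_, ?_, ?_, ?_, ?_, ?_, ?_, ?_⟩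
  all_goals try simp [par1]
  all_goals try ring_nf
  all_goals try simp
  all_goals try exact h2

lemma min_h1_par {F : Type} [Field F] (a : Fin 3 → Fin 4 → F) (h : Min47 (inPl h1pl) a) :
    ∃ p, par1 p = a := by
  simp (decide := true) only [Min47, iff_true, iff_false] at h
  obtain ⟨h1, h2, h3, h4, h5, h6, h7, h8, h9, h10, h11, h12, h13, h14, h15, h16, h17,
      h18, h19, h20, h21, h22, h23, h24, h25, h26, h27, h28, h29, h30, h31, h32, h33, h34⟩ := h
  exact par1_exists a h1 h5 h12 h20 h21 h22 h10 h4 h2 h25 h27 h30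

lemma min_h2_par {F : Type} [Field F] (a : Fin 3 → Fin 4 → F) (h : Min47 (inPl h2pl) a) :
    ∃ p, par1 p = a := by
  simp (decide := true) only [Min47, iff_true, iff_false] at h
  obtain ⟨h1, h2, h3, h4, h5, h6, h7, h8, h9, h10, h11, h12, h13, h14, h15, h16, h17,
      h18, h19, h20, h21, h22, h23, h24, h25, h26, h27, h28, h29, h30, h31, h32, h33, h34⟩ := h
  exact par1_exists a h1 h5 h12 h20 h21 h22 h10 h4 h2 h25 h27 h30

/-- Counting via a parametrization. -/
lemma card_of_par {α β : Type*} (P : β → Prop) (f : α → β) (hf : Function.Injective f)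
    (h : ∀ b, P b ↔ ∃ x, f x = b) : Nat.card {b // P b} = Nat.card α := by
  symm
  refine Nat.card_congr (Equiv.ofBijective (fun x => ⟨f x, (h _).2 ⟨x, rfl⟩⟩) ⟨?_, ?_⟩)
  · intro x y hxy
    exact hf (congrArg Subtype.val hxy)
  · rintro ⟨b, hb⟩
    obtain ⟨x, rfl⟩ := (h b).1 hb
    exact ⟨x, rfl⟩

lemma min_h1_card {F : Type} [Field F] [Fintype F] [DecidableEq F] :
    Nat.card {a : Fin 3 → Fin 4 → F // Min47 (inPl h1pl) a} =
      if (2 : F) = 0 then 0 else (Fintype.card F - 1) ^ 6 := by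
  split_ifs with h2
  · have : IsEmpty {a : Fin 3 → Fin 4 → F // Min47 (inPl h1pl) a} := by
      constructor
      rintro ⟨a, ha⟩
      obtain ⟨p, rfl⟩ := min_h1_par a ha
      exact (par1_min p).1 ha h2
    simp
  · rw [card_of_par _ par1 par1_inj]
    · simp only [Nat.card_prod, Nat.card_units]
      rw [Nat.card_eq_fintype_card]
      ring
    · intro a
      refine ⟨min_h1_par a, ?_⟩
      rintro ⟨p, rfl⟩
      exact (par1_min p).2 h2

lemma min_h2_card {F : Type} [Field F] [Fintype F] [DecidableEq F] :
    Nat.card {a : Fin 3 → Fin 4 → F // Min47 (inPl h2pl) a} =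
      if (2 : F) = 0 then (Fintype.card F - 1) ^ 6 else 0 := by
  split_ifs with h2
  · rw [card_of_par _ par1 par1_inj]
    · simp only [Nat.card_prod, Nat.card_units]
      rw [Nat.card_eq_fintype_card]
      ring
    · intro a
      refine ⟨min_h2_par a, ?_⟩
      rintro ⟨p, rfl⟩
      exact (par1_min2 p).2 h2
  · have : IsEmpty {a : Fin 3 → Fin 4 → F // Min47 (inPl h2pl) a} := by
      constructor
      rintro ⟨a, ha⟩
      obtain ⟨p, rfl⟩ := min_h2_par a ha
      exact h2 ((par1_min2 p).1 ha)
    simp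


lemma card_ne_two {F : Type} [Field F] [Fintype F] [DecidableEq F] (c : F) (hc : c ≠ 0) :
    Nat.card {m : F // m ≠ 0 ∧ m ≠ c} = Fintype.card F - 2 := by
  have : Nat.card {m : F // m ≠ 0 ∧ m ≠ c} = ({0, c} : Finset F)ᶜ.card := by
    rw [Nat.card_eq_fintype_card, Fintype.card_subtype]
    congr 1
    ext m
    simp
  rw [this, Finset.card_compl, Finset.card_pair hc.symm]

/-- Parametrization of `h₃`. -/
def par3 {F : Type} [Field F] (p : Fˣ × Fˣ × Fˣ × Fˣ × Fˣ × Fˣ × {m : F // m ≠ 0 ∧ m ≠ -1}) :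
    Fin 3 → Fin 4 → F :=
  match p with
  | (r, s, t, u, w, z, m) =>
    ![![r * u, r, r * w, 0],
      ![s * u * m, -s, 0, s * z],
      ![t * u * (1 + m), 0, t * w, t * z]]

lemma par3_inj {F : Type} [Field F] : Function.Injective (par3 (F := F)) := by
  rintro ⟨r, s, t, u, w, z, m, hm⟩ ⟨r', s', t', u', w', z', m', hm'⟩ h
  have h1 : (r : F) = r' := congrFun (congrFun h 0) 1
  have h2 : -(s : F) = -s' := congrFun (congrFun h 1) 1
  have h3 : (r : F) * u = r' * u' := congrFun (congrFun h 0) 0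
  have h4 : (r : F) * w = r' * w' := congrFun (congrFun h 0) 2
  have h5 : (s : F) * z = s' * z' := congrFun (congrFun h 1) 3
  have h6 : (t : F) * w = t' * w' := congrFun (congrFun h 2) 2
  have h7 : (s : F) * u * m = s' * u' * m' := congrFun (congrFun h 1) 0
  obtain rfl := Units.ext h1
  obtain rfl := Units.ext (neg_injective h2)
  obtain rfl := Units.ext (mul_left_cancel₀ r.ne_zero h3)
  obtain rfl := Units.ext (mul_left_cancel₀ r.ne_zero h4)
  obtain rfl := Units.ext (mul_left_cancel₀ s.ne_zero h5)
  obtain rfl := Units.ext (mul_right_cancel₀ w.ne_zero h6)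
  obtain rfl := mul_left_cancel₀ (mul_ne_zero s.ne_zero u.ne_zero) h7
  rfl

lemma par3_exists {F : Type} [Field F] (a : Fin 3 → Fin 4 → F) (h1 : a 0 3 = 0) (h5 : a 1 2 = 0)
    (h12 : a 2 1 = 0) (h20 : a 0 0 ≠ 0) (h21 : a 1 0 ≠ 0) (h22 : a 2 0 ≠ 0) (h10 : a 0 1 ≠ 0)
    (h11 : a 1 1 ≠ 0) (h6 : a 2 2 ≠ 0)
    (h4 : a 0 2 ≠ 0) (h2 : a 1 3 ≠ 0)
    (h19 : a 0 1 * (a 1 2 * a 2 3 - a 1 3 * a 2 2) - a 0 2 * (a 1 1 * a 2 3 - a 1 3 * a 2 1)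
      + a 0 3 * (a 1 1 * a 2 2 - a 1 2 * a 2 1) = 0)
    (h34 : a 0 0 * (a 1 1 * a 2 2 - a 1 2 * a 2 1) - a 0 1 * (a 1 0 * a 2 2 - a 1 2 * a 2 0)
      + a 0 2 * (a 1 0 * a 2 1 - a 1 1 * a 2 0) = 0) :
    ∃ p, par3 p = a := by
  rw [h1, h5, h12] at h19
  rw [h5, h12] at h34
  have hm : a 0 1 * a 1 0 ≠ a 1 1 * a 0 0 := by
    intro h
    apply mul_ne_zero (mul_ne_zero h4 h11) h22
    linear_combination -h34 - a 2 2 * h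
  have hm1 : -(a 0 1 * a 1 0) / (a 1 1 * a 0 0) ≠ 0 :=
    div_ne_zero (neg_ne_zero.2 (mul_ne_zero h10 h21)) (mul_ne_zero h11 h20)
  have hm2 : -(a 0 1 * a 1 0) / (a 1 1 * a 0 0) ≠ -1 := by
    intro h
    apply hm
    rw [div_eq_iff (mul_ne_zero h11 h20)] at h
    linear_combination -h
  refine ⟨(Units.mk0 _ h10, Units.mk0 _ (neg_ne_zero.2 h11),
    Units.mk0 _ (div_ne_zero (mul_ne_zero h6 h10) h4), Units.mk0 _ (div_ne_zero h20 h10),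
    Units.mk0 _ (div_ne_zero h4 h10), Units.mk0 _ (div_ne_zero h2 (neg_ne_zero.2 h11)),
    ⟨_, hm1, hm2⟩), ?_⟩
  funext i j
  fin_cases i <;> fin_cases j <;> simp [par3] <;>
    first | (symm; assumption) | (field_simp; done) | (field_simp; linear_combination h19) |
      (field_simp; linear_combination -h19) | (field_simp; linear_combination h34) |
      (field_simp; linear_combination -h34)

lemma par3_min {F : Type} [Field F]
    (p : Fˣ × Fˣ × Fˣ × Fˣ × Fˣ × Fˣ × {m : F // m ≠ 0 ∧ m ≠ -1}) :
    Min47 (inPl h3pl) (par3 p) := by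
  simp (decide := true) only [Min47, iff_true, iff_false]
  obtain ⟨r, s, t, u, w, z, m, hm0, hm1⟩ := p
  have hm2 : 1 + m ≠ 0 := fun h => hm1 (by linear_combination h)
  have h1 : (r : F) * u * s + r * (s * u * m) ≠ 0 := by
    have : (r : F) * u * s + r * (s * u * m) = (r * u * s : Fˣ) * (1 + m) := by push_cast; ring
    rw [this]
    exact mul_ne_zero (Units.ne_zero _) hm2
  refine ⟨?_, ?_, ?_, ?_, ?_, ?_, ?_, ?_, ?_, ?_, ?_, ?_, ?_, ?_, ?_, ?_, ?_, ?_, ?_, ?_, ?_, ?_, ?_, ?_, ?_, ?_, ?_, ?_, ?_, ?_, ?_, ?_, ?_, ?_⟩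
  all_goals try simp [par3, hm0, hm2]
  all_goals try (ring_nf; done)
  · intro h
    apply (s * t * u * z).ne_zero
    push_cast
    linear_combination -h
  · intro h
    apply mul_ne_zero (r * t * u * w).ne_zero hm0
    push_cast
    linear_combination -h
  · intro h
    apply h1
    linear_combination -h

lemma min_h3_card {F : Type} [Field F] [Fintype F] [DecidableEq F] :
    Nat.card {a : Fin 3 → Fin 4 → F // Min47 (inPl h3pl) a} =
      (Fintype.card F - 1) ^ 6 * (Fintype.card F - 2) := by
  rw [card_of_par _ par3 par3_inj]
  · simp only [Nat.card_prod, Nat.card_units]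
    rw [card_ne_two _ (neg_ne_zero.2 one_ne_zero), Nat.card_eq_fintype_card]
    ring
  · intro a
    constructor
    · intro h
      simp (decide := true) only [Min47, iff_true, iff_false] at h
      obtain ⟨h1, h2, h3, h4, h5, h6, h7, h8, h9, h10, h11, h12, h13, h14, h15, h16, h17,
      h18, h19, h20, h21, h22, h23, h24, h25, h26, h27, h28, h29, h30, h31, h32, h33, h34⟩ := h
      exact par3_exists a h1 h5 h12 h20 h21 h22 h10 h11 h6 h4 h2 h19 h34
    · rintro ⟨p, rfl⟩
      exact par3_min p

/-- Parametrization of `h₅`. -/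
def par5 {F : Type} [Field F] (p : Fˣ × Fˣ × Fˣ × Fˣ × Fˣ × {m : F // m ≠ 0 ∧ m ≠ 1}) :
    Fin 3 → Fin 4 → F :=
  match p with
  | (r, s, t, u, x, m) => ![![r, r * x, 0, 0], ![s, s * x * m, 0, 0], ![0, 0, t, u]]

lemma par5_inj {F : Type} [Field F] : Function.Injective (par5 (F := F)) := by
  rintro ⟨r, s, t, u, x, m, hm⟩ ⟨r', s', t', u', x', m', hm'⟩ h
  have h1 : (r : F) = r' := congrFun (congrFun h 0) 0
  have h2 : (s : F) = s' := congrFun (congrFun h 1) 0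
  have h3 : (t : F) = t' := congrFun (congrFun h 2) 2
  have h4 : (u : F) = u' := congrFun (congrFun h 2) 3
  have h5 : (r : F) * x = r' * x' := congrFun (congrFun h 0) 1
  have h7 : (s : F) * x * m = s' * x' * m' := congrFun (congrFun h 1) 1
  obtain rfl := Units.ext h1
  obtain rfl := Units.ext h2
  obtain rfl := Units.ext h3
  obtain rfl := Units.ext h4
  obtain rfl := Units.ext (mul_left_cancel₀ r.ne_zero h5)
  obtain rfl := mul_left_cancel₀ (mul_ne_zero s.ne_zero x.ne_zero) h7
  rfl

lemma par5_min {F : Type} [Field F]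
    (p : Fˣ × Fˣ × Fˣ × Fˣ × Fˣ × {m : F // m ≠ 0 ∧ m ≠ 1}) :
    Min47 (inPl h5pl) (par5 p) := by
  simp (decide := true) only [Min47, iff_true, iff_false]
  obtain ⟨r, s, t, u, x, m, hm0, hm1⟩ := p
  have h1 : (r : F) * (s * x * m) - r * x * s ≠ 0 := by
    have : (r : F) * (s * x * m) - r * x * s = (r * s * x : Fˣ) * (m - 1) := by push_cast; ring
    rw [this]
    exact mul_ne_zero (Units.ne_zero _) (sub_ne_zero.2 hm1)
  refine ⟨?_, ?_, ?_, ?_, ?_, ?_, ?_, ?_, ?_, ?_, ?_, ?_, ?_, ?_, ?_, ?_, ?_, ?_, ?_, ?_, ?_, ?_, ?_, ?_, ?_, ?_, ?_, ?_, ?_, ?_, ?_, ?_, ?_, ?_⟩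
  all_goals try simp [par5, hm0]
  all_goals try (ring_nf; done)
  · exact h1
  · intro h
    apply mul_ne_zero h1 u.ne_zero
    linear_combination h
  · intro h
    apply mul_ne_zero h1 t.ne_zero
    linear_combination h

lemma min_h5_card {F : Type} [Field F] [Fintype F] [DecidableEq F] :
    Nat.card {a : Fin 3 → Fin 4 → F // Min47 (inPl h5pl) a} =
      (Fintype.card F - 1) ^ 5 * (Fintype.card F - 2) := by
  rw [card_of_par _ par5 par5_inj]
  · simp only [Nat.card_prod, Nat.card_units]
    rw [card_ne_two _ one_ne_zero, Nat.card_eq_fintype_card]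
    ring
  · intro a
    constructor
    · intro h
      simp (decide := true) only [Min47, iff_true, iff_false] at h
      obtain ⟨h1, h2, h3, h4, h5, h6, h7, h8, h9, h10, h11, h12, h13, h14, h15, h16, h17,
      h18, h19, h20, h21, h22, h23, h24, h25, h26, h27, h28, h29, h30, h31, h32, h33, h34⟩ := h
      have hm1 : (a 1 1 * a 0 0) / (a 0 1 * a 1 0) ≠ 0 :=
        div_ne_zero (mul_ne_zero h11 h20) (mul_ne_zero h10 h21)
      have hm2 : (a 1 1 * a 0 0) / (a 0 1 * a 1 0) ≠ 1 := by
        intro h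
        apply h30
        rw [div_eq_iff (mul_ne_zero h10 h21)] at h
        linear_combination h
      refine ⟨(Units.mk0 _ h20, Units.mk0 _ h21, Units.mk0 _ h6, Units.mk0 _ h3,
        Units.mk0 _ (div_ne_zero h10 h20), ⟨_, hm1, hm2⟩), ?_⟩
      funext i j
      fin_cases i <;> fin_cases j <;> simp [par5] <;>
        first | (symm; assumption) | (field_simp; done)
    · rintro ⟨p, rfl⟩
      exact par5_min p

/-- Parametrization of the six point configuration. -/
def par6 {F : Type} [Field F] (p : Fˣ × Fˣ × Fˣ × Fˣ) :
    Fin 2 → Fin 4 → F :=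
  match p with
  | (r, s, t, u) => ![![r, s, 0, 0], ![0, 0, t, u]]

lemma par6_inj {F : Type} [Field F] : Function.Injective (par6 (F := F)) := by
  rintro ⟨r, s, t, u⟩ ⟨r', s', t', u'⟩ h
  have h1 : (r : F) = r' := congrFun (congrFun h 0) 0
  have h2 : (s : F) = s' := congrFun (congrFun h 0) 1
  have h3 : (t : F) = t' := congrFun (congrFun h 1) 2
  have h4 : (u : F) = u' := congrFun (congrFun h 1) 3
  obtain rfl := Units.ext h1
  obtain rfl := Units.ext h2
  obtain rfl := Units.ext h3
  obtain rfl := Units.ext h4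
  rfl

lemma min_hyp6_card {F : Type} [Field F] [Fintype F] [DecidableEq F] :
    Nat.card {a : Fin 2 → Fin 4 → F // Min46 (· ∈ hyp6pl) a} = (Fintype.card F - 1) ^ 4 := by
  rw [card_of_par _ par6 par6_inj]
  · simp only [Nat.card_prod, Nat.card_units]
    rw [Nat.card_eq_fintype_card]
    ring
  · intro a
    simp (decide := true) only [Min46, iff_true, iff_false]
    constructor
    · rintro ⟨h1, h2, h3, h4, h5, h6, h7, h8, h9, h10, h11, h12, h13, h14⟩
      refine ⟨(Units.mk0 _ h10, Units.mk0 _ h6, Units.mk0 _ h4, Units.mk0 _ h2), ?_⟩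
      funext i j
      fin_cases i <;> fin_cases j <;> simp [par6] <;> (symm; assumption)
    · rintro ⟨⟨r, s, t, u⟩, rfl⟩
      refine ⟨?_, ?_, ?_, ?_, ?_, ?_, ?_, ?_, ?_, ?_, ?_, ?_, ?_, ?_⟩
      all_goals simp [par6]

lemma h1_pts {F : Type} [Field F] [Fintype F] [DecidableEq F] :
    Nat.card {σ // IsConfigReal F h1planes ∅ σ} * (Fintype.card F - 1) ^ 7 =
      Nat.card (GL (Fin 4) F) * if (2 : F) = 0 then 0 else (Fintype.card F - 1) ^ 6 := by
  rw [← h1_card, ← min_h1_card, ← card_frame47 _ (by decide)]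
  exact vstrong_reindex _ _ (Equiv.ofBijective ![0, 1, 2, 4, 3, 5, 6] (by decide)) (by decide +kernel)

lemma h2_pts {F : Type} [Field F] [Fintype F] [DecidableEq F] :
    Nat.card {σ // IsConfigReal F h2planes ∅ σ} * (Fintype.card F - 1) ^ 7 =
      Nat.card (GL (Fin 4) F) * if (2 : F) = 0 then (Fintype.card F - 1) ^ 6 else 0 := by
  rw [← h2_card, ← min_h2_card, ← card_frame47 _ (by decide)]
  exact vstrong_reindex _ _ (Equiv.ofBijective ![0, 1, 2, 4, 3, 5, 6] (by decide)) (by decide +kernel)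

lemma h3_pts {F : Type} [Field F] [Fintype F] [DecidableEq F] :
    Nat.card {σ // IsConfigReal F h3planes h3lines σ} * (Fintype.card F - 1) ^ 7 =
      Nat.card (GL (Fin 4) F) * ((Fintype.card F - 1) ^ 6 * (Fintype.card F - 2)) := by
  rw [← h3_card, ← min_h3_card, ← card_frame47 _ (by decide)]
  exact vstrong_reindex _ _ (Equiv.ofBijective ![3, 4, 5, 6, 0, 1, 2] (by decide)) (by decide +kernel)

lemma h5_pts {F : Type} [Field F] [Fintype F] [DecidableEq F] :
    Nat.card {σ // IsConfigReal F h5planes h5lines σ} * (Fintype.card F - 1) ^ 7 =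
      Nat.card (GL (Fin 4) F) * ((Fintype.card F - 1) ^ 5 * (Fintype.card F - 2)) := by
  rw [← h5_card, ← min_h5_card, ← card_frame47 _ (by decide)]
  exact vstrong_reindex _ _ (Equiv.ofBijective ![0, 1, 4, 5, 2, 3, 6] (by decide)) (by decide +kernel)

lemma hyp6_pts {F : Type} [Field F] [Fintype F] [DecidableEq F] :
    Nat.card {σ // IsHyp6Real F σ} * (Fintype.card F - 1) ^ 6 =
      Nat.card (GL (Fin 4) F) * (Fintype.card F - 1) ^ 4 := by
  rw [← hyp6_card, ← min_hyp6_card, ← card_frame46 _ (by decide)]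
  exact vstrong_reindex _ _ (Equiv.ofBijective ![0, 1, 3, 4, 2, 5] (by decide)) (by decide +kernel)


/-- Explicit three by three determinant. -/
def d3 {F : Type} [Field F] (x y z : Fin 3 → F) : F :=
  x 0 * (y 1 * z 2 - y 2 * z 1) - x 1 * (y 0 * z 2 - y 2 * z 0)
    + x 2 * (y 0 * z 1 - y 1 * z 0)

lemma d3_add_smul {F : Type} [Field F] (x y z t : Fin 3 → F) (a b : F) :
    d3 x y (a • z + b • t) = a * d3 x y z + b * d3 x y t := by
  simp [d3]; ring

lemma d3_add_smul₂ {F : Type} [Field F] (x z t w : Fin 3 → F) (a b : F) :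
    d3 x (a • z + b • t) w = a * d3 x z w + b * d3 x t w := by
  simp [d3]; ring

lemma d3_smul {F : Type} [Field F] (x y z : Fin 3 → F) (a : F) :
    d3 x y (a • z) = a * d3 x y z := by
  simp [d3]; ring

lemma d3_zero {F : Type} [Field F] (x y : Fin 3 → F) : d3 x y 0 = 0 := by simp [d3]

lemma d3_swap12 {F : Type} [Field F] (x y z : Fin 3 → F) : d3 y x z = - d3 x y z := by
  simp [d3]; ring

lemma d3_swap23 {F : Type} [Field F] (x y z : Fin 3 → F) : d3 x z y = - d3 x y z := by
  simp [d3]; ring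

lemma d3_self {F : Type} [Field F] (x y : Fin 3 → F) : d3 x y x = 0 := by
  simp [d3]; ring

lemma d3_self' {F : Type} [Field F] (x y : Fin 3 → F) : d3 x y y = 0 := by
  simp [d3]; ring

lemma d3_self12 {F : Type} [Field F] (x y : Fin 3 → F) : d3 x x y = 0 := by
  simp [d3]; ring

/-- Cramer's rule. -/
lemma d3_cramer {F : Type} [Field F] (x y z w : Fin 3 → F) :
    d3 x y z • w = d3 w y z • x + d3 x w z • y + d3 x y w • z := by
  funext i
  fin_cases i <;> simp [d3] <;> ring

/-- A tuple of vectors no three of which are dependent. -/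
def Arc3 {F : Type} [Field F] {k : ℕ} (v : Fin k → Fin 3 → F) : Prop :=
  ∀ x y z : Fin k, x < y → y < z → d3 (v x) (v y) (v z) ≠ 0

lemma Arc3.ne {F : Type} [Field F] {k : ℕ} {v : Fin k → Fin 3 → F} (hv : Arc3 v) {x y z : Fin k}
    (hxy : x ≠ y) (hxz : x ≠ z) (hyz : y ≠ z) : d3 (v x) (v y) (v z) ≠ 0 := by
  rcases lt_or_gt_of_ne hxy with h1 | h1 <;> rcases lt_or_gt_of_ne hyz with h2 | h2 <;>
    rcases lt_or_gt_of_ne hxz with h3 | h3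
  · exact hv _ _ _ h1 h2
  · exact absurd (h1.trans h2) (not_lt.2 h3.le)
  · rw [d3_swap23, neg_ne_zero]
    exact hv _ _ _ h3 h2
  · rw [d3_swap23, d3_swap12, neg_neg]
    exact hv _ _ _ h3 h1
  · rw [d3_swap12, neg_ne_zero]
    exact hv _ _ _ h1 h3
  · rw [d3_swap12, d3_swap23, neg_neg]
    exact hv _ _ _ h2 h3
  · exact absurd (h2.trans h1) (not_lt.2 h3.le)
  · rw [d3_swap12, d3_swap23, d3_swap12, neg_neg, neg_ne_zero]
    exact hv _ _ _ h2 h1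

/-- Vectors which are not multiples of the given ones. -/
def Wset {F : Type} [Field F] {k : ℕ} (v : Fin k → Fin 3 → F) (w : Fin 3 → F) : Prop :=
  ∀ i (c : F), w ≠ c • v i

lemma exists_third {k : ℕ} (hk : 3 ≤ k) (i j : Fin k) : ∃ l, l ≠ i ∧ l ≠ j := by
  have h : ({i, j} : Finset (Fin k)).card < (Finset.univ : Finset (Fin k)).card := by
    have := Finset.card_le_two (a := i) (b := j)
    simp
    omega
  obtain ⟨l, _, hl⟩ := Finset.exists_mem_notMem_of_card_lt_card h
  exact ⟨l, by simpa using hl⟩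

lemma Arc3.indep {F : Type} [Field F] {k : ℕ} (hk : 3 ≤ k) {v : Fin k → Fin 3 → F} (hv : Arc3 v)
    {i j : Fin k} (hij : i ≠ j) {a b : F} (h : a • v i + b • v j = 0) : a = 0 ∧ b = 0 := by
  obtain ⟨l, hli, hlj⟩ := exists_third hk i j
  have h1 := d3_add_smul (v l) (v i) (v i) (v j) a b
  have h2 := d3_add_smul (v l) (v j) (v i) (v j) a b
  rw [h, d3_zero, d3_self', mul_zero, zero_add] at h1
  rw [h, d3_zero, d3_self', mul_zero, add_zero] at h2
  constructor
  · exact (mul_eq_zero.1 h2.symm).resolve_right (hv.ne hlj hli hij.symm)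
  · exact (mul_eq_zero.1 h1.symm).resolve_right (hv.ne hli hlj hij)

lemma Arc3.ne_zero {F : Type} [Field F] {k : ℕ} (hk : 3 ≤ k) {v : Fin k → Fin 3 → F} (hv : Arc3 v)
    (i : Fin k) : v i ≠ 0 := by
  intro h
  obtain ⟨j, hj, _⟩ := exists_third hk i i
  have := (hv.indep hk (i := i) (j := j) hj.symm (a := 1) (b := 0) (by simp [h])).1
  exact one_ne_zero this

lemma Wset.of_add {F : Type} [Field F] {k : ℕ} (hk : 3 ≤ k) {v : Fin k → Fin 3 → F} (hv : Arc3 v)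
    {i j : Fin k} (hij : i ≠ j) {a b : F} (ha : a ≠ 0) (hb : b ≠ 0) :
    Wset v (a • v i + b • v j) := by
  intro l c h
  by_cases hi : l = i
  · subst hi
    have : (a - c) • v l + b • v j = 0 := by
      rw [sub_smul, sub_add_eq_add_sub, h, sub_self]
    exact hb (hv.indep hk hij this).2
  by_cases hj : l = j
  · subst hj
    have : a • v i + (b - c) • v l = 0 := by
      rw [sub_smul, add_sub, h, sub_self]
    exact ha (hv.indep hk hij this).1
  by_cases hc : c = 0
  · rw [hc, zero_smul] at h
    exact ha (hv.indep hk hij h).1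
  · have h1 := d3_add_smul (v i) (v j) (v i) (v j) a b
    rw [h, d3_smul, d3_self, d3_self', mul_zero, mul_zero, add_zero] at h1
    exact mul_ne_zero hc (hv.ne hij (Ne.symm hi) (Ne.symm hj)) h1

lemma wset_line {F : Type} [Field F] {k : ℕ} (hk : 3 ≤ k) {v : Fin k → Fin 3 → F} (hv : Arc3 v)
    {i j : Fin k} (hij : i ≠ j) (w : Fin 3 → F) :
    (Wset v w ∧ d3 (v i) (v j) w = 0) ↔ ∃ p : Fˣ × Fˣ, (p.1 : F) • v i + (p.2 : F) • v j = w := by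
  constructor
  · rintro ⟨hw, h0⟩
    obtain ⟨l, hli, hlj⟩ := exists_third hk i j
    have hd := hv.ne hij hli.symm hlj.symm
    have hc := d3_cramer (v i) (v j) (v l) w
    rw [h0, zero_smul, add_zero] at hc
    have e : w = (d3 w (v j) (v l) / d3 (v i) (v j) (v l)) • v i +
        (d3 (v i) w (v l) / d3 (v i) (v j) (v l)) • v j := by
      rw [div_eq_inv_mul, div_eq_inv_mul, mul_smul, mul_smul, ← smul_add, ← hc, smul_smul,
        inv_mul_cancel₀ hd, one_smul]
    generalize d3 w (v j) (v l) / d3 (v i) (v j) (v l) = a at e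
    generalize d3 (v i) w (v l) / d3 (v i) (v j) (v l) = b at e
    have ha : a ≠ 0 := by
      rintro rfl
      exact hw j b (by rw [e, zero_smul, zero_add])
    have hb : b ≠ 0 := by
      rintro rfl
      exact hw i a (by rw [e, zero_smul, add_zero])
    exact ⟨(Units.mk0 a ha, Units.mk0 b hb), e.symm⟩
  · rintro ⟨⟨a, b⟩, rfl⟩
    refine ⟨Wset.of_add hk hv hij a.ne_zero b.ne_zero, ?_⟩
    rw [d3_add_smul, d3_self, d3_self']
    simp

lemma card_line {F : Type} [Field F] [Fintype F] {k : ℕ} (hk : 3 ≤ k) {v : Fin k → Fin 3 → F}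
    (hv : Arc3 v) {i j : Fin k} (hij : i ≠ j) :
    Nat.card {w // Wset v w ∧ d3 (v i) (v j) w = 0} = (Fintype.card F - 1) ^ 2 := by
  rw [card_of_par _ _ ?_ (wset_line hk hv hij)]
  · simp only [Nat.card_prod, Nat.card_units]
    rw [Nat.card_eq_fintype_card]
    ring
  · rintro ⟨a, b⟩ ⟨a', b'⟩ h
    have h' : ((a : F) - a') • v i + ((b : F) - b') • v j = 0 := by
      have h'' : (a : F) • v i + (b : F) • v j = (a' : F) • v i + (b' : F) • v j := h
      rw [sub_smul, sub_smul, sub_add_sub_comm, h'', sub_self]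
    obtain ⟨h1, h2⟩ := hv.indep hk hij h'
    rw [Units.ext (sub_eq_zero.1 h1), Units.ext (sub_eq_zero.1 h2)]

lemma card_point {F : Type} [Field F] [Fintype F] {k : ℕ} (hk : 3 ≤ k) {v : Fin k → Fin 3 → F}
    (hv : Arc3 v) {a b c d : Fin k} (hab : a ≠ b) (hcd : c ≠ d) (hac : a ≠ c) (had : a ≠ d)
    (hbc : b ≠ c) (hbd : b ≠ d) :
    Nat.card {w // Wset v w ∧ d3 (v a) (v b) w = 0 ∧ d3 (v c) (v d) w = 0} =
      Fintype.card F - 1 := by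
  have h1 := hv.ne hab hac hbc
  have h2 := hv.ne hab had hbd
  rw [card_of_par _ (fun g : Fˣ => ((g : F) * d3 (v a) (v b) (v d)) • v c +
    (-(g * d3 (v a) (v b) (v c)) : F) • v d)]
  · rw [Nat.card_units, Nat.card_eq_fintype_card]
  · intro g g' h
    have h' : ((g : F) * d3 (v a) (v b) (v d)) • v c + (-(g * d3 (v a) (v b) (v c)) : F) • v d =
      ((g' : F) * d3 (v a) (v b) (v d)) • v c + (-(g' * d3 (v a) (v b) (v c)) : F) • v d := h
    have h'' : ((g : F) * d3 (v a) (v b) (v d) - (g' : F) * d3 (v a) (v b) (v d)) • v c +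
      (-(g * d3 (v a) (v b) (v c)) - -(g' * d3 (v a) (v b) (v c)) : F) • v d = 0 := by
      rw [sub_smul, sub_smul, sub_add_sub_comm, h', sub_self]
    have := (hv.indep hk hcd h'').1
    exact Units.ext (mul_right_cancel₀ h2 (sub_eq_zero.1 this))
  · intro w
    constructor
    · rintro ⟨hw, h3, h4⟩
      obtain ⟨⟨x, y⟩, rfl⟩ := (wset_line hk hv hcd w).1 ⟨hw, h4⟩
      rw [d3_add_smul] at h3
      refine ⟨Units.mk0 _ (div_ne_zero x.ne_zero h2), ?_⟩
      have e1 : (x : F) / d3 (v a) (v b) (v d) * d3 (v a) (v b) (v d) = x := by field_simp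
      have e2 : -((x : F) / d3 (v a) (v b) (v d) * d3 (v a) (v b) (v c)) = y := by
        field_simp
        linear_combination -h3
      simp only [Units.val_mk0, e1, e2]
    · rintro ⟨g, rfl⟩
      have := (wset_line hk hv hcd _).2 ⟨(g * Units.mk0 _ h2, -(g * Units.mk0 _ h1)), rfl⟩
      simp only [Units.val_mul, Units.val_neg, Units.val_mk0] at this
      refine ⟨this.1, ?_, this.2⟩
      rw [d3_add_smul]
      ring

/-- Two of the lines through a point of the configuration meet only there. -/
lemma wset_disj_aux {F : Type} [Field F] {k : ℕ} {v : Fin k → Fin 3 → F} (hv : Arc3 v)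
    {a b c : Fin k} (hab : a ≠ b) (hac : a ≠ c) (hbc : b ≠ c) {w : Fin 3 → F} (hw : Wset v w)
    (h1 : d3 (v a) (v b) w = 0) (h2 : d3 (v a) (v c) w = 0) : False := by
  have hd := hv.ne hab hac hbc
  have hc := d3_cramer (v a) (v b) (v c) w
  rw [d3_swap23 (v a) (v c) w, h2, h1, neg_zero, zero_smul, zero_smul, add_zero, add_zero] at hc
  apply hw a (d3 w (v b) (v c) / d3 (v a) (v b) (v c))
  rw [div_eq_inv_mul, mul_smul, ← hc, smul_smul, inv_mul_cancel₀ hd, one_smul]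

lemma wset_disj {F : Type} [Field F] {k : ℕ} {v : Fin k → Fin 3 → F} (hv : Arc3 v)
    {p r : Fin k × Fin k} (hp : p.1 < p.2) (hr : r.1 < r.2) (hpr : p ≠ r) {w : Fin 3 → F}
    (hw : Wset v w) (h1 : d3 (v p.1) (v p.2) w = 0) (h2 : d3 (v r.1) (v r.2) w = 0) :
    p.1 ≠ r.1 ∧ p.1 ≠ r.2 ∧ p.2 ≠ r.1 ∧ p.2 ≠ r.2 := by
  obtain ⟨a, b⟩ := p
  obtain ⟨c, d⟩ := r
  simp only at *
  have h1' : d3 (v b) (v a) w = 0 := by rw [d3_swap12, h1, neg_zero]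
  have h2' : d3 (v d) (v c) w = 0 := by rw [d3_swap12, h2, neg_zero]
  refine ⟨?_, ?_, ?_, ?_⟩
  · rintro rfl
    exact wset_disj_aux hv hp.ne hr.ne (fun h => hpr (by rw [h])) hw h1 h2
  · rintro rfl
    exact wset_disj_aux hv hp.ne hr.ne' (fun h => by subst h; exact lt_asymm hp hr) hw h1 h2'
  · rintro rfl
    exact wset_disj_aux hv hp.ne' hr.ne (fun h => by subst h; exact lt_asymm hp hr) hw h1' h2
  · rintro rfl
    exact wset_disj_aux hv hp.ne' hr.ne' (fun h => hpr (by rw [h])) hw h1' h2'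

lemma card_wset {F : Type} [Field F] [Fintype F] {k : ℕ} (hk : 3 ≤ k) {v : Fin k → Fin 3 → F}
    (hv : Arc3 v) :
    (Nat.card {w // Wset v w} : ℤ) =
      (Fintype.card F : ℤ) ^ 3 - 1 - k * ((Fintype.card F : ℤ) - 1) := by
  classical
  have h1 : Nat.card {w // ¬ Wset v w} = Nat.card (Option (Fin k × Fˣ)) := by
    refine card_of_par _ (fun o => match o with
      | none => 0
      | some p => (p.2 : F) • v p.1) ?_ ?_
    · rintro (_ | ⟨i, c⟩) (_ | ⟨j, d⟩) h
      · rfl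
      · exact absurd h.symm (smul_ne_zero d.ne_zero (hv.ne_zero hk j))
      · exact absurd h (smul_ne_zero c.ne_zero (hv.ne_zero hk i))
      · have h' : (c : F) • v i = (d : F) • v j := h
        by_cases hij : i = j
        · subst hij
          rw [Units.ext (smul_left_injective F (hv.ne_zero hk i) h')]
        · exfalso
          have := (hv.indep hk hij (a := c) (b := -d) (by rw [h', neg_smul, add_neg_cancel])).1
          exact c.ne_zero this
    · intro w
      unfold Wset
      push Not
      constructor
      · rintro ⟨i, c, rfl⟩
        by_cases hc : c = 0
        · exact ⟨none, by simp [hc]⟩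
        · exact ⟨some (i, Units.mk0 c hc), rfl⟩
      · rintro ⟨_ | ⟨i, c⟩, rfl⟩
        · exact ⟨⟨0, by omega⟩, 0, by simp⟩
        · exact ⟨i, c, rfl⟩
  have h2 : Nat.card {w // Wset v w} + Nat.card {w // ¬ Wset v w} = Fintype.card F ^ 3 := by
    rw [← Nat.card_sum, Nat.card_congr (Equiv.sumCompl _)]
    simp
  have hq : 1 ≤ Fintype.card F := Fintype.card_pos
  rw [h1] at h2
  simp only [Finite.card_option, Nat.card_prod, Nat.card_units, Nat.card_fin] at h2
  rw [Nat.card_eq_fintype_card (α := F)] at h2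
  have h3 := congrArg (Nat.cast : ℕ → ℤ) h2
  push_cast [Nat.cast_sub hq] at h3
  linear_combination h3


/-- Sorted pairs. -/
def Edg (k : ℕ) : Finset (Fin k × Fin k) := Finset.univ.filter fun p => p.1 < p.2

/-- Disjointness of pairs. -/
def Dsj {k : ℕ} (p r : Fin k × Fin k) : Prop :=
  p.1 ≠ r.1 ∧ p.1 ≠ r.2 ∧ p.2 ≠ r.1 ∧ p.2 ≠ r.2

instance {k : ℕ} (p r : Fin k × Fin k) : Decidable (Dsj p r) := by unfold Dsj; infer_instance

/-- Sets of pairwise disjoint pairs. -/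
def Mtc {k : ℕ} (T : Finset (Fin k × Fin k)) : Prop := ∀ p ∈ T, ∀ r ∈ T, p ≠ r → Dsj p r

instance {k : ℕ} (T : Finset (Fin k × Fin k)) : Decidable (Mtc T) := by unfold Mtc; infer_instance

/-- Number of points on all lines spanned by the pairs in `T`. -/
noncomputable def cnt {F : Type} [Field F] {k : ℕ} (v : Fin k → Fin 3 → F)
    (T : Finset (Fin k × Fin k)) : ℕ :=
  Nat.card {w // Wset v w ∧ ∀ p ∈ T, d3 (v p.1) (v p.2) w = 0}

lemma wset_of_good {F : Type} [Field F] {k : ℕ} (hk : 3 ≤ k) {v : Fin k → Fin 3 → F}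
    {w : Fin 3 → F} (h : ∀ p ∈ Edg k, d3 (v p.1) (v p.2) w ≠ 0) : Wset v w := by
  rintro i c rfl
  obtain ⟨j, hj, _⟩ := exists_third hk i i
  rcases lt_or_gt_of_ne hj with h1 | h1
  · refine h (j, i) (by simpa [Edg] using h1) ?_
    simp only [d3_smul, d3_self', mul_zero]
  · refine h (i, j) (by simpa [Edg] using h1) ?_
    simp only [d3_smul, d3_self, mul_zero]

lemma good_eq_sum {F : Type} [Field F] [Fintype F] {k : ℕ} (hk : 3 ≤ k)
    (v : Fin k → Fin 3 → F) :
    (Nat.card {w // ∀ p ∈ Edg k, d3 (v p.1) (v p.2) w ≠ 0} : ℤ) =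
      ∑ T ∈ (Edg k).powerset, (-1 : ℤ) ^ T.card * cnt v T := by
  classical
  have hc : ∀ T, (cnt v T : ℤ) = ∑ w ∈ Finset.univ.filter (Wset v),
      if ∀ p ∈ T, d3 (v p.1) (v p.2) w = 0 then (1 : ℤ) else 0 := by
    intro T
    unfold cnt
    rw [Nat.card_eq_fintype_card, Fintype.card_subtype, Finset.sum_ite, Finset.filter_filter]
    simp
  simp only [hc, Finset.mul_sum]
  rw [Finset.sum_comm]
  have hz : ∀ w, (∑ T ∈ (Edg k).powerset, (-1 : ℤ) ^ T.card *
      (if ∀ p ∈ T, d3 (v p.1) (v p.2) w = 0 then (1 : ℤ) else 0)) =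
      if ∀ p ∈ Edg k, d3 (v p.1) (v p.2) w ≠ 0 then 1 else 0 := by
    intro w
    have := Finset.sum_powerset_neg_one_pow_card
      (x := (Edg k).filter fun p => d3 (v p.1) (v p.2) w = 0)
    simp only [Finset.filter_eq_empty_iff] at this
    refine Eq.trans ?_ (this.trans (if_congr Iff.rfl rfl rfl))
    rw [← Finset.sum_filter_add_sum_filter_not (Edg k).powerset
      (fun T => ∀ p ∈ T, d3 (v p.1) (v p.2) w = 0)]
    rw [Finset.sum_congr rfl (g := fun T => (-1 : ℤ) ^ T.card),
      Finset.sum_eq_zero (s := Finset.filter (fun T => ¬ _) _), add_zero]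
    · refine Finset.sum_congr ?_ fun _ _ => rfl
      ext T
      simp only [Finset.mem_filter, Finset.mem_powerset, Finset.subset_iff]
      exact ⟨fun h p hp => ⟨h.1 hp, h.2 p hp⟩, fun h => ⟨fun p hp => (h hp).1, fun p hp => (h hp).2⟩⟩
    · intro T hT
      rw [if_neg (Finset.mem_filter.1 hT).2, mul_zero]
    · intro T hT
      rw [if_pos (Finset.mem_filter.1 hT).2, mul_one]
  rw [Finset.sum_congr rfl fun w _ => hz w, Finset.sum_ite, Finset.filter_filter,
    Nat.card_eq_fintype_card, Fintype.card_subtype]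
  simp only [Finset.sum_const_zero, add_zero, Finset.sum_const, nsmul_eq_mul, mul_one]
  congr 2
  ext w
  simp only [Finset.mem_filter, Finset.mem_univ, true_and]
  exact ⟨fun h => ⟨wset_of_good hk h, h⟩, fun h => h.2⟩

lemma cnt_not_mtc {F : Type} [Field F] {k : ℕ} {v : Fin k → Fin 3 → F}
    (hv : Arc3 v) {T : Finset (Fin k × Fin k)} (hT : T ⊆ Edg k) (h : ¬ Mtc T) : cnt v T = 0 := by
  unfold cnt
  have : IsEmpty {w // Wset v w ∧ ∀ p ∈ T, d3 (v p.1) (v p.2) w = 0} := by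
    constructor
    rintro ⟨w, hw, hp⟩
    apply h
    intro p hpT r hrT hpr
    exact wset_disj hv (Finset.mem_filter.1 (hT hpT)).2 (Finset.mem_filter.1 (hT hrT)).2 hpr hw
      (hp p hpT) (hp r hrT)
  exact Nat.card_of_isEmpty

lemma mtc_card {k : ℕ} {T : Finset (Fin k × Fin k)} (hT : T ⊆ Edg k) (h : Mtc T) :
    2 * T.card ≤ k := by
  have h1 : (T.biUnion fun p => ({p.1, p.2} : Finset (Fin k))).card = ∑ p ∈ T, 2 := by
    rw [Finset.card_biUnion]
    · refine Finset.sum_congr rfl fun p hp => Finset.card_pair (Finset.mem_filter.1 (hT hp)).2.ne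
    · intro p hp r hr hpr
      obtain ⟨h1, h2, h3, h4⟩ := h p hp r hr hpr
      simp [Finset.disjoint_left]
      tauto
  have h2 := Finset.card_le_univ (T.biUnion fun p => ({p.1, p.2} : Finset (Fin k)))
  rw [h1] at h2
  simpa [mul_comm] using h2

/-- Matchings of a given size. -/
def Mt (k j : ℕ) : Finset (Finset (Fin k × Fin k)) := (Finset.powersetCard j (Edg k)).filter Mtc

lemma good_eq_sum4 {F : Type} [Field F] [Fintype F] {k : ℕ} (hk : 3 ≤ k) (hk' : k ≤ 7)
    {v : Fin k → Fin 3 → F} (hv : Arc3 v) :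
    (Nat.card {w // ∀ p ∈ Edg k, d3 (v p.1) (v p.2) w ≠ 0} : ℤ) =
      ∑ j ∈ Finset.range 4, (-1 : ℤ) ^ j * ∑ T ∈ Mt k j, (cnt v T : ℤ) := by
  rw [good_eq_sum hk v, ← Finset.sum_filter_of_ne (p := Mtc)]
  swap
  · intro T hT h
    by_contra hm
    rw [cnt_not_mtc hv (Finset.mem_powerset.1 hT) hm] at h
    simp at h
  rw [← Finset.sum_fiberwise_of_maps_to (s := (Edg k).powerset.filter Mtc) (t := Finset.range 4)
    (g := Finset.card)]
  · refine Finset.sum_congr rfl fun j _ => ?_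
    rw [Finset.mul_sum]
    refine Finset.sum_congr ?_ ?_
    · ext T
      simp only [Mt, Finset.mem_filter, Finset.mem_powerset, Finset.mem_powersetCard]
      tauto
    · intro T hT
      simp only [Mt, Finset.mem_filter, Finset.mem_powersetCard] at hT
      rw [hT.1.2]
  · intro T hT
    rw [Finset.mem_filter, Finset.mem_powerset] at hT
    have := mtc_card hT.1 hT.2
    rw [Finset.mem_range]
    omega

lemma sum_mt0 {F : Type} [Field F] [Fintype F] {k : ℕ} (hk : 3 ≤ k)
    {v : Fin k → Fin 3 → F} (hv : Arc3 v) :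
    ∑ T ∈ Mt k 0, (cnt v T : ℤ) =
      (Fintype.card F : ℤ) ^ 3 - 1 - k * ((Fintype.card F : ℤ) - 1) := by
  have : Mt k 0 = {∅} := by
    simp only [Mt, Finset.powersetCard_zero]
    rw [Finset.filter_singleton, if_pos]
    intro p hp
    simp at hp
  rw [this, Finset.sum_singleton, ← card_wset hk hv]
  unfold cnt
  simp

lemma sum_mt1 {F : Type} [Field F] [Fintype F] {k : ℕ} (hk : 3 ≤ k)
    {v : Fin k → Fin 3 → F} (hv : Arc3 v) :
    ∑ T ∈ Mt k 1, (cnt v T : ℤ) = (Mt k 1).card * ((Fintype.card F : ℤ) - 1) ^ 2 := by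
  rw [← nsmul_eq_mul, ← Finset.sum_const]
  refine Finset.sum_congr rfl fun T hT => ?_
  simp only [Mt, Finset.mem_filter, Finset.mem_powersetCard] at hT
  obtain ⟨p, rfl⟩ := Finset.card_eq_one.1 hT.1.2
  have hp := (Finset.mem_filter.1 (hT.1.1 (Finset.mem_singleton_self p))).2
  unfold cnt
  simp only [Finset.mem_singleton, forall_eq]
  rw [card_line hk hv hp.ne, Nat.cast_pow, Nat.cast_sub Fintype.card_pos, Nat.cast_one]

lemma sum_mt2 {F : Type} [Field F] [Fintype F] {k : ℕ} (hk : 3 ≤ k)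
    {v : Fin k → Fin 3 → F} (hv : Arc3 v) :
    ∑ T ∈ Mt k 2, (cnt v T : ℤ) = (Mt k 2).card * ((Fintype.card F : ℤ) - 1) := by
  rw [← nsmul_eq_mul, ← Finset.sum_const]
  refine Finset.sum_congr rfl fun T hT => ?_
  simp only [Mt, Finset.mem_filter, Finset.mem_powersetCard] at hT
  obtain ⟨p, r, hpr, rfl⟩ := Finset.card_eq_two.1 hT.1.2
  have hp := (Finset.mem_filter.1 (hT.1.1 (by simp : p ∈ _))).2
  have hr := (Finset.mem_filter.1 (hT.1.1 (by simp : r ∈ _))).2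
  obtain ⟨h1, h2, h3, h4⟩ := hT.2 p (by simp) r (by simp) hpr
  unfold cnt
  simp only [Finset.mem_insert, Finset.mem_singleton, forall_eq_or_imp, forall_eq]
  rw [card_point hk hv hp.ne hr.ne h1 h2 h3 h4, Nat.cast_sub Fintype.card_pos, Nat.cast_one]

lemma mt_cards : (Mt 3 1).card = 3 ∧ (Mt 3 2).card = 0 ∧ (Mt 3 3).card = 0 ∧
    (Mt 4 1).card = 6 ∧ (Mt 4 2).card = 3 ∧ (Mt 4 3).card = 0 ∧
    (Mt 5 1).card = 10 ∧ (Mt 5 2).card = 15 ∧ (Mt 5 3).card = 0 ∧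
    (Mt 6 1).card = 15 ∧ (Mt 6 2).card = 45 ∧ (Mt 6 3).card = 15 := by
  decide +kernel


lemma triple_snoc {k : ℕ} (Q : Fin (k + 1) → Fin (k + 1) → Fin (k + 1) → Prop) :
    (∀ x y z, x < y → y < z → Q x y z) ↔
      (∀ x y z : Fin k, x < y → y < z → Q x.castSucc y.castSucc z.castSucc) ∧
        ∀ p ∈ Edg k, Q p.1.castSucc p.2.castSucc (Fin.last k) := by
  constructor
  · intro h
    refine ⟨fun x y z hx hy => h _ _ _ hx hy, fun p hp => h _ _ _ ?_ (Fin.castSucc_lt_last _)⟩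
    exact (Finset.mem_filter.1 hp).2
  · rintro ⟨h1, h2⟩ x y z hx hy
    obtain ⟨y, rfl⟩ := Fin.exists_castSucc_eq.2 (hy.trans_le (Fin.le_last z)).ne
    obtain ⟨x, rfl⟩ := Fin.exists_castSucc_eq.2 (hx.trans (Fin.castSucc_lt_last y)).ne
    have hx' : x < y := hx
    by_cases hz : z = Fin.last k
    · subst hz
      exact h2 (x, y) (by simpa [Edg] using hx')
    · obtain ⟨z, rfl⟩ := Fin.exists_castSucc_eq.2 hz
      exact h1 _ _ _ hx' hy

lemma arc3_snoc {F : Type} [Field F] {k : ℕ} (v : Fin k → Fin 3 → F) (w : Fin 3 → F) :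
    Arc3 (Fin.snoc v w : Fin (k + 1) → Fin 3 → F) ↔
      Arc3 v ∧ ∀ p ∈ Edg k, d3 (v p.1) (v p.2) w ≠ 0 := by
  unfold Arc3
  rw [triple_snoc]
  simp only [Fin.snoc_castSucc, Fin.snoc_last]

/-- Splitting off the last vector. -/
def snocEq (F : Type) (k : ℕ) :
    ((Fin k → Fin 3 → F) × (Fin 3 → F)) ≃ (Fin (k + 1) → Fin 3 → F) where
  toFun x := Fin.snoc x.1 x.2
  invFun v := (Fin.init v, v (Fin.last k))
  left_inv x := by simp
  right_inv v := by simp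

/-- Number of arcs of vectors. -/
noncomputable def arcN (F : Type) [Field F] (k : ℕ) : ℕ :=
  Nat.card {v : Fin k → Fin 3 → F // Arc3 v}

lemma card_pairs {α β : Type*} [Finite α] [Finite β] (P : α → Prop) (R : α → β → Prop)
    [Fintype {a // P a}] :
    Nat.card {x : α × β // P x.1 ∧ R x.1 x.2} = ∑ a : {a // P a}, Nat.card {b // R a.1 b} := by
  rw [← Nat.card_sigma]
  exact Nat.card_congr
    { toFun := fun x => ⟨⟨x.1.1, x.2.1⟩, ⟨x.1.2, x.2.2⟩⟩
      invFun := fun x => ⟨(x.1.1, x.2.1), x.1.2, x.2.2⟩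
      left_inv := fun x => rfl
      right_inv := fun x => rfl }

/-- Arcs with a further vector on the lines of `T`. -/
noncomputable def Ycnt (F : Type) [Field F] {k : ℕ} (T : Finset (Fin k × Fin k)) : ℕ :=
  Nat.card {x : (Fin k → Fin 3 → F) × (Fin 3 → F) //
    Arc3 x.1 ∧ (Wset x.1 x.2 ∧ ∀ p ∈ T, d3 (x.1 p.1) (x.1 p.2) x.2 = 0)}

lemma arcN_succ {F : Type} [Field F] [Fintype F] {k : ℕ} (hk : 3 ≤ k) (hk' : k ≤ 7) :
    (arcN F (k + 1) : ℤ) = arcN F k * (((Fintype.card F : ℤ) ^ 3 - 1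
      - k * ((Fintype.card F : ℤ) - 1)) - (Mt k 1).card * ((Fintype.card F : ℤ) - 1) ^ 2
      + (Mt k 2).card * ((Fintype.card F : ℤ) - 1)) - ∑ T ∈ Mt k 3, (Ycnt F T : ℤ) := by
  classical
  have h1 : arcN F (k + 1) = ∑ v : {v : Fin k → Fin 3 → F // Arc3 v},
      Nat.card {w // ∀ p ∈ Edg k, d3 (v.1 p.1) (v.1 p.2) w ≠ 0} := by
    unfold arcN
    rw [← card_pairs (fun v : Fin k → Fin 3 → F => Arc3 v)
      (fun v w => ∀ p ∈ Edg k, d3 (v p.1) (v p.2) w ≠ 0)]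
    exact (Nat.card_congr (Equiv.subtypeEquiv (snocEq F k) fun x => (arc3_snoc x.1 x.2).symm)).symm
  have h2 : ∀ T : Finset (Fin k × Fin k), (Ycnt F T : ℤ) =
      ∑ v : {v : Fin k → Fin 3 → F // Arc3 v}, (cnt v.1 T : ℤ) := by
    intro T
    unfold Ycnt cnt
    rw [card_pairs (fun v : Fin k → Fin 3 → F => Arc3 v)
      (fun v w => Wset v w ∧ ∀ p ∈ T, d3 (v p.1) (v p.2) w = 0)]
    push_cast
    rfl
  rw [h1]
  simp only [h2]
  rw [Finset.sum_comm]
  push_cast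
  have h3 : (arcN F k : ℤ) = ∑ v : {v : Fin k → Fin 3 → F // Arc3 v}, (1 : ℤ) := by
    unfold arcN
    simp
  rw [h3, Finset.sum_mul, ← Finset.sum_sub_distrib]
  refine Finset.sum_congr rfl fun v _ => ?_
  rw [good_eq_sum4 hk hk' v.2]
  simp only [Finset.sum_range_succ, Finset.sum_range_zero]
  rw [sum_mt0 hk v.2, sum_mt1 hk v.2, sum_mt2 hk v.2]
  ring

lemma Arc3.comp {F : Type} [Field F] {k : ℕ} {v : Fin k → Fin 3 → F} (hv : Arc3 v)
    {e : Fin k → Fin k} (he : Function.Injective e) : Arc3 (v ∘ e) := by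
  intro x y z hx hy
  exact hv.ne (he.ne hx.ne) (he.ne (hx.trans hy).ne) (he.ne hy.ne)

lemma wset_comp {F : Type} [Field F] {k : ℕ} {v : Fin k → Fin 3 → F} (e : Equiv.Perm (Fin k))
    (w : Fin 3 → F) : Wset (v ∘ e) w ↔ Wset v w := by
  constructor
  · intro h i c
    simpa using h (e.symm i) c
  · intro h i c
    exact h (e i) c

/-- The standard perfect matching. -/
def T0 : Finset (Fin 6 × Fin 6) := {(0, 3), (1, 4), (2, 5)}

lemma ycnt_eq {F : Type} [Field F] {T : Finset (Fin 6 × Fin 6)} (hT : T ∈ Mt 6 3) :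
    Ycnt F T = Ycnt F T0 := by
  simp only [Mt, Finset.mem_filter, Finset.mem_powersetCard] at hT
  obtain ⟨⟨hE, hc⟩, hM⟩ := hT
  obtain ⟨p, r, s, hpr, hps, hrs, rfl⟩ := Finset.card_eq_three.1 hc
  have hp := (Finset.mem_filter.1 (hE (by simp : p ∈ _))).2.ne
  have hr := (Finset.mem_filter.1 (hE (by simp : r ∈ _))).2.ne
  have hs := (Finset.mem_filter.1 (hE (by simp : s ∈ _))).2.ne
  obtain ⟨a1, a2, a3, a4⟩ := hM p (by simp) r (by simp) hpr
  obtain ⟨b1, b2, b3, b4⟩ := hM p (by simp) s (by simp) hps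
  obtain ⟨c1, c2, c3, c4⟩ := hM r (by simp) s (by simp) hrs
  have hinj : Function.Injective ![p.1, r.1, s.1, p.2, r.2, s.2] := by
    intro i j hij
    fin_cases i <;> fin_cases j <;> first | rfl | (exfalso; simp at hij; tauto)
  let e : Equiv.Perm (Fin 6) := Equiv.ofBijective _ (Finite.injective_iff_bijective.1 hinj)
  unfold Ycnt
  refine Nat.card_congr (Equiv.subtypeEquiv
    (Equiv.prodCongr (Equiv.arrowCongr e.symm (Equiv.refl _)) (Equiv.refl _)) ?_)
  rintro ⟨v, w⟩
  have e1 : Equiv.arrowCongr e.symm (Equiv.refl (Fin 3 → F)) v = v ∘ e := by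
    funext i
    simp
  simp only [Equiv.prodCongr_apply, Prod.map, e1, Equiv.refl_apply, wset_comp]
  refine and_congr ?_ (and_congr Iff.rfl ?_)
  · refine ⟨fun h => h.comp e.injective, fun h => ?_⟩
    have := h.comp e.symm.injective
    simpa [Function.comp_assoc] using this
  · simp only [T0, Finset.mem_insert, Finset.mem_singleton, forall_eq_or_imp, forall_eq]
    rfl

/-- The collinear triples of the auxiliary plane configuration. -/
def pl0 : Finset (Finset (Fin 7)) := {{0, 3, 6}, {1, 4, 6}, {2, 5, 6}}

lemma ycnt_vstrong {F : Type} [Field F] :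
    Ycnt F T0 = Nat.card {v : Fin 7 → Fin 3 → F // VStrong F (· ∈ pl0) v} := by
  unfold Ycnt
  refine Nat.card_congr (Equiv.subtypeEquiv (snocEq F 6) ?_)
  rintro ⟨v, w⟩
  have hm : ∀ (u : Fin 7 → Fin 3 → F) (x y z : Fin 7), (Matrix.of fun i => u (![x, y, z] i)) =
      Matrix.of ![u x, u y, u z] := by
    intro u x y z
    ext i j
    fin_cases i <;> rfl
  rw [vstrong_iff_strictMono, strictMono3_iff]
  simp only [hm, image3, det3_rows]
  rw [triple_snoc]
  change _ ↔ (∀ x y z : Fin 6, x < y → y < z → (d3 (snocEq F 6 (v, w) x.castSucc)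
    (snocEq F 6 (v, w) y.castSucc) (snocEq F 6 (v, w) z.castSucc) = 0 ↔ _)) ∧
    ∀ p ∈ Edg 6, (d3 (snocEq F 6 (v, w) p.1.castSucc) (snocEq F 6 (v, w) p.2.castSucc)
      (snocEq F 6 (v, w) (Fin.last 6)) = 0 ↔ _)
  simp only [snocEq, Equiv.coe_fn_mk, Fin.snoc_castSucc, Fin.snoc_last]
  have d1 : ∀ x y z : Fin 6, x < y → y < z →
      ({x.castSucc, y.castSucc, z.castSucc} : Finset (Fin 7)) ∉ pl0 := by decide +kernel
  have d2 : ∀ p ∈ Edg 6, (({p.1.castSucc, p.2.castSucc, Fin.last 6} : Finset (Fin 7)) ∈ pl0 ↔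
    p ∈ T0) := by decide +kernel
  have d3' : ∀ i : Fin 6, ∃ p ∈ Edg 6, (p.1 = i ∨ p.2 = i) ∧ p ∉ T0 := by decide +kernel
  have d4 : ∀ p ∈ Edg 6, p ∉ T0 → ∃ r ∈ T0, ¬ Dsj p r := by decide +kernel
  have d5 : T0 ⊆ Edg 6 := by decide +kernel
  constructor
  · rintro ⟨hv, hw, h⟩
    refine ⟨fun x y z hx hy => iff_of_false (hv x y z hx hy) (d1 x y z hx hy), fun p hp => ?_⟩
    rw [d2 p hp]
    refine ⟨fun h0 => ?_, h p⟩
    by_contra hpT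
    obtain ⟨r, hr, hd⟩ := d4 p hp hpT
    refine hd (wset_disj hv (Finset.mem_filter.1 hp).2 (Finset.mem_filter.1 (d5 hr)).2 ?_ hw h0
      (h r hr))
    rintro rfl
    exact hpT hr
  · rintro ⟨h1, h2⟩
    refine ⟨fun x y z hx hy h => d1 x y z hx hy ((h1 x y z hx hy).1 h), ?_,
      fun p hp => (h2 p (d5 hp)).2 ((d2 p (d5 hp)).2 hp)⟩
    rintro i c hw
    obtain ⟨p, hp, hi, hT⟩ := d3' i
    apply hT
    rw [← d2 p hp, ← h2 p hp]
    rcases hi with rfl | rfl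
    · rw [hw, d3_smul, d3_self, mul_zero]
    · rw [hw, d3_smul, d3_self', mul_zero]


/-- Parametrization of the auxiliary plane configuration. -/
def par0 {F : Type} [Field F] (p : Fˣ × Fˣ × Fˣ × Fˣ × Fˣ × Fˣ) (k : F × F × F) :
    Fin 4 → Fin 3 → F :=
  match p, k with
  | (s, t, u, x, y, z), (A, B, C) =>
    ![![s * (A * x), s * y, s * z], ![t * x, t * (B * y), t * z], ![u * x, u * y, u * (C * z)],
      ![(x : F), y, z]]

/-- The conditions on the parameters. -/
def KC {F : Type} [Field F] (k : F × F × F) : Prop :=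
  k.1 ≠ 0 ∧ k.2.1 ≠ 0 ∧ k.2.2 ≠ 0 ∧ k.1 - 1 ≠ 0 ∧ k.2.1 - 1 ≠ 0 ∧ k.2.2 - 1 ≠ 0 ∧
    k.1 * k.2.1 - 1 ≠ 0 ∧ k.1 * k.2.2 - 1 ≠ 0 ∧ k.2.1 * k.2.2 - 1 ≠ 0 ∧
    k.1 * k.2.1 * k.2.2 + 2 - k.1 - k.2.1 - k.2.2 ≠ 0

lemma par0_min {F : Type} [Field F] (p : Fˣ × Fˣ × Fˣ × Fˣ × Fˣ × Fˣ) (k : F × F × F) :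
    Min37 (· ∈ pl0) (par0 p k) ↔ KC k := by
  obtain ⟨s, t, u, x, y, z⟩ := p
  obtain ⟨A, B, C⟩ := k
  have e00 : par0 (s, t, u, x, y, z) (A, B, C) 0 0 = s * (A * x) := rfl
  have e01 : par0 (s, t, u, x, y, z) (A, B, C) 0 1 = s * y := rfl
  have e02 : par0 (s, t, u, x, y, z) (A, B, C) 0 2 = s * z := rfl
  have e10 : par0 (s, t, u, x, y, z) (A, B, C) 1 0 = t * x := rfl
  have e11 : par0 (s, t, u, x, y, z) (A, B, C) 1 1 = t * (B * y) := rfl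
  have e12 : par0 (s, t, u, x, y, z) (A, B, C) 1 2 = t * z := rfl
  have e20 : par0 (s, t, u, x, y, z) (A, B, C) 2 0 = u * x := rfl
  have e21 : par0 (s, t, u, x, y, z) (A, B, C) 2 1 = u * y := rfl
  have e22 : par0 (s, t, u, x, y, z) (A, B, C) 2 2 = u * (C * z) := rfl
  have e30 : par0 (s, t, u, x, y, z) (A, B, C) 3 0 = x := rfl
  have e31 : par0 (s, t, u, x, y, z) (A, B, C) 3 1 = y := rfl
  have e32 : par0 (s, t, u, x, y, z) (A, B, C) 3 2 = z := rfl
  simp (decide := true) only [Min37, iff_true, iff_false, KC, e00, e01, e02, e10, e11, e12, e20, e21, e22, e30, e31, e32]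
  constructor
  · rintro ⟨h1, h2, h3, h4, h5, h6, h7, h8, h9, h10, h11, h12, h13, h14, h15, h16, h17,
      h18, h19, h20, h21, h22, h23, h24, h25, h26, h27, h28, h29, h30, h31, h32, h33, h34⟩
    refine ⟨?_, ?_, ?_, ?_, ?_, ?_, ?_, ?_, ?_, ?_⟩
    · intro h
      apply h15
      linear_combination (s * x : F) * h
    · intro h
      apply h6
      linear_combination (t * y : F) * h
    · intro h
      apply h3
      linear_combination (u * z : F) * h
    · intro h
      apply h19
      linear_combination (s * t * x * z : F) * h
    · intro h
      apply h9
      linear_combination -(s * t * y * z : F) * h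
    · intro h
      apply h10
      linear_combination (s * u * y * z : F) * h
    · intro h
      apply h25
      linear_combination (s * t * x * y : F) * h
    · intro h
      apply h20
      linear_combination (s * u * x * z : F) * h
    · intro h
      apply h12
      linear_combination (t * u * y * z : F) * h
    · intro h
      apply h31
      linear_combination (s * t * u * x * y * z : F) * h
  · rintro ⟨k1, k2, k3, k4, k5, k6, k7, k8, k9, k10⟩
    refine ⟨?_, ?_, ?_, ?_, ?_, ?_, ?_, ?_, ?_, ?_, ?_, ?_, ?_, ?_, ?_, ?_, ?_, ?_, ?_, ?_, ?_, ?_, ?_, ?_, ?_, ?_, ?_, ?_, ?_, ?_, ?_, ?_, ?_, ?_⟩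
    · intro h
      apply (s * z : Fˣ).ne_zero
      push_cast
      linear_combination h
    · intro h
      apply (t * z : Fˣ).ne_zero
      push_cast
      linear_combination h
    · intro h
      apply mul_ne_zero (u * z : Fˣ).ne_zero k3
      push_cast
      linear_combination h
    · intro h
      apply (z : Fˣ).ne_zero
      push_cast
      linear_combination h
    · intro h
      apply (s * y : Fˣ).ne_zero
      push_cast
      linear_combination h
    · intro h
      apply mul_ne_zero (t * y : Fˣ).ne_zero k2
      push_cast
      linear_combination h
    · intro h
      apply (u * y : Fˣ).ne_zero
      push_cast
      linear_combination h
    · intro h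
      apply (y : Fˣ).ne_zero
      push_cast
      linear_combination h
    · intro h
      apply mul_ne_zero (s * t * y * z : Fˣ).ne_zero k5
      push_cast
      linear_combination -h
    · intro h
      apply mul_ne_zero (s * u * y * z : Fˣ).ne_zero k6
      push_cast
      linear_combination h
    · ring
    · intro h
      apply mul_ne_zero (t * u * y * z : Fˣ).ne_zero k9
      push_cast
      linear_combination h
    · intro h
      apply mul_ne_zero (t * y * z : Fˣ).ne_zero k5
      push_cast
      linear_combination h
    · intro h
      apply mul_ne_zero (u * y * z : Fˣ).ne_zero k6
      push_cast
      linear_combination -h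
    · intro h
      apply mul_ne_zero (s * x : Fˣ).ne_zero k1
      push_cast
      linear_combination h
    · intro h
      apply (t * x : Fˣ).ne_zero
      push_cast
      linear_combination h
    · intro h
      apply (u * x : Fˣ).ne_zero
      push_cast
      linear_combination h
    · intro h
      apply (x : Fˣ).ne_zero
      push_cast
      linear_combination h
    · intro h
      apply mul_ne_zero (s * t * x * z : Fˣ).ne_zero k4
      push_cast
      linear_combination h
    · intro h
      apply mul_ne_zero (s * u * x * z : Fˣ).ne_zero k8
      push_cast
      linear_combination h
    · intro h
      apply mul_ne_zero (s * x * z : Fˣ).ne_zero k4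
      push_cast
      linear_combination h
    · intro h
      apply mul_ne_zero (t * u * x * z : Fˣ).ne_zero k6
      push_cast
      linear_combination h
    · ring
    · intro h
      apply mul_ne_zero (u * x * z : Fˣ).ne_zero k6
      push_cast
      linear_combination -h
    · intro h
      apply mul_ne_zero (s * t * x * y : Fˣ).ne_zero k7
      push_cast
      linear_combination h
    · intro h
      apply mul_ne_zero (s * u * x * y : Fˣ).ne_zero k4
      push_cast
      linear_combination h
    · intro h
      apply mul_ne_zero (s * x * y : Fˣ).ne_zero k4
      push_cast
      linear_combination h
    · intro h
      apply mul_ne_zero (t * u * x * y : Fˣ).ne_zero k5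
      push_cast
      linear_combination -h
    · intro h
      apply mul_ne_zero (t * x * y : Fˣ).ne_zero k5
      push_cast
      linear_combination -h
    · ring
    · intro h
      apply mul_ne_zero (s * t * u * x * y * z : Fˣ).ne_zero k10
      push_cast
      linear_combination h
    · intro h
      apply mul_ne_zero (s * t * x * y * z : Fˣ).ne_zero (mul_ne_zero k4 k5)
      push_cast
      linear_combination h
    · intro h
      apply mul_ne_zero (s * u * x * y * z : Fˣ).ne_zero (mul_ne_zero k4 k6)
      push_cast
      linear_combination -h
    · intro h
      apply mul_ne_zero (t * u * x * y * z : Fˣ).ne_zero (mul_ne_zero k5 k6)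
      push_cast
      linear_combination h

lemma par0_inj {F : Type} [Field F] :
    Function.Injective fun x : (Fˣ × Fˣ × Fˣ × Fˣ × Fˣ × Fˣ) × {k : F × F × F // KC k} =>
      par0 x.1 x.2.1 := by
  rintro ⟨⟨s, t, u, x, y, z⟩, ⟨⟨A, B, C⟩, hk⟩⟩ ⟨⟨s', t', u', x', y', z'⟩, ⟨⟨A', B', C'⟩, hk'⟩⟩ h
  have h1 : (x : F) = x' := congrFun (congrFun h 3) 0
  have h2 : (y : F) = y' := congrFun (congrFun h 3) 1
  have h3 : (z : F) = z' := congrFun (congrFun h 3) 2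
  have h4 : (s : F) * y = s' * y' := congrFun (congrFun h 0) 1
  have h5 : (t : F) * x = t' * x' := congrFun (congrFun h 1) 0
  have h6 : (u : F) * x = u' * x' := congrFun (congrFun h 2) 0
  have h7 : (s : F) * (A * x) = s' * (A' * x') := congrFun (congrFun h 0) 0
  have h8 : (t : F) * (B * y) = t' * (B' * y') := congrFun (congrFun h 1) 1
  have h9 : (u : F) * (C * z) = u' * (C' * z') := congrFun (congrFun h 2) 2
  obtain rfl := Units.ext h1
  obtain rfl := Units.ext h2
  obtain rfl := Units.ext h3
  obtain rfl := Units.ext (mul_right_cancel₀ y.ne_zero h4)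
  obtain rfl := Units.ext (mul_right_cancel₀ x.ne_zero h5)
  obtain rfl := Units.ext (mul_right_cancel₀ x.ne_zero h6)
  obtain rfl := mul_right_cancel₀ x.ne_zero (mul_left_cancel₀ s.ne_zero h7)
  obtain rfl := mul_right_cancel₀ y.ne_zero (mul_left_cancel₀ t.ne_zero h8)
  obtain rfl := mul_right_cancel₀ z.ne_zero (mul_left_cancel₀ u.ne_zero h9)
  rfl

lemma par0_exists {F : Type} [Field F] (a : Fin 4 → Fin 3 → F) (h : Min37 (· ∈ pl0) a) :
    ∃ p k, par0 p k = a := by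
  simp (decide := true) only [Min37, iff_true, iff_false] at h
  obtain ⟨h1, h2, h3, h4, h5, h6, h7, h8, h9, h10, h11, h12, h13, h14, h15, h16, h17,
      h18, h19, h20, h21, h22, h23, h24, h25, h26, h27, h28, h29, h30, h31, h32, h33, h34⟩ := h
  refine ⟨(Units.mk0 _ (div_ne_zero h5 h8), Units.mk0 _ (div_ne_zero h16 h18),
    Units.mk0 _ (div_ne_zero h17 h18), Units.mk0 _ h18, Units.mk0 _ h8, Units.mk0 _ h4),
    (a 0 0 * a 3 1 / (a 0 1 * a 3 0), a 1 1 * a 3 0 / (a 1 0 * a 3 1),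
      a 2 2 * a 3 0 / (a 2 0 * a 3 2)), ?_⟩
  funext i j
  fin_cases i <;> fin_cases j <;> simp [par0] <;>
    first | (field_simp; done) | (field_simp; linear_combination h11) |
      (field_simp; linear_combination h23) | (field_simp; linear_combination h30)

lemma ycnt_T0 {F : Type} [Field F] [Fintype F] :
    Ycnt F T0 = Nat.card (GL (Fin 3) F) *
      ((Fintype.card F - 1) ^ 6 * Nat.card {k : F × F × F // KC k}) := by
  rw [ycnt_vstrong, card_frame37 _ (by decide)]
  congr 1
  rw [card_of_par _ _ par0_inj]
  · simp only [Nat.card_prod, Nat.card_units]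
    rw [Nat.card_eq_fintype_card (α := F)]
    ring
  · intro a
    constructor
    · intro h
      obtain ⟨p, k, rfl⟩ := par0_exists a h
      exact ⟨(p, ⟨k, (par0_min p k).1 h⟩), rfl⟩
    · rintro ⟨⟨p, k, hk⟩, rfl⟩
      exact (par0_min p k).2 hk


lemma gale_iff {F : Type} [Field F] (a : Fin 3 → Fin 4 → F) :
    Min47 (fun _ => False) a ↔ Min37 (fun _ => False) (fun i j => a j i) := by
  simp only [Min47, Min37, iff_false]
  constructor
  · rintro ⟨h1, h2, h3, h4, h5, h6, h7, h8, h9, h10, h11, h12, h13, h14, h15, h16, h17,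
      h18, h19, h20, h21, h22, h23, h24, h25, h26, h27, h28, h29, h30, h31, h32, h33, h34⟩
    refine ⟨?_, ?_, ?_, ?_, ?_, ?_, ?_, ?_, ?_, ?_, ?_, ?_, ?_, ?_, ?_, ?_, ?_, ?_, ?_, ?_, ?_, ?_, ?_, ?_, ?_, ?_, ?_, ?_, ?_, ?_, ?_, ?_, ?_, ?_⟩
    · exact fun h => h22 (by linear_combination h)
    · exact fun h => h12 (by linear_combination h)
    · exact fun h => h6 (by linear_combination h)
    · exact fun h => h3 (by linear_combination h)
    · exact fun h => h21 (by linear_combination h)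
    · exact fun h => h11 (by linear_combination h)
    · exact fun h => h5 (by linear_combination h)
    · exact fun h => h2 (by linear_combination h)
    · exact fun h => h32 (by linear_combination h)
    · exact fun h => h28 (by linear_combination h)
    · exact fun h => h25 (by linear_combination h)
    · exact fun h => h18 (by linear_combination h)
    · exact fun h => h15 (by linear_combination h)
    · exact fun h => h9 (by linear_combination h)
    · exact fun h => h20 (by linear_combination h)
    · exact fun h => h10 (by linear_combination h)
    · exact fun h => h4 (by linear_combination h)
    · exact fun h => h1 (by linear_combination h)
    · exact fun h => h31 (by linear_combination h)
    · exact fun h => h27 (by linear_combination h)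
    · exact fun h => h24 (by linear_combination h)
    · exact fun h => h17 (by linear_combination h)
    · exact fun h => h14 (by linear_combination h)
    · exact fun h => h8 (by linear_combination h)
    · exact fun h => h30 (by linear_combination h)
    · exact fun h => h26 (by linear_combination h)
    · exact fun h => h23 (by linear_combination h)
    · exact fun h => h16 (by linear_combination h)
    · exact fun h => h13 (by linear_combination h)
    · exact fun h => h7 (by linear_combination h)
    · exact fun h => h34 (by linear_combination h)
    · exact fun h => h33 (by linear_combination h)
    · exact fun h => h29 (by linear_combination h)
    · exact fun h => h19 (by linear_combination h)
  · rintro ⟨h1, h2, h3, h4, h5, h6, h7, h8, h9, h10, h11, h12, h13, h14, h15, h16, h17,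
      h18, h19, h20, h21, h22, h23, h24, h25, h26, h27, h28, h29, h30, h31, h32, h33, h34⟩
    refine ⟨?_, ?_, ?_, ?_, ?_, ?_, ?_, ?_, ?_, ?_, ?_, ?_, ?_, ?_, ?_, ?_, ?_, ?_, ?_, ?_, ?_, ?_, ?_, ?_, ?_, ?_, ?_, ?_, ?_, ?_, ?_, ?_, ?_, ?_⟩
    · exact fun h => h18 (by linear_combination h)
    · exact fun h => h8 (by linear_combination h)
    · exact fun h => h4 (by linear_combination h)
    · exact fun h => h17 (by linear_combination h)
    · exact fun h => h7 (by linear_combination h)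
    · exact fun h => h3 (by linear_combination h)
    · exact fun h => h30 (by linear_combination h)
    · exact fun h => h24 (by linear_combination h)
    · exact fun h => h14 (by linear_combination h)
    · exact fun h => h16 (by linear_combination h)
    · exact fun h => h6 (by linear_combination h)
    · exact fun h => h2 (by linear_combination h)
    · exact fun h => h29 (by linear_combination h)
    · exact fun h => h23 (by linear_combination h)
    · exact fun h => h13 (by linear_combination h)
    · exact fun h => h28 (by linear_combination h)
    · exact fun h => h22 (by linear_combination h)
    · exact fun h => h12 (by linear_combination h)
    · exact fun h => h34 (by linear_combination h)
    · exact fun h => h15 (by linear_combination h)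
    · exact fun h => h5 (by linear_combination h)
    · exact fun h => h1 (by linear_combination h)
    · exact fun h => h27 (by linear_combination h)
    · exact fun h => h21 (by linear_combination h)
    · exact fun h => h11 (by linear_combination h)
    · exact fun h => h26 (by linear_combination h)
    · exact fun h => h20 (by linear_combination h)
    · exact fun h => h10 (by linear_combination h)
    · exact fun h => h33 (by linear_combination h)
    · exact fun h => h25 (by linear_combination h)
    · exact fun h => h19 (by linear_combination h)
    · exact fun h => h9 (by linear_combination h)
    · exact fun h => h32 (by linear_combination h)
    · exact fun h => h31 (by linear_combination h)

lemma gale_card {F : Type} [Field F] :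
    Nat.card {a : Fin 3 → Fin 4 → F // Min47 (fun _ => False) a} =
      Nat.card {a : Fin 4 → Fin 3 → F // Min37 (fun _ => False) a} :=
  Nat.card_congr (Equiv.subtypeEquiv (Equiv.piComm _) fun a => gale_iff a)

lemma vstrong_false {F : Type} [Field F] {k : ℕ} (v : Fin k → Fin 3 → F) :
    VStrong F (fun _ => False) v ↔ Arc3 v := by
  have hm : ∀ (u : Fin k → Fin 3 → F) (x y z : Fin k), (Matrix.of fun i => u (![x, y, z] i)) =
      Matrix.of ![u x, u y, u z] := by
    intro u x y z
    ext i j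
    fin_cases i <;> rfl
  rw [vstrong_iff_strictMono, strictMono3_iff]
  simp only [hm, det3_rows, iff_false]
  rfl

lemma arcN_seven {F : Type} [Field F] :
    arcN F 7 = Nat.card (GL (Fin 3) F) *
      Nat.card {a : Fin 3 → Fin 4 → F // Min47 (fun _ => False) a} := by
  rw [gale_card, ← card_frame37 _ (fun h => h)]
  unfold arcN
  exact Nat.card_congr (Equiv.subtypeEquivRight fun v => (vstrong_false v).symm)

lemma arcN_three {F : Type} [Field F] : arcN F 3 = Nat.card (GL (Fin 3) F) := by
  have h1 : arcN F 3 = Nat.card {v : Fin 3 → Fin 3 → F // VStrong F (fun _ => False) v} :=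
    Nat.card_congr (Equiv.subtypeEquivRight fun v => (vstrong_false v).symm)
  rw [h1, vstrong_card_frame _ id Function.injective_id (fun h => h)]
  have hA : Arc3 (fun i : Fin 3 => (Pi.single i 1 : Fin 3 → F)) := by
    intro x y z hx hy
    have : x = 0 ∧ y = 1 ∧ z = 2 := by
      revert x y z
      decide
    obtain ⟨rfl, rfl, rfl⟩ := this
    simp [d3]
  have : Unique {v : Fin 3 → Fin 3 → F // VStrong F (fun _ => False) v ∧
      ∀ i, v (id i) = Pi.single i 1} :=
    { default := ⟨fun i => Pi.single i 1, (vstrong_false _).2 hA, fun i => rfl⟩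
      uniq := by
        rintro ⟨v, hv, h⟩
        apply Subtype.ext
        funext i
        exact h i }
  rw [Nat.card_unique (α := {v : Fin 3 → Fin 3 → F // VStrong F (fun _ => False) v ∧
      ∀ i, v (id i) = Pi.single i 1}), mul_one]

lemma card_ne_finset {F : Type} [Fintype F] [DecidableEq F] (S : Finset F) (P : F → Prop)
    (h : ∀ c, P c ↔ c ∉ S) : (Nat.card {c // P c} : ℤ) = (Fintype.card F : ℤ) - S.card := by
  classical
  have : Nat.card {c // P c} = Sᶜ.card := by
    rw [Nat.card_eq_fintype_card, Fintype.card_subtype]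
    congr 1
    ext c
    simp [h]
  rw [this, Finset.card_compl, Nat.cast_sub (Finset.card_le_univ S)]

/-- Conditions on the first two parameters. -/
def KP {F : Type} [Field F] (x : F × F) : Prop :=
  x.1 ≠ 0 ∧ x.1 ≠ 1 ∧ (x.2 ≠ 0 ∧ x.2 ≠ 1 ∧ x.1 * x.2 ≠ 1)

/-- Conditions on the third parameter. -/
def KR {F : Type} [Field F] (x : F × F) (c : F) : Prop :=
  c ≠ 0 ∧ c ≠ 1 ∧ x.1 * c ≠ 1 ∧ x.2 * c ≠ 1 ∧ x.1 * x.2 * c + 2 - x.1 - x.2 - c ≠ 0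

lemma mul_one_iff_inv {F : Type} [Field F] {a c : F} (ha : a ≠ 0) : a * c = 1 ↔ c = a⁻¹ :=
  ⟨eq_inv_of_mul_eq_one_right, fun h => by rw [h, mul_inv_cancel₀ ha]⟩

lemma card_KR {F : Type} [Field F] [Fintype F] [DecidableEq F] (x : F × F) (hx : KP x) :
    (Nat.card {c // KR x c} : ℤ) = (Fintype.card F : ℤ) - 5 + (if x.1 = x.2 then 1 else 0)
      + (if x.1 + x.2 = 2 then 1 else 0) := by
  obtain ⟨a, b⟩ := x
  obtain ⟨ha, ha1, hb, hb1, hab⟩ := hx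
  simp only at *
  have hd : a * b - 1 ≠ 0 := sub_ne_zero.2 hab
  rw [card_ne_finset {0, 1, a⁻¹, b⁻¹, (a + b - 2) / (a * b - 1)}]
  · have f1 : (0 : F) ≠ 1 := zero_ne_one
    have f2 : (0 : F) ≠ a⁻¹ := (inv_ne_zero ha).symm
    have f3 : (0 : F) ≠ b⁻¹ := (inv_ne_zero hb).symm
    have f4 : (0 : F) = (a + b - 2) / (a * b - 1) ↔ a + b = 2 := by
      rw [eq_div_iff hd, zero_mul, eq_comm, sub_eq_zero]
    have f5 : (1 : F) ≠ a⁻¹ := fun h => ha1 (by rw [← inv_inv a, ← h, inv_one])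
    have f6 : (1 : F) ≠ b⁻¹ := fun h => hb1 (by rw [← inv_inv b, ← h, inv_one])
    have f7 : (1 : F) ≠ (a + b - 2) / (a * b - 1) := by
      rw [ne_eq, eq_div_iff hd]
      intro h
      apply mul_ne_zero (sub_ne_zero.2 ha1) (sub_ne_zero.2 hb1)
      linear_combination h
    have f8 : a⁻¹ = b⁻¹ ↔ a = b := inv_inj
    have f9 : a⁻¹ ≠ (a + b - 2) / (a * b - 1) := by
      rw [ne_eq, eq_div_iff hd, inv_mul_eq_iff_eq_mul₀ ha]
      intro h
      apply mul_ne_zero (sub_ne_zero.2 ha1) (sub_ne_zero.2 ha1)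
      linear_combination -h
    have f10 : b⁻¹ ≠ (a + b - 2) / (a * b - 1) := by
      rw [ne_eq, eq_div_iff hd, inv_mul_eq_iff_eq_mul₀ hb]
      intro h
      apply mul_ne_zero (sub_ne_zero.2 hb1) (sub_ne_zero.2 hb1)
      linear_combination -h
    rw [Finset.card_insert_eq_ite, Finset.card_insert_eq_ite, Finset.card_insert_eq_ite,
      Finset.card_insert_eq_ite, Finset.card_singleton]
    simp only [Finset.mem_insert, Finset.mem_singleton, f1, f2, f3, f4, f5, f6, f7, f8, f9, f10,
      false_or, or_false, if_false]
    split_ifs <;> push_cast <;> ring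
  · intro c
    simp only [KR, Finset.mem_insert, Finset.mem_singleton, not_or]
    refine and_congr Iff.rfl (and_congr Iff.rfl (and_congr ?_ (and_congr ?_ ?_)))
    · rw [not_iff_not, mul_one_iff_inv ha]
    · rw [not_iff_not, mul_one_iff_inv hb]
    · rw [not_iff_not, eq_div_iff hd]
      constructor <;> intro h <;> linear_combination h

lemma card_KP {F : Type} [Field F] [Fintype F] [DecidableEq F] :
    (Nat.card {x : F × F // KP x} : ℤ) =
      ((Fintype.card F : ℤ) - 2) * ((Fintype.card F : ℤ) - 3) := by
  classical
  have h1 : Nat.card {x : F × F // KP x} = ∑ a : {a : F // a ≠ 0 ∧ a ≠ 1},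
      Nat.card {b : F // b ≠ 0 ∧ b ≠ 1 ∧ a.1 * b ≠ 1} := by
    rw [← card_pairs (fun a : F => a ≠ 0 ∧ a ≠ 1) (fun a b => b ≠ 0 ∧ b ≠ 1 ∧ a * b ≠ 1)]
    exact Nat.card_congr (Equiv.subtypeEquivRight fun x => by simp only [KP]; tauto)
  rw [h1]
  push_cast
  have h2 : ∀ a : {a : F // a ≠ 0 ∧ a ≠ 1},
      (Nat.card {b : F // b ≠ 0 ∧ b ≠ 1 ∧ a.1 * b ≠ 1} : ℤ) = (Fintype.card F : ℤ) - 3 := by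
    rintro ⟨a, ha, ha1⟩
    have f5 : (1 : F) ≠ a⁻¹ := fun h => ha1 (by rw [← inv_inv a, ← h, inv_one])
    rw [card_ne_finset {0, 1, a⁻¹}]
    · rw [Finset.card_eq_three.2 ⟨0, 1, a⁻¹, zero_ne_one, (inv_ne_zero ha).symm, f5, rfl⟩]
      rfl
    · intro c
      simp only [Finset.mem_insert, Finset.mem_singleton, not_or]
      refine and_congr Iff.rfl (and_congr Iff.rfl ?_)
      rw [not_iff_not, mul_one_iff_inv ha]
  rw [Finset.sum_congr rfl fun a _ => h2 a, Finset.sum_const, nsmul_eq_mul, Finset.card_univ,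
    ← Nat.card_eq_fintype_card, card_ne_finset ({0, 1} : Finset F), Finset.card_pair zero_ne_one]
  · rfl
  · intro c
    simp

lemma card_diag {F : Type} [Field F] [Fintype F] [DecidableEq F] :
    (Nat.card {x : F × F // KP x ∧ x.1 = x.2} : ℤ) =
      (Fintype.card F : ℤ) - if (2 : F) = 0 then 2 else 3 := by
  have h1 : Nat.card {x : F × F // KP x ∧ x.1 = x.2} =
      Nat.card {a : F // a ≠ 0 ∧ a ≠ 1 ∧ a ≠ -1} := by
    rw [card_of_par _ (fun a : {a : F // a ≠ 0 ∧ a ≠ 1 ∧ a ≠ -1} => (a.1, a.1))]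
    · rintro ⟨a, ha⟩ ⟨b, hb⟩ h
      exact Subtype.ext (Prod.ext_iff.1 h).1
    · rintro ⟨a, b⟩
      constructor
      · rintro ⟨⟨ha, ha1, hb, hb1, hab⟩, h⟩
        simp only at *
        subst h
        exact ⟨⟨a, ha, ha1, fun h => hab (by rw [h]; ring)⟩, rfl⟩
      · rintro ⟨⟨c, hc, hc1, hc2⟩, h⟩
        obtain ⟨rfl, rfl⟩ := Prod.ext_iff.1 h
        refine ⟨⟨hc, hc1, hc, hc1, fun h => ?_⟩, rfl⟩
        rcases mul_self_eq_one_iff.1 h with h | h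
        · exact hc1 h
        · exact hc2 h
  rw [h1, card_ne_finset {0, 1, -1}]
  · split_ifs with h2
    · have : (-1 : F) = 1 := by linear_combination -h2
      rw [this]
      simp
    · rw [Finset.card_eq_three.2 ⟨0, 1, -1, zero_ne_one, (neg_ne_zero.2 one_ne_zero).symm, ?_, rfl⟩]
      · rfl
      · intro h
        apply h2
        linear_combination h
  · intro c
    simp

lemma card_anti {F : Type} [Field F] [Fintype F] [DecidableEq F] :
    (Nat.card {x : F × F // KP x ∧ x.1 + x.2 = 2} : ℤ) =
      (Fintype.card F : ℤ) - if (2 : F) = 0 then 2 else 3 := by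
  have h1 : Nat.card {x : F × F // KP x ∧ x.1 + x.2 = 2} =
      Nat.card {a : F // a ≠ 0 ∧ a ≠ 1 ∧ a ≠ 2} := by
    rw [card_of_par _ (fun a : {a : F // a ≠ 0 ∧ a ≠ 1 ∧ a ≠ 2} => (a.1, 2 - a.1))]
    · rintro ⟨a, ha⟩ ⟨b, hb⟩ h
      exact Subtype.ext (Prod.ext_iff.1 h).1
    · rintro ⟨a, b⟩
      constructor
      · rintro ⟨⟨ha, ha1, hb, hb1, hab⟩, h⟩
        simp only at *
        obtain rfl : b = 2 - a := by linear_combination h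
        exact ⟨⟨a, ha, ha1, fun h => hb (by rw [h]; ring)⟩, rfl⟩
      · rintro ⟨⟨c, hc, hc1, hc2⟩, h⟩
        obtain ⟨rfl, rfl⟩ := Prod.ext_iff.1 h
        refine ⟨⟨hc, hc1, fun h => hc2 ?_, fun h => hc1 ?_, fun h => ?_⟩, ?_⟩
        · simp only at h
          linear_combination -h
        · simp only at h
          linear_combination -h
        · simp only at h
          apply mul_ne_zero (sub_ne_zero.2 hc1) (sub_ne_zero.2 hc1)
          linear_combination -h
        · simp
  rw [h1, card_ne_finset {0, 1, 2}]
  · split_ifs with h2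
    · rw [h2]
      have : ({0, 1, 0} : Finset F) = {0, 1} := by
        ext
        simp
        tauto
      rw [this, Finset.card_pair zero_ne_one]
      rfl
    · rw [Finset.card_eq_three.2 ⟨0, 1, 2, zero_ne_one, Ne.symm h2, ?_, rfl⟩]
      · rfl
      · intro h
        apply one_ne_zero (α := F)
        linear_combination -h
  · intro c
    simp

lemma card_KC {F : Type} [Field F] [Fintype F] [DecidableEq F] :
    (Nat.card {k : F × F × F // KC k} : ℤ) =
      ((Fintype.card F : ℤ) - 5) * (((Fintype.card F : ℤ) - 2) * ((Fintype.card F : ℤ) - 3)) +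
        2 * ((Fintype.card F : ℤ) - if (2 : F) = 0 then 2 else 3) := by
  classical
  have h1 : Nat.card {k : F × F × F // KC k} =
      Nat.card {x : (F × F) × F // KP x.1 ∧ KR x.1 x.2} := by
    refine Nat.card_congr (Equiv.subtypeEquiv (Equiv.prodAssoc F F F).symm ?_)
    rintro ⟨a, b, c⟩
    simp only [KC, KP, KR, Equiv.prodAssoc_symm_apply, sub_ne_zero]
    tauto
  rw [h1, card_pairs KP KR]
  push_cast
  rw [Finset.sum_congr rfl fun x _ => card_KR x.1 x.2, Finset.sum_add_distrib,
    Finset.sum_add_distrib, Finset.sum_const, nsmul_eq_mul, Finset.card_univ,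
    ← Nat.card_eq_fintype_card, card_KP]
  have h2 : ∀ (R : F × F → Prop) [DecidablePred R], (∑ x : {x : F × F // KP x}, if R x.1 then (1 : ℤ) else 0) =
      (Nat.card {x : F × F // KP x ∧ R x} : ℤ) := by
    intro R _
    rw [Finset.sum_boole, ← Fintype.card_subtype, ← Nat.card_eq_fintype_card]
    congr 1
    exact Nat.card_congr (Equiv.subtypeSubtypeEquivSubtypeInter _ _)
  rw [h2 (fun x => x.1 = x.2), h2 (fun x => x.1 + x.2 = 2), card_diag, card_anti]
  ring


lemma min47_count {F : Type} [Field F] [Fintype F] [DecidableEq F] :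
    (Nat.card {a : Fin 3 → Fin 4 → F // Min47 (fun _ => False) a} : ℤ) =
      ((Fintype.card F : ℤ) - 1) ^ 6 *
        (((Fintype.card F : ℤ) - 2) * ((Fintype.card F : ℤ) - 3) *
          ((Fintype.card F : ℤ) ^ 2 - 9 * (Fintype.card F : ℤ) + 21) *
          ((Fintype.card F : ℤ) ^ 2 - 14 * (Fintype.card F : ℤ) + 55) -
        15 * (((Fintype.card F : ℤ) - 5) *
          (((Fintype.card F : ℤ) - 2) * ((Fintype.card F : ℤ) - 3)) +
          2 * ((Fintype.card F : ℤ) - if (2 : F) = 0 then 2 else 3))) := by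
  obtain ⟨a1, a2, a3, b1, b2, b3, c1, c2, c3, d1, d2, d3⟩ := mt_cards
  have e3 := arcN_succ (F := F) (k := 3) (by norm_num) (by norm_num)
  have e4 := arcN_succ (F := F) (k := 4) (by norm_num) (by norm_num)
  have e5 := arcN_succ (F := F) (k := 5) (by norm_num) (by norm_num)
  have e6 := arcN_succ (F := F) (k := 6) (by norm_num) (by norm_num)
  rw [a1, a2, Finset.card_eq_zero.1 a3, Finset.sum_empty, arcN_three] at e3
  rw [b1, b2, Finset.card_eq_zero.1 b3, Finset.sum_empty] at e4
  rw [c1, c2, Finset.card_eq_zero.1 c3, Finset.sum_empty] at e5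
  rw [d1, d2, Finset.sum_congr rfl fun T hT => congrArg Nat.cast (ycnt_eq (F := F) hT),
    Finset.sum_const, d3, ycnt_T0] at e6
  have e7 := arcN_seven (F := F)
  have hK := card_KC (F := F)
  have hq : 1 ≤ Fintype.card F := Fintype.card_pos
  norm_num only at e3 e4 e5 e6
  have hG : (Nat.card (GL (Fin 3) F) : ℤ) ≠ 0 := by
    exact_mod_cast Nat.card_pos.ne'
  apply mul_left_cancel₀ hG
  have e8 : (arcN F 7 : ℤ) = (Nat.card (GL (Fin 3) F) : ℤ) *
      (Nat.card {a : Fin 3 → Fin 4 → F // Min47 (fun _ => False) a} : ℤ) := by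
    exact_mod_cast e7
  rw [← e8, e6, e5, e4, e3]
  push_cast [Nat.cast_sub hq]
  rw [hK]
  simp only [nsmul_eq_mul]
  push_cast
  ring

lemma gl4_count {F : Type} [Field F] [Fintype F] :
    (Nat.card (GL (Fin 4) F) : ℤ) = ((Fintype.card F : ℤ) - 1) ^ 4 *
      ((Fintype.card F : ℤ) ^ 6 * ((Fintype.card F : ℤ) + 1) *
        ((Fintype.card F : ℤ) ^ 2 + (Fintype.card F : ℤ) + 1) *
        ((Fintype.card F : ℤ) ^ 3 + (Fintype.card F : ℤ) ^ 2 + (Fintype.card F : ℤ) + 1)) := by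
  have hq : 1 ≤ Fintype.card F := Fintype.card_pos
  rw [Matrix.card_GL_field]
  push_cast
  have : ∀ i : Fin 4, ((Fintype.card F ^ 4 - Fintype.card F ^ (i : ℕ) : ℕ) : ℤ) =
      (Fintype.card F : ℤ) ^ 4 - (Fintype.card F : ℤ) ^ (i : ℕ) := by
    intro i
    rw [Nat.cast_sub (Nat.pow_le_pow_right hq i.2.le)]
    push_cast
    rfl
  rw [Finset.prod_congr rfl fun i _ => this i, Fin.prod_univ_four]
  simp
  ring

/-- `C_{7,4}(q)` as a linear combination of strong-realization counts of the
hyperfigurations on at most 7 points. -/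
theorem C74_via_hyperfigurations (F : Type) [Field F] [Fintype F]
    (q : ℕ) (hq : q = Fintype.card F) :
    (Nat.card {σ : Fin 7 → ℙ F (Fin 4 → F) // IsArc4 F σ} : ℤ) =
      (q : ℤ)^21 - 28*(q : ℤ)^20 + 322*(q : ℤ)^19 - 1925*(q : ℤ)^18 + 5571*(q : ℤ)^17
        + 839*(q : ℤ)^16 - 18320*(q : ℤ)^15 - 2695*(q : ℤ)^14 + 7455*(q : ℤ)^13
        + 19111*(q : ℤ)^12 + 17074*(q : ℤ)^11 - 9540*(q : ℤ)^10 - 13027*(q : ℤ)^9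
        - 19922*(q : ℤ)^8 + 924*(q : ℤ)^7 + 14160*(q : ℤ)^6
        + (595*(q : ℤ)^3 - 8260*(q : ℤ)^2 + 20160*(q : ℤ) - 8820) *
            (Nat.card {σ : Fin 6 → ℙ F (Fin 4 → F) // IsHyp6Real F σ} : ℤ)
        + 210 * (Nat.card {σ : Fin 7 → ℙ F (Fin 4 → F) // IsConfigReal F h1planes ∅ σ} : ℤ)
        + 180 * (Nat.card {σ : Fin 7 → ℙ F (Fin 4 → F) // IsConfigReal F h2planes ∅ σ} : ℤ)
        - 2520 * (Nat.card {σ : Fin 7 → ℙ F (Fin 4 → F) //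
            IsConfigReal F h3planes h3lines σ} : ℤ)
        + 3780 * (Nat.card {σ : Fin 7 → ℙ F (Fin 4 → F) //
            IsConfigReal F h5planes h5lines σ} : ℤ) := by
  classical
  subst hq
  have hq2 : 2 ≤ Fintype.card F := Fintype.one_lt_card
  have hq1 : 1 ≤ Fintype.card F := by omega
  have hu : ((Fintype.card F : ℤ) - 1) ≠ 0 := by omega
  have c1 : ((Fintype.card F - 1 : ℕ) : ℤ) = (Fintype.card F : ℤ) - 1 := by
    rw [Nat.cast_sub hq1, Nat.cast_one]
  have c2 : ((Fintype.card F - 2 : ℕ) : ℤ) = (Fintype.card F : ℤ) - 2 := by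
    rw [Nat.cast_sub hq2, Nat.cast_ofNat]
  have k1 := congrArg (Nat.cast : ℕ → ℤ) (h1_pts (F := F))
  have k2 := congrArg (Nat.cast : ℕ → ℤ) (h2_pts (F := F))
  have k3 := congrArg (Nat.cast : ℕ → ℤ) (h3_pts (F := F))
  have k5 := congrArg (Nat.cast : ℕ → ℤ) (h5_pts (F := F))
  have k6 := congrArg (Nat.cast : ℕ → ℤ) (hyp6_pts (F := F))
  have k7 := congrArg (Nat.cast : ℕ → ℤ)
    ((arc_card (F := F)).symm.trans (card_frame47 _ (fun h => h)))
  have kS := min47_count (F := F)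
  have kG := gl4_count (F := F)
  simp only [Nat.cast_mul, Nat.cast_pow, Nat.cast_ite, Nat.cast_zero, c1, c2, kG, kS]
    at k1 k2 k3 k5 k6 k7
  generalize (Nat.card {σ : Fin 7 → ℙ F (Fin 4 → F) // IsArc4 F σ} : ℤ) = C at *
  generalize (Nat.card {σ : Fin 6 → ℙ F (Fin 4 → F) // IsHyp6Real F σ} : ℤ) = A6 at *
  generalize (Nat.card {σ : Fin 7 → ℙ F (Fin 4 → F) // IsConfigReal F h1planes ∅ σ} : ℤ) = A1
    at *
  generalize (Nat.card {σ : Fin 7 → ℙ F (Fin 4 → F) // IsConfigReal F h2planes ∅ σ} : ℤ) = A2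
    at *
  generalize (Nat.card {σ : Fin 7 → ℙ F (Fin 4 → F) // IsConfigReal F h3planes h3lines σ} : ℤ)
    = A3 at *
  generalize (Nat.card {σ : Fin 7 → ℙ F (Fin 4 → F) // IsConfigReal F h5planes h5lines σ} : ℤ)
    = A5 at *
  clear kS kG c1 c2 hq1 hq2
  generalize (Fintype.card F : ℤ) = Q at *
  apply mul_left_cancel₀ (pow_ne_zero 7 hu)
  by_cases h2 : (2 : F) = 0
  · simp only [h2, if_true] at k1 k2 k7
    linear_combination k7 - (595 * Q ^ 3 - 8260 * Q ^ 2 + 20160 * Q - 8820) * (Q - 1) * k6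
      - 210 * k1 - 180 * k2 + 2520 * k3 - 3780 * k5
  · simp only [h2, if_false] at k1 k2 k7
    linear_combination k7 - (595 * Q ^ 3 - 8260 * Q ^ 2 + 20160 * Q - 8820) * (Q - 1) * k6
      - 210 * k1 - 180 * k2 + 2520 * k3 - 3780 * k5
end

section
/- For every prime power q, the number of strong realizations of the hyperfiguration h_1 in P^3(F_q) is A_{h_1}(4,q) = (1 − a(q)) · |PGL_4(F_q)|, where a(q) = 1 if q is even and a(q) = 0 if q is odd. In particular there are no such realizations when q is even. -/
open scoped LinearAlgebra.Projectivization

/-- Explicit 4 by 4 determinant of four row vectors. -/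
def D4 {R : Type} [CommRing R] (a b c d : Fin 4 → R) : R :=
  a 0 * (b 1 * (c 2 * d 3 - c 3 * d 2) - b 2 * (c 1 * d 3 - c 3 * d 1)
    + b 3 * (c 1 * d 2 - c 2 * d 1))
  - a 1 * (b 0 * (c 2 * d 3 - c 3 * d 2) - b 2 * (c 0 * d 3 - c 3 * d 0)
    + b 3 * (c 0 * d 2 - c 2 * d 0))
  + a 2 * (b 0 * (c 1 * d 3 - c 3 * d 1) - b 1 * (c 0 * d 3 - c 3 * d 0)
    + b 3 * (c 0 * d 1 - c 1 * d 0))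
  - a 3 * (b 0 * (c 1 * d 2 - c 2 * d 1) - b 1 * (c 0 * d 2 - c 2 * d 0)
    + b 2 * (c 0 * d 1 - c 1 * d 0))

theorem det_eq_D4 {R : Type} [CommRing R] (a b c d : Fin 4 → R) :
    Matrix.det (Matrix.of ![a, b, c, d]) = D4 a b c d := by
  simp [Matrix.det_succ_row_zero, Fin.sum_univ_succ, Fin.succAbove, D4]
  ring

theorem D4_mulVec {R : Type} [CommRing R] (g : Matrix (Fin 4) (Fin 4) R)
    (a b c d : Fin 4 → R) :
    D4 (g.mulVec a) (g.mulVec b) (g.mulVec c) (g.mulVec d) = g.det * D4 a b c d := by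
  rw [← det_eq_D4, ← det_eq_D4, ← Matrix.det_transpose g, mul_comm, ← Matrix.det_mul]
  congr 1
  ext i j
  fin_cases i <;> simp [Matrix.mul_apply, Matrix.mulVec, dotProduct, mul_comm]

theorem coplanar_iff (F : Type) [Field F] {x y z w : ℙ F (Fin 4 → F)} {a b c d : Fin 4 → F}
    (ha : a ≠ 0) (hb : b ≠ 0) (hc : c ≠ 0) (hd : d ≠ 0)
    (hx : x = Projectivization.mk F a ha) (hy : y = Projectivization.mk F b hb)
    (hz : z = Projectivization.mk F c hc) (hw : w = Projectivization.mk F d hd) :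
    Coplanar4 F x y z w ↔ D4 a b c d = 0 := by
  subst hx hy hz hw
  unfold Coplanar4
  have hs : ({a} ∪ {b} ∪ {c} ∪ {d} : Set (Fin 4 → F)) = Set.range ![a, b, c, d] := by
    simp [Matrix.range_cons]
  have hsub : (Projectivization.mk F a ha).submodule ⊔ (Projectivization.mk F b hb).submodule ⊔
      (Projectivization.mk F c hc).submodule ⊔ (Projectivization.mk F d hd).submodule
      = Submodule.span F (Set.range ![a, b, c, d]) := by
    rw [← hs, Submodule.span_union, Submodule.span_union, Submodule.span_union]
    simp only [Projectivization.submodule_mk]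
  rw [hsub]
  have h1 : LinearIndependent F ![a, b, c, d] ↔ D4 a b c d ≠ 0 := by
    rw [← det_eq_D4, ← isUnit_iff_ne_zero, ← Matrix.isUnit_iff_isUnit_det,
      ← Matrix.linearIndependent_rows_iff_isUnit]
    rfl
  rw [linearIndependent_iff_card_eq_finrank_span] at h1
  have h2 := finrank_range_le_card (R := F) ![a, b, c, d]
  simp only [Fintype.card_fin, Set.finrank] at h1 h2
  rw [← not_iff_not, ← ne_eq (D4 a b c d), ← h1]
  omega

/-- The model configuration, over the integers. -/
def vI : Fin 7 → Fin 4 → ℤ :=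
  ![![1, 0, 0, 0], ![0, 1, 0, 0], ![0, 0, 1, 0], ![1, 1, 1, 0], ![0, 0, 0, 1],
    ![1, 1, 0, 1], ![1, 0, 1, 1]]

/-- The model configuration. -/
def vF (F : Type) [Field F] (i : Fin 7) (j : Fin 4) : F := ((vI i j : ℤ) : F)

theorem D4_vF (F : Type) [Field F] (a b c d : Fin 7) :
    D4 (vF F a) (vF F b) (vF F c) (vF F d) = ((D4 (vI a) (vI b) (vI c) (vI d) : ℤ) : F) := by
  simp [D4, vF]

theorem of_sorted (Q : Fin 7 → Fin 7 → Fin 7 → Fin 7 → Prop)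
    (s1 : ∀ a b c d, Q a b c d → Q b a c d) (s2 : ∀ a b c d, Q a b c d → Q a c b d)
    (s3 : ∀ a b c d, Q a b c d → Q a b d c)
    (h : ∀ a b, a < b → ∀ c, b < c → ∀ d, c < d → Q a b c d) :
    ∀ a b c d : Fin 7, a ≠ b → a ≠ c → a ≠ d → b ≠ c → b ≠ d → c ≠ d → Q a b c d := by
  have hA : ∀ a b c d : Fin 7, a < b → b < c → a ≠ d → b ≠ d → c ≠ d → Q a b c d := by
    intro a b c d hab hbc had hbd hcd
    rcases lt_or_gt_of_ne hcd with h1 | h1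
    · exact h _ _ hab _ hbc _ h1
    rcases lt_or_gt_of_ne hbd with h2 | h2
    · exact s3 _ _ _ _ (h _ _ hab _ h2 _ h1)
    rcases lt_or_gt_of_ne had with h3 | h3
    · exact s3 _ _ _ _ (s2 _ _ _ _ (h _ _ h3 _ h2 _ hbc))
    · exact s3 _ _ _ _ (s2 _ _ _ _ (s1 _ _ _ _ (h _ _ h3 _ hab _ hbc)))
  have hB : ∀ a b c d : Fin 7, a < b → a ≠ c → a ≠ d → b ≠ c → b ≠ d → c ≠ d → Q a b c d := by
    intro a b c d hab hac had hbc hbd hcd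
    rcases lt_or_gt_of_ne hbc with h1 | h1
    · exact hA _ _ _ _ hab h1 had hbd hcd
    rcases lt_or_gt_of_ne hac with h2 | h2
    · exact s2 _ _ _ _ (hA _ _ _ _ h2 h1 had hcd hbd)
    · exact s2 _ _ _ _ (s1 _ _ _ _ (hA _ _ _ _ h2 hab hcd had hbd))
  intro a b c d hab hac had hbc hbd hcd
  rcases lt_or_gt_of_ne hab with h1 | h1
  · exact hB _ _ _ _ h1 hac had hbc hbd hcd
  · exact s1 _ _ _ _ (hB _ _ _ _ h1 hbc hbd hac had hcd)

theorem model_check : ∀ a b c d : Fin 7, a ≠ b → a ≠ c → a ≠ d → b ≠ c → b ≠ d → c ≠ d →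
    ((∃ h ∈ h1planes, ({a, b, c, d} : Finset (Fin 7)) ⊆ h) ∧ D4 (vI a) (vI b) (vI c) (vI d) = 0)
    ∨ (¬ (∃ h ∈ h1planes, ({a, b, c, d} : Finset (Fin 7)) ⊆ h) ∧
      D4 (vI a) (vI b) (vI c) (vI d) ∣ 4) := by
  apply of_sorted
  · intro a b c d h
    have hD : D4 (vI b) (vI a) (vI c) (vI d) = - D4 (vI a) (vI b) (vI c) (vI d) := by
      unfold D4; ring
    rw [hD, neg_eq_zero, neg_dvd, Finset.insert_comm b a]
    exact h
  · intro a b c d h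
    have hD : D4 (vI a) (vI c) (vI b) (vI d) = - D4 (vI a) (vI b) (vI c) (vI d) := by
      unfold D4; ring
    rw [hD, neg_eq_zero, neg_dvd, Finset.insert_comm c b]
    exact h
  · intro a b c d h
    have hD : D4 (vI a) (vI b) (vI d) (vI c) = - D4 (vI a) (vI b) (vI c) (vI d) := by
      unfold D4; ring
    rw [hD, neg_eq_zero, neg_dvd, Finset.pair_comm d c]
    exact h
  · decide +kernel

theorem extend_three : ∀ a b c : Fin 7, a ≠ b → a ≠ c → b ≠ c → ∃ d, a ≠ d ∧ b ≠ d ∧ c ≠ d ∧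
    ¬ (∃ h ∈ h1planes, ({a, b, c, d} : Finset (Fin 7)) ⊆ h) := by
  have h : ∀ a b : Fin 7, a < b → ∀ c, b < c → ∃ d, a ≠ d ∧ b ≠ d ∧ c ≠ d ∧
      ¬ (∃ h ∈ h1planes, ({a, b, c, d} : Finset (Fin 7)) ⊆ h) := by
    decide +kernel
  have s1 : ∀ a b c : Fin 7, (∃ d, a ≠ d ∧ b ≠ d ∧ c ≠ d ∧
      ¬ (∃ h ∈ h1planes, ({a, b, c, d} : Finset (Fin 7)) ⊆ h)) → ∃ d, b ≠ d ∧ a ≠ d ∧ c ≠ d ∧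
      ¬ (∃ h ∈ h1planes, ({b, a, c, d} : Finset (Fin 7)) ⊆ h) := by
    rintro a b c ⟨d, h1, h2, h3, h4⟩
    exact ⟨d, h2, h1, h3, by rwa [Finset.insert_comm b a]⟩
  have s2 : ∀ a b c : Fin 7, (∃ d, a ≠ d ∧ b ≠ d ∧ c ≠ d ∧
      ¬ (∃ h ∈ h1planes, ({a, b, c, d} : Finset (Fin 7)) ⊆ h)) → ∃ d, a ≠ d ∧ c ≠ d ∧ b ≠ d ∧
      ¬ (∃ h ∈ h1planes, ({a, c, b, d} : Finset (Fin 7)) ⊆ h) := by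
    rintro a b c ⟨d, h1, h2, h3, h4⟩
    exact ⟨d, h1, h3, h2, by rwa [Finset.insert_comm c b]⟩
  intro a b c hab hac hbc
  rcases lt_or_gt_of_ne hab with h1 | h1 <;> rcases lt_or_gt_of_ne hac with h2 | h2 <;>
    rcases lt_or_gt_of_ne hbc with h3 | h3
  · exact h _ _ h1 _ h3
  · exact s2 _ _ _ (h _ _ h2 _ h3)
  · exact absurd (h1.trans h3) h2.asymm
  · exact s2 _ _ _ (s1 _ _ _ (h _ _ h2 _ h1))
  · exact s1 _ _ _ (h _ _ h1 _ h2)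
  · exact absurd (h1.trans h2) h3.asymm
  · exact s1 _ _ _ (s2 _ _ _ (h _ _ h3 _ h2))
  · exact s1 _ _ _ (s2 _ _ _ (s1 _ _ _ (h _ _ h3 _ h1)))

theorem extend_two : ∀ a b : Fin 7, a ≠ b → ∃ c, a ≠ c ∧ b ≠ c := by
  decide

theorem col_imp_cop (F : Type) [Field F] {x y z : ℙ F (Fin 4 → F)} (w : ℙ F (Fin 4 → F))
    (h : Collinear3 F x y z) : Coplanar4 F x y z w := by
  unfold Collinear3 at h
  unfold Coplanar4
  have := Submodule.finrank_add_le_finrank_add_finrank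
    (x.submodule ⊔ y.submodule ⊔ z.submodule) w.submodule
  rw [Projectivization.finrank_submodule] at this
  omega

theorem isReal_iff (F : Type) [Field F] (σ : Fin 7 → ℙ F (Fin 4 → F)) :
    IsConfigReal F h1planes ∅ σ ↔
    (∀ a b c d : Fin 7, a ≠ b → a ≠ c → a ≠ d → b ≠ c → b ≠ d → c ≠ d →
      (Coplanar4 F (σ a) (σ b) (σ c) (σ d) ↔
        ∃ h ∈ h1planes, ({a, b, c, d} : Finset (Fin 7)) ⊆ h)) := by
  refine ⟨fun h => h.2.2, fun h => ?_⟩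
  have hcol : ∀ a b c : Fin 7, a ≠ b → a ≠ c → b ≠ c → ¬ Collinear3 F (σ a) (σ b) (σ c) := by
    intro a b c hab hac hbc hc
    obtain ⟨d, had, hbd, hcd, hn⟩ := extend_three a b c hab hac hbc
    exact hn ((h a b c d hab hac had hbc hbd hcd).1 (col_imp_cop F _ hc))
  refine ⟨?_, ?_, h⟩
  · intro a b hab
    by_contra hne
    obtain ⟨c, hac, hbc⟩ := extend_two a b hne
    apply hcol a b c hne hac hbc
    unfold Collinear3
    rw [hab, sup_idem]
    have := Submodule.finrank_add_le_finrank_add_finrank (σ b).submodule (σ c).submodule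
    rw [Projectivization.finrank_submodule, Projectivization.finrank_submodule] at this
    omega
  · intro a b c hab hac hbc
    simpa using hcol a b c hab hac hbc

theorem vF_ne (F : Type) [Field F] (i : Fin 7) : vF F i ≠ 0 := by
  have : ∀ i, ∃ j, vI i j = 1 := by decide
  obtain ⟨j, hj⟩ := this i
  intro h
  have := congrFun h j
  simp [vF, hj] at this

theorem gv_ne (F : Type) [Field F] (g : GL (Fin 4) F) (v : Fin 4 → F) (hv : v ≠ 0) :
    (g : Matrix (Fin 4) (Fin 4) F).mulVec v ≠ 0 := by
  intro h
  apply hv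
  have h2 := congrArg ((g⁻¹ : GL (Fin 4) F) : Matrix (Fin 4) (Fin 4) F).mulVec h
  rw [Matrix.mulVec_mulVec, ← Units.val_mul] at h2
  simpa using h2

/-- The image of the model configuration under `g`. -/
def Phi (F : Type) [Field F] (g : GL (Fin 4) F) (i : Fin 7) : ℙ F (Fin 4 → F) :=
  Projectivization.mk F ((g : Matrix (Fin 4) (Fin 4) F).mulVec (vF F i))
    (gv_ne F g _ (vF_ne F i))

theorem Phi_real (F : Type) [Field F] (h2 : (2 : F) ≠ 0) (g : GL (Fin 4) F) :
    IsConfigReal F h1planes ∅ (Phi F g) := by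
  rw [isReal_iff]
  intro a b c d h1 h2 h3 h4 h5 h6
  unfold Phi
  rw [coplanar_iff F _ _ _ _ rfl rfl rfl rfl, D4_mulVec, D4_vF]
  have hg : (g : Matrix (Fin 4) (Fin 4) F).det ≠ 0 :=
    ((Matrix.isUnit_iff_isUnit_det _).1 g.isUnit).ne_zero
  rcases model_check a b c d h1 h2 h3 h4 h5 h6 with ⟨hp, hD⟩ | ⟨hp, k, hk⟩
  · simp [hD, hp]
  · simp only [hp, iff_false, mul_eq_zero, hg, false_or]
    intro h0
    have := congrArg (Int.cast : ℤ → F) hk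
    push_cast at this
    rw [h0, zero_mul] at this
    have h4 : (2 : F) * 2 = 0 := by linear_combination this
    simp_all

theorem Phi_fiber (F : Type) [Field F] (g h : GL (Fin 4) F) (e : Phi F g = Phi F h) :
    ∃ c : Fˣ, (g : Matrix (Fin 4) (Fin 4) F) = (c : F) • (h : Matrix (Fin 4) (Fin 4) F) := by
  have ex : ∀ i, ∃ t : Fˣ, ((h⁻¹ * g : GL (Fin 4) F) : Matrix (Fin 4) (Fin 4) F).mulVec (vF F i)
      = (t : F) • vF F i := by
    intro i
    have := congrFun e i
    unfold Phi at this
    rw [Projectivization.mk_eq_mk_iff] at this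
    obtain ⟨t, ht⟩ := this
    refine ⟨t, ?_⟩
    rw [Units.val_mul, ← Matrix.mulVec_mulVec, ← ht, Units.smul_def, Matrix.mulVec_smul,
      Matrix.mulVec_mulVec, ← Units.val_mul]
    simp
  choose t ht using ex
  refine ⟨t 0, ?_⟩
  generalize hk : ((h⁻¹ * g : GL (Fin 4) F) : Matrix (Fin 4) (Fin 4) F) = k at ht
  have key : k = (t 0 : F) • 1 := by
    have H : ∀ i j, k.mulVec (vF F i) j = (t i : F) * vF F i j := fun i j => by
      rw [ht]; rfl
    simp only [Matrix.mulVec, dotProduct, Fin.sum_univ_four, vF] at H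
    have e0 := H 0
    have e1 := H 1
    have e2 := H 2
    have e3 := H 3
    have e4 := H 4
    have e5 := H 5
    simp [vI, Fin.forall_fin_succ] at e0 e1 e2 e3 e4 e5
    ext i j
    fin_cases i <;> fin_cases j <;> simp <;> grind
  have : (g : Matrix (Fin 4) (Fin 4) F) = (h : Matrix (Fin 4) (Fin 4) F) * k := by
    rw [← hk, ← Units.val_mul]; simp
  rw [this, key]; simp

theorem normal_form (F : Type) [Field F] (σ : Fin 7 → ℙ F (Fin 4 → F))
    (hσ : IsConfigReal F h1planes ∅ σ) : (2 : F) ≠ 0 ∧ ∃ g, Phi F g = σ := by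
  rw [isReal_iff] at hσ
  have hD : ∀ a b c d : Fin 7, a ≠ b → a ≠ c → a ≠ d → b ≠ c → b ≠ d → c ≠ d →
      (D4 (σ a).rep (σ b).rep (σ c).rep (σ d).rep = 0 ↔
        ∃ h ∈ h1planes, ({a, b, c, d} : Finset (Fin 7)) ⊆ h) := by
    intro a b c d h1 h2 h3 h4 h5 h6
    rw [← hσ a b c d h1 h2 h3 h4 h5 h6]
    exact (coplanar_iff F (σ a).rep_nonzero (σ b).rep_nonzero (σ c).rep_nonzero
      (σ d).rep_nonzero (σ a).mk_rep.symm (σ b).mk_rep.symm (σ c).mk_rep.symm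
      (σ d).mk_rep.symm).symm
  set A : Matrix (Fin 4) (Fin 4) F :=
    (Matrix.of ![(σ 0).rep, (σ 1).rep, (σ 2).rep, (σ 4).rep]).transpose with hA
  have hdet : A.det ≠ 0 := by
    rw [hA, Matrix.det_transpose, det_eq_D4, ne_eq,
      hD 0 1 2 4 (by decide) (by decide) (by decide) (by decide) (by decide) (by decide)]
    decide
  have hu : IsUnit A.det := isUnit_iff_ne_zero.2 hdet
  have ex : ∀ i, ∃ u, (σ i).rep = A.mulVec u := fun i =>
    ⟨A⁻¹.mulVec (σ i).rep, by simp [Matrix.mulVec_mulVec, Matrix.mul_nonsing_inv _ hu]⟩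
  have f0 : (σ 0).rep = A.mulVec ![1, 0, 0, 0] := by
    ext j; simp [hA, Matrix.mulVec, dotProduct, Fin.sum_univ_four]
  have f1 : (σ 1).rep = A.mulVec ![0, 1, 0, 0] := by
    ext j; simp [hA, Matrix.mulVec, dotProduct, Fin.sum_univ_four]
  have f2 : (σ 2).rep = A.mulVec ![0, 0, 1, 0] := by
    ext j; simp [hA, Matrix.mulVec, dotProduct, Fin.sum_univ_four]
  have f4 : (σ 4).rep = A.mulVec ![0, 0, 0, 1] := by
    ext j; simp [hA, Matrix.mulVec, dotProduct, Fin.sum_univ_four]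
  obtain ⟨a, f3⟩ := ex 3
  obtain ⟨b, f5⟩ := ex 5
  obtain ⟨c, f6⟩ := ex 6
  clear_value A
  have p1 : a 3 = 0 := by
    have := (hD 0 1 2 3 (by decide) (by decide) (by decide) (by decide) (by decide)
      (by decide)).2 (by decide)
    rw [f0, f1, f2, f3, D4_mulVec] at this
    simpa [D4, hdet] using this
  have p2 : b 2 = 0 := by
    have := (hD 0 1 4 5 (by decide) (by decide) (by decide) (by decide) (by decide)
      (by decide)).2 (by decide)
    rw [f0, f1, f4, f5, D4_mulVec] at this
    simpa [D4, hdet] using this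
  have p3 : c 1 = 0 := by
    have := (hD 0 2 4 6 (by decide) (by decide) (by decide) (by decide) (by decide)
      (by decide)).2 (by decide)
    rw [f0, f2, f4, f6, D4_mulVec] at this
    simpa [D4, hdet] using this
  have p4 : b 0 * c 3 - b 3 * c 0 = 0 := by
    have := (hD 1 2 5 6 (by decide) (by decide) (by decide) (by decide) (by decide)
      (by decide)).2 (by decide)
    rw [f1, f2, f5, f6, D4_mulVec] at this
    have := (mul_eq_zero.1 this).resolve_left hdet
    simp [D4] at this
    grind
  have p5 : a 0 * c 2 - a 2 * c 0 = 0 := by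
    have := (hD 1 3 4 6 (by decide) (by decide) (by decide) (by decide) (by decide)
      (by decide)).2 (by decide)
    rw [f1, f3, f4, f6, D4_mulVec] at this
    have := (mul_eq_zero.1 this).resolve_left hdet
    simp [D4] at this
    grind
  have p6 : a 0 * b 1 - a 1 * b 0 = 0 := by
    have := (hD 2 3 4 5 (by decide) (by decide) (by decide) (by decide) (by decide)
      (by decide)).2 (by decide)
    rw [f2, f3, f4, f5, D4_mulVec] at this
    have := (mul_eq_zero.1 this).resolve_left hdet
    simp [D4] at this
    grind
  have a0 : a 0 ≠ 0 := by
    have := mt (hD 1 2 4 3 (by decide) (by decide) (by decide) (by decide) (by decide)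
      (by decide)).1 (by decide)
    rw [f1, f2, f4, f3, D4_mulVec] at this
    simpa [D4, hdet] using this
  have a1 : a 1 ≠ 0 := by
    have := mt (hD 0 2 4 3 (by decide) (by decide) (by decide) (by decide) (by decide)
      (by decide)).1 (by decide)
    rw [f0, f2, f4, f3, D4_mulVec] at this
    simpa [D4, hdet] using this
  have a2 : a 2 ≠ 0 := by
    have := mt (hD 0 1 4 3 (by decide) (by decide) (by decide) (by decide) (by decide)
      (by decide)).1 (by decide)
    rw [f0, f1, f4, f3, D4_mulVec] at this
    simpa [D4, hdet] using this
  have b0 : b 0 ≠ 0 := by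
    have := mt (hD 1 2 4 5 (by decide) (by decide) (by decide) (by decide) (by decide)
      (by decide)).1 (by decide)
    rw [f1, f2, f4, f5, D4_mulVec] at this
    simpa [D4, hdet] using this
  have b3 : b 3 ≠ 0 := by
    have := mt (hD 0 1 2 5 (by decide) (by decide) (by decide) (by decide) (by decide)
      (by decide)).1 (by decide)
    rw [f0, f1, f2, f5, D4_mulVec] at this
    simpa [D4, hdet] using this
  have c0 : c 0 ≠ 0 := by
    have := mt (hD 1 2 4 6 (by decide) (by decide) (by decide) (by decide) (by decide)
      (by decide)).1 (by decide)
    rw [f1, f2, f4, f6, D4_mulVec] at this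
    simpa [D4, hdet] using this
  constructor
  · intro h2
    have := mt (hD 0 3 5 6 (by decide) (by decide) (by decide) (by decide) (by decide)
      (by decide)).1 (by decide)
    rw [f0, f3, f5, f6, D4_mulVec] at this
    apply this
    apply mul_eq_zero_of_right
    simp [D4, p1, p2, p3]
    have : b 0 * (a 0 * (-(a 1 * (b 3 * c 2)) - a 2 * (b 1 * c 3))) = 0 := by
      linear_combination (-a 0 * a 2 * b 1) * p4 - (a 1 * b 3 * b 0) * p5
        - (a 2 * b 3 * c 0) * p6 - a 1 * a 2 * b 0 * b 3 * c 0 * h2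
    have := (mul_eq_zero.1 ((mul_eq_zero.1 this).resolve_left b0)).resolve_left a0
    linear_combination this
  · set x := a 1 / a 0 with hx
    set y := a 2 / a 0 with hy
    set z := b 3 / b 0 with hz
    let Dg : Matrix (Fin 4) (Fin 4) F := Matrix.diagonal ![1, x, y, z]
    have hg : IsUnit (A * Dg).det := by
      rw [Matrix.det_mul, Matrix.det_diagonal]
      refine isUnit_iff_ne_zero.2 (mul_ne_zero hdet ?_)
      simp [Fin.prod_univ_four, hx, hy, hz, a0, a1, a2, b0, b3]
    refine ⟨Matrix.GeneralLinearGroup.mk'' (A * Dg) hg, ?_⟩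
    have fin : ∀ i (t : F) (u : Fin 4 → F), t ≠ 0 → (σ i).rep = A.mulVec u →
        t • Dg.mulVec (vF F i) = u →
        Phi F (Matrix.GeneralLinearGroup.mk'' (A * Dg) hg) i = σ i := by
      intro i t u ht hu h
      rw [← (σ i).mk_rep]
      unfold Phi
      rw [Projectivization.mk_eq_mk_iff']
      refine ⟨t⁻¹, ?_⟩
      rw [hu, ← h, Matrix.mulVec_smul, smul_smul, inv_mul_cancel₀ ht, one_smul,
        Matrix.mulVec_mulVec]
      rfl
    have cd : ∀ i j, Dg.mulVec (vF F i) j = (![1, x, y, z] : Fin 4 → F) j * vF F i j := by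
      intro i j
      simp [Dg, Matrix.mulVec_diagonal]
    have x0 : x ≠ 0 := div_ne_zero a1 a0
    have y0 : y ≠ 0 := div_ne_zero a2 a0
    have z0 : z ≠ 0 := div_ne_zero b3 b0
    funext i
    fin_cases i
    · refine fin 0 1 _ one_ne_zero f0 ?_
      ext j; fin_cases j <;> simp [cd, vF, vI]
    · refine fin 1 x⁻¹ _ (inv_ne_zero x0) f1 ?_
      ext j; fin_cases j <;> simp [cd, vF, vI, x0]
    · refine fin 2 y⁻¹ _ (inv_ne_zero y0) f2 ?_
      ext j; fin_cases j <;> simp [cd, vF, vI, y0]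
    · refine fin 3 (a 0) _ a0 f3 ?_
      ext j; fin_cases j <;> simp [cd, vF, vI, p1, hx, hy] <;> field_simp
    · refine fin 4 z⁻¹ _ (inv_ne_zero z0) f4 ?_
      ext j; fin_cases j <;> simp [cd, vF, vI, z0]
    · refine fin 5 (b 0) _ b0 f5 ?_
      ext j; fin_cases j <;> simp [cd, vF, vI, p2, hx, hz] <;> field_simp <;>
        linear_combination -p6
    · refine fin 6 (c 0) _ c0 f6 ?_
      ext j; fin_cases j <;> simp [cd, vF, vI, p3, hy, hz] <;> field_simp
      · linear_combination -p5
      · linear_combination -p4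

theorem card_odd (F : Type) [Field F] [Fintype F] (h2 : (2 : F) ≠ 0) :
    Nat.card (GL (Fin 4) F) =
      Nat.card {σ : Fin 7 → ℙ F (Fin 4 → F) // IsConfigReal F h1planes ∅ σ} *
        (Fintype.card F - 1) := by
  classical
  have ex : ∀ σ : {σ : Fin 7 → ℙ F (Fin 4 → F) // IsConfigReal F h1planes ∅ σ},
      ∃ g, Phi F g = σ.1 := fun σ => (normal_form F σ.1 σ.2).2
  choose s hs using ex
  let sc : Fˣ → GL (Fin 4) F := fun c => Units.map (algebraMap F (Matrix (Fin 4) (Fin 4) F)).toMonoidHom c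
  have hsc : ∀ c g, ((sc c * g : GL (Fin 4) F) : Matrix (Fin 4) (Fin 4) F)
      = (c : F) • (g : Matrix (Fin 4) (Fin 4) F) := by
    intro c g
    simp [sc, Algebra.smul_def]
  have hPhi : ∀ c g, Phi F (sc c * g) = Phi F g := by
    intro c g
    funext i
    unfold Phi
    rw [Projectivization.mk_eq_mk_iff]
    exact ⟨c, by rw [hsc, Matrix.smul_mulVec]; rfl⟩
  rw [← Fintype.card_units, ← Nat.card_eq_fintype_card (α := Fˣ), ← Nat.card_prod]
  symm
  refine Nat.card_congr (Equiv.ofBijective (fun p => sc p.2 * s p.1) ⟨?_, ?_⟩)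
  · rintro ⟨σ, c⟩ ⟨τ, d⟩ h
    simp only at h
    have h1 : σ = τ := by
      apply Subtype.ext
      rw [← hs σ, ← hs τ, ← hPhi c (s σ), ← hPhi d (s τ), h]
    subst h1
    have h3 := congrArg (fun m : GL (Fin 4) F => (m : Matrix (Fin 4) (Fin 4) F) 0 0)
      (mul_right_cancel h)
    simp [sc, Matrix.algebraMap_matrix_apply] at h3
    rw [Units.ext h3]
  · intro g
    obtain ⟨c, hc⟩ := Phi_fiber F g (s ⟨Phi F g, Phi_real F h2 g⟩) (hs ⟨Phi F g, Phi_real F h2 g⟩).symm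
    exact ⟨(⟨Phi F g, Phi_real F h2 g⟩, c), Units.ext (by rw [hsc, hc])⟩

theorem even_iff (F : Type) [Field F] [Fintype F] : Even (Fintype.card F) ↔ (2 : F) = 0 := by
  rw [Nat.even_iff, ← FiniteField.even_card_iff_char_two]
  constructor
  · intro h
    have := ringChar.Nat.cast_ringChar (R := F)
    rw [h] at this
    exact_mod_cast this
  · intro h
    by_contra hn
    exact Ring.two_ne_zero hn h

/-- `A_{h₁}(4,q) = (1 - a(q)) · |PGL₄(F_q)|`; in particular there are no strong
realizations of `h₁` when `q` is even. -/
theorem Ah1_formula (F : Type) [Field F] [Fintype F] (q : ℕ) (hq : q = Fintype.card F) :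
    Nat.card {σ : Fin 7 → ℙ F (Fin 4 → F) // IsConfigReal F h1planes ∅ σ} =
        (1 - (if Even q then 1 else 0)) * (Nat.card (GL (Fin 4) F) / (q - 1)) ∧
      (Even q → Nat.card {σ : Fin 7 → ℙ F (Fin 4 → F) // IsConfigReal F h1planes ∅ σ} = 0) := by
  subst hq
  have hE : Even (Fintype.card F) →
      Nat.card {σ : Fin 7 → ℙ F (Fin 4 → F) // IsConfigReal F h1planes ∅ σ} = 0 := by
    intro h
    rw [even_iff] at h
    have : IsEmpty {σ : Fin 7 → ℙ F (Fin 4 → F) // IsConfigReal F h1planes ∅ σ} :=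
      ⟨fun σ => (normal_form F σ.1 σ.2).1 h⟩
    exact Nat.card_of_isEmpty
  refine ⟨?_, hE⟩
  by_cases h : Even (Fintype.card F)
  · simp [h, hE h]
  · rw [card_odd F (fun hz => h ((even_iff F).2 hz))]
    have := Fintype.one_lt_card (α := F)
    rw [Nat.mul_div_cancel _ (by omega)]
    simp [h]
end
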